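/- Fix an integer d ≥ 4 and set β = d/2 − 2. Let Eₙ = E[f₀(Qₙ)] and Vₙ = Var(f₀(Qₙ)). Then sup_{z ∈ ℝ} | μ_β^{⊗n}( (f₀(Qₙ) − Eₙ)/√Vₙ ≤ z ) − Φ(z) | tends to 0 as n → ∞, where Φ is the cumulative distribution function of the standard Gaussian distribution on ℝ (mean 0, variance 1). In particular, (f₀(Qₙ) − Eₙ)/√Vₙ converges in distribution to a standard Gaussian random variable. -/

import Mathlib

open MeasureTheory

/-- The `β`-distribution on the closed unit disk of `ℝ²`. -/
noncomputable def betaMeasure (β : ℝ) : Measure (EuclideanSpace ℝ (Fin 2)) :=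
  volume.withDensity fun x =>
    ENNReal.ofReal (if ‖x‖ ≤ 1 then (β + 1) / Real.pi * (1 - ‖x‖ ^ 2) ^ β else 0)

instance (β : ℝ) : SigmaFinite (betaMeasure β) :=
  SigmaFinite.withDensity_ofReal _

/-- The joint law of `n` i.i.d. points with law `μ_β`, realized on `(ℝ²)ⁿ`. -/
noncomputable def betaPi (β : ℝ) (n : ℕ) :
    Measure (Fin n → EuclideanSpace ℝ (Fin 2)) :=
  Measure.pi fun _ => betaMeasure β

/-- The number of vertices (extreme points) of the convex hull `Qₙ`, as a real. -/
noncomputable def vertCount {n : ℕ} (ω : Fin n → EuclideanSpace ℝ (Fin 2)) : ℝ :=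
  Nat.card (Set.extremePoints ℝ (convexHull ℝ (Set.range ω)))

/-- `E[f₀(Qₙ)]`. -/
noncomputable def meanF0 (β : ℝ) (n : ℕ) : ℝ :=
  ∫ ω, vertCount ω ∂ betaPi β n

/-- `Var(f₀(Qₙ)) = E[f₀(Qₙ)²] - (E[f₀(Qₙ)])²`. -/
noncomputable def varF0 (β : ℝ) (n : ℕ) : ℝ :=
  (∫ ω, vertCount ω ^ 2 ∂ betaPi β n) - meanF0 β n ^ 2

theorem ode_gauss (f f' : ℝ → ℂ) (hf : ∀ s, HasDerivAt f (f' s) s) (h0 : f 0 = 1) (t C : ℝ)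
    (hC : ∀ s, |s| ≤ |t| → ‖f' s + s * f s‖ ≤ C) :
    ‖f t - Complex.exp (-(t:ℂ)^2/2)‖ ≤ C * |t| := by
  have hC0 : 0 ≤ C := (norm_nonneg _).trans (hC 0 (by simp))
  let g : ℝ → ℂ := fun s => f s * Complex.exp ((s:ℂ)^2/2)
  have hg : ∀ s, HasDerivAt g ((f' s + s * f s) * Complex.exp ((s:ℂ)^2/2)) s := by
    intro s
    have h1 : HasDerivAt (fun s : ℝ => (s:ℂ)^2/2) (s:ℂ) s := by
      have := ((Complex.ofRealCLM.hasDerivAt (x := s)).pow 2).div_const 2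
      simpa using this
    have := (hf s).mul h1.cexp
    have e : (f' s + s * f s) * Complex.exp ((s:ℂ)^2/2) = f' s * Complex.exp ((s:ℂ)^2/2) +
      f s * (Complex.exp ((s:ℂ)^2/2) * s) := by ring
    rw [e]; exact this
  have hb : ∀ s ∈ Set.uIcc 0 t, ‖(f' s + s * f s) * Complex.exp ((s:ℂ)^2/2)‖
      ≤ C * Real.exp (t^2/2) := by
    intro s hs
    have hs' : |s| ≤ |t| := by
      have := Set.abs_sub_left_of_mem_uIcc hs
      simpa using this
    rw [norm_mul]
    have : ‖Complex.exp ((s:ℂ)^2/2)‖ = Real.exp (s^2/2) := by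
      rw [Complex.norm_exp]; congr 1
      have : ((s:ℂ)^2/2) = ((s^2/2 : ℝ) : ℂ) := by push_cast; ring
      rw [this, Complex.ofReal_re]
    rw [this]
    have h2 : s^2 ≤ t^2 := sq_le_sq.2 hs'
    gcongr
    exact hC s hs'
  have key := (convex_uIcc (0:ℝ) t).norm_image_sub_le_of_norm_hasDerivWithin_le
    (fun s _ => (hg s).hasDerivWithinAt) hb Set.left_mem_uIcc Set.right_mem_uIcc
  have e1 : f t - Complex.exp (-(t:ℂ)^2/2) = (g t - g 0) * Complex.exp (-(t:ℂ)^2/2) := by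
    have : Complex.exp ((t:ℂ)^2/2) * Complex.exp (-(t:ℂ)^2/2) = 1 := by
      rw [← Complex.exp_add]; simp [neg_div]
    simp only [g, h0]
    simp only [sub_mul, mul_assoc, this]
    simp
  have e2 : ‖Complex.exp (-(t:ℂ)^2/2)‖ = Real.exp (-(t^2/2)) := by
    rw [Complex.norm_exp]; congr 1
    have : (-(t:ℂ)^2/2) = ((-(t^2/2) : ℝ) : ℂ) := by push_cast; ring
    rw [this, Complex.ofReal_re]
  rw [e1, norm_mul, e2]
  calc _ ≤ (C * Real.exp (t^2/2) * ‖t - 0‖) * Real.exp (-(t^2/2)) := by gcongr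
    _ = C * |t| * (Real.exp (t^2/2) * Real.exp (-(t^2/2))) := by simp; ring
    _ = _ := by rw [← Real.exp_add]; simp

theorem exp_I_second (x : ℝ) : ‖1 - Complex.exp (-(Complex.I * x)) - Complex.I * x‖ ≤ 2 * x^2 := by
  have e : 1 - Complex.exp (-(Complex.I * x)) - Complex.I * x
    = -(Complex.exp (-(Complex.I * x)) - 1 - (-(Complex.I * x))) := by ring
  rw [e, norm_neg]
  have hn : ‖-(Complex.I * (x:ℂ))‖ = |x| := by simp
  by_cases h : |x| ≤ 1
  · have := Complex.norm_exp_sub_one_sub_id_le (x := -(Complex.I * x)) (by rw [hn]; exact h)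
    rw [hn, sq_abs] at this
    nlinarith [sq_nonneg x]
  · push Not at h
    have h1 : ‖Complex.exp (-(Complex.I * x)) - 1‖ ≤ |x| := by
      have := Real.norm_exp_I_mul_ofReal_sub_one_le (x := -x)
      simpa using this
    calc _ ≤ ‖Complex.exp (-(Complex.I * x)) - 1‖ + ‖-(Complex.I * (x:ℂ))‖ := norm_sub_le _ _
      _ ≤ |x| + |x| := by rw [hn]; gcongr
      _ ≤ 2 * x^2 := by rw [← sq_abs]; nlinarith

theorem integrable_bdd {Ω F : Type*} [NormedAddCommGroup F] [MeasurableSpace Ω] {P : Measure Ω}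
    [IsFiniteMeasure P] {f : Ω → F} (hf : AEStronglyMeasurable f P) (C : ℝ) (h : ∀ ω, ‖f ω‖ ≤ C) :
    Integrable f P := Integrable.of_bound hf C (Filter.Eventually.of_forall h)

theorem norm_int_le {Ω F : Type*} [NormedAddCommGroup F] [NormedSpace ℝ F] [MeasurableSpace Ω]
    {P : Measure Ω} [IsProbabilityMeasure P] {f : Ω → F} (C : ℝ) (h : ∀ ω, ‖f ω‖ ≤ C) :
    ‖∫ ω, f ω ∂P‖ ≤ C := by
  have := norm_integral_le_of_norm_le_const (μ := P) (Filter.Eventually.of_forall h)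
  simpa using this

theorem tikh {Ω ι : Type*} [MeasurableSpace Ω] (P : Measure Ω) [IsProbabilityMeasure P]
    [Fintype ι] [Nonempty ι] [DecidableEq ι] (X : ι → Ω → ℝ) (hm : ∀ j, Measurable (X j)) (b D D' : ℝ)
    (hb : ∀ j ω, |X j ω| ≤ b) (N N' : ι → Finset ι) (hN : ∀ j, ((N j).card : ℝ) ≤ D)
    (hN' : ∀ j, ((N' j).card : ℝ) ≤ D') (e1 e2 e3 e4 : ℝ) (he2 : 0 ≤ e2)
    (h1 : ∀ j (t : ℝ), ‖∫ ω, (X j ω : ℂ) *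
      Complex.exp (Complex.I * ((t * ∑ k ∈ (N j)ᶜ, X k ω : ℝ) : ℂ)) ∂P‖ ≤ e1)
    (h2 : ∀ j k, k ∉ N' j → |∫ ω, (X j ω * ∑ l ∈ N j, X l ω) * (X k ω * ∑ l ∈ N k, X l ω) ∂P
      - (∫ ω, X j ω * ∑ l ∈ N j, X l ω ∂P) * (∫ ω, X k ω * ∑ l ∈ N k, X l ω ∂P)| ≤ e2)
    (h3 : ∀ j, |∫ ω, X j ω * ∑ k ∈ (N j)ᶜ, X k ω ∂P| ≤ e3)
    (h4 : |∫ ω, (∑ j, X j ω)^2 ∂P - 1| ≤ e4) (t : ℝ) :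
    ‖∫ ω, Complex.exp (Complex.I * ((t * ∑ k, X k ω : ℝ) : ℂ)) ∂P - Complex.exp (-(t:ℂ)^2/2)‖ ≤
      (Fintype.card ι * e1 + |t| * (Fintype.card ι * e3 + e4 +
        Real.sqrt (Fintype.card ι * (Fintype.card ι * e2 + D' * (2 * (b * (D * b))^2))))
        + Fintype.card ι * (b * (2 * (t * (D * b))^2))) * |t| := by
  have : Nonempty Ω := by
    by_contra h
    rw [not_nonempty_iff] at h
    have := measure_univ (μ := P)
    simp [Set.univ_eq_empty_iff.2 h] at this
  obtain ⟨ω0⟩ := this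
  set c : ℝ := (Fintype.card ι : ℝ) with hc
  set W : Ω → ℝ := fun ω => ∑ k, X k ω with hW
  set S : ι → Ω → ℝ := fun j ω => ∑ k ∈ N j, X k ω with hS
  set W' : ι → Ω → ℝ := fun j ω => ∑ k ∈ (N j)ᶜ, X k ω with hW'
  have hWm : Measurable W := Finset.measurable_sum _ (fun j _ => hm j)
  have hSm : ∀ j, Measurable (S j) := fun j => Finset.measurable_sum _ (fun j _ => hm j)
  have hW'm : ∀ j, Measurable (W' j) := fun j => Finset.measurable_sum _ (fun j _ => hm j)
  have hsplit : ∀ j ω, W ω = S j ω + W' j ω := fun j ω =>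
    (Finset.sum_add_sum_compl (N j) (fun k => X k ω)).symm
  obtain ⟨j0⟩ := (inferInstance : Nonempty ι)
  have hb0 : 0 ≤ b := (abs_nonneg _).trans (hb j0 ω0)
  have hD0 : 0 ≤ D := (Nat.cast_nonneg _).trans (hN j0)
  have hD0' : 0 ≤ D' := (Nat.cast_nonneg _).trans (hN' j0)
  have hWb : ∀ ω, |W ω| ≤ c * b := by
    intro ω
    calc |W ω| ≤ ∑ k, |X k ω| := Finset.abs_sum_le_sum_abs _ _
      _ ≤ ∑ k : ι, b := Finset.sum_le_sum (fun k _ => hb k ω)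
      _ = c * b := by simp [hc]
  have hSb : ∀ j ω, |S j ω| ≤ D * b := by
    intro j ω
    calc |S j ω| ≤ ∑ k ∈ N j, |X k ω| := Finset.abs_sum_le_sum_abs _ _
      _ ≤ ∑ k ∈ N j, b := Finset.sum_le_sum (fun k _ => hb k ω)
      _ = (N j).card * b := by simp
      _ ≤ D * b := by gcongr; exact hN j
  have hXSb : ∀ j ω, |X j ω * S j ω| ≤ b * (D * b) := by
    intro j ω
    rw [abs_mul]; gcongr
    · exact hb j ω
    · exact hSb j ω
  have hXSm : ∀ j, Measurable fun ω => X j ω * S j ω := fun j => (hm j).mul (hSm j)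
  set T : Ω → ℝ := fun ω => ∑ j, X j ω * S j ω with hT
  have hTm : Measurable T := Finset.measurable_sum _ (fun j _ => hXSm j)
  have hTb : ∀ ω, |T ω| ≤ c * (b * (D * b)) := by
    intro ω
    calc |T ω| ≤ ∑ k, |X k ω * S k ω| := Finset.abs_sum_le_sum_abs _ _
      _ ≤ ∑ k : ι, (b * (D * b)) := Finset.sum_le_sum (fun k _ => hXSb k ω)
      _ = _ := by simp [hc]
  have hXSi : ∀ j, Integrable (fun ω => X j ω * S j ω) P := fun j =>
    integrable_bdd (hXSm j).aestronglyMeasurable _ (hXSb j)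
  have hXW'i : ∀ j, Integrable (fun ω => X j ω * W' j ω) P := by
    intro j
    refine integrable_bdd ((hm j).mul (hW'm j)).aestronglyMeasurable (b * (c*b + D*b)) ?_
    intro ω
    rw [norm_mul]
    gcongr
    · exact hb j ω
    · have : W' j ω = W ω - S j ω := by rw [hsplit j ω]; ring
      rw [this]
      exact (abs_sub _ _).trans (add_le_add (hWb ω) (hSb j ω))
  have hET : |∫ ω, T ω ∂P - 1| ≤ c * e3 + e4 := by
    have e : ∫ ω, (W ω)^2 ∂P = ∫ ω, T ω ∂P + ∑ j, ∫ ω, X j ω * W' j ω ∂P := by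
      rw [← integral_finsetSum _ (fun j _ => hXW'i j), ← integral_add
        (integrable_finsetSum _ (fun j _ => hXSi j))
        (integrable_finsetSum _ (fun j _ => hXW'i j))]
      congr 1; ext ω
      rw [← Finset.sum_add_distrib, sq]
      have : W ω * W ω = (∑ k, X k ω) * W ω := rfl
      rw [this, Finset.sum_mul]
      refine Finset.sum_congr rfl fun j _ => ?_
      rw [← mul_add, ← hsplit j ω]
    have e' : ∫ ω, T ω ∂P - 1 = (∫ ω, (W ω)^2 ∂P - 1) - ∑ j, ∫ ω, X j ω * W' j ω ∂P := by
      rw [e]; ring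
    rw [e']
    calc _ ≤ |∫ ω, (W ω)^2 ∂P - 1| + |∑ j, ∫ ω, X j ω * W' j ω ∂P| := abs_sub _ _
      _ ≤ e4 + ∑ j, |∫ ω, X j ω * W' j ω ∂P| := add_le_add h4 (Finset.abs_sum_le_sum_abs _ _)
      _ ≤ e4 + ∑ j : ι, e3 := by gcongr with j; exact h3 j
      _ = _ := by simp [hc]; ring
  have hVT : ∫ ω, (T ω - ∫ ω, T ω ∂P)^2 ∂P ≤ c * (c * e2 + D' * (2 * (b * (D * b))^2)) := by
    set Y : ι → Ω → ℝ := fun j ω => X j ω * S j ω - ∫ ω, X j ω * S j ω ∂P with hY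
    have hTY : ∀ ω, T ω - ∫ ω, T ω ∂P = ∑ j, Y j ω := by
      intro ω
      simp only [hT, hY]
      rw [integral_finsetSum _ (fun j _ => hXSi j), Finset.sum_sub_distrib]
    have hXXi : ∀ j k, Integrable (fun ω => (X j ω * S j ω) * (X k ω * S k ω)) P := by
      intro j k
      refine integrable_bdd ((hXSm j).mul (hXSm k)).aestronglyMeasurable
        ((b * (D * b)) * (b * (D * b))) ?_
      intro ω
      rw [norm_mul]
      gcongr
      · exact hXSb j ω
      · exact hXSb k ω
    have hexp : ∀ j k, (fun ω => Y j ω * Y k ω) = fun ω => (X j ω * S j ω) * (X k ω * S k ω)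
        - (∫ ω, X j ω * S j ω ∂P) * (X k ω * S k ω) - (∫ ω, X k ω * S k ω ∂P) * (X j ω * S j ω)
        + (∫ ω, X j ω * S j ω ∂P) * (∫ ω, X k ω * S k ω ∂P) := by
      intro j k; ext ω; simp only [hY]; ring
    have hYYi : ∀ j k, Integrable (fun ω => Y j ω * Y k ω) P := by
      intro j k
      rw [hexp]
      exact (((hXXi j k).sub ((hXSi k).const_mul _)).sub ((hXSi j).const_mul _)).add
        (integrable_const _)
    have hYYe : ∀ j k, ∫ ω, Y j ω * Y k ω ∂P = ∫ ω, (X j ω * S j ω) * (X k ω * S k ω) ∂P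
      - (∫ ω, X j ω * S j ω ∂P) * (∫ ω, X k ω * S k ω ∂P) := by
      intro j k
      rw [hexp, integral_add, integral_sub, integral_sub (hXXi j k) ((hXSi k).const_mul _),
        integral_const_mul, integral_const_mul]
      · simp; ring
      · exact (hXXi j k).sub ((hXSi k).const_mul _)
      · exact (hXSi j).const_mul _
      · exact ((hXXi j k).sub ((hXSi k).const_mul _)).sub ((hXSi j).const_mul _)
      · exact integrable_const _
    have hall : ∀ j k, ∫ ω, Y j ω * Y k ω ∂P ≤ 2 * (b * (D*b))^2 := by
      intro j k
      rw [hYYe]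
      have a1 : ‖∫ ω, (X j ω * S j ω) * (X k ω * S k ω) ∂P‖ ≤ (b * (D * b)) * (b * (D * b)) := by
        refine norm_int_le _ fun ω => ?_
        rw [norm_mul]
        gcongr
        · exact hXSb j ω
        · exact hXSb k ω
      have a2 : ∀ j, |∫ ω, X j ω * S j ω ∂P| ≤ b * (D * b) := fun j => by
        rw [← Real.norm_eq_abs]; exact norm_int_le _ (hXSb j)
      have a3 : |(∫ ω, X j ω * S j ω ∂P) * (∫ ω, X k ω * S k ω ∂P)| ≤
          (b * (D * b)) * (b * (D * b)) := by
        rw [abs_mul]; gcongr <;> apply a2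
      have := (le_abs_self _).trans a1
      have := (neg_abs_le ((∫ ω, X j ω * S j ω ∂P) * (∫ ω, X k ω * S k ω ∂P)))
      nlinarith
    have hfar : ∀ j k, k ∉ N' j → ∫ ω, Y j ω * Y k ω ∂P ≤ e2 := by
      intro j k hk
      rw [hYYe]
      exact (le_abs_self _).trans (h2 j k hk)
    calc ∫ ω, (T ω - ∫ ω, T ω ∂P)^2 ∂P = ∑ j, ∑ k, ∫ ω, Y j ω * Y k ω ∂P := by
          simp_rw [hTY, sq, Finset.sum_mul_sum]
          rw [integral_finsetSum _ (fun j _ => integrable_finsetSum _ (fun k _ => hYYi j k))]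
          exact Finset.sum_congr rfl fun j _ => integral_finsetSum _ (fun k _ => hYYi j k)
      _ ≤ ∑ j : ι, (c * e2 + D' * (2 * (b * (D * b))^2)) := by
          refine Finset.sum_le_sum fun j _ => ?_
          rw [← Finset.sum_add_sum_compl (N' j), add_comm]
          gcongr
          · calc _ ≤ ∑ k ∈ (N' j)ᶜ, e2 := Finset.sum_le_sum fun k hk =>
                  hfar j k (by simpa using hk)
              _ ≤ ∑ k : ι, e2 := Finset.sum_le_sum_of_subset_of_nonneg (Finset.subset_univ _)
                  fun _ _ _ => he2
              _ = _ := by simp [hc]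
          · calc _ ≤ ∑ k ∈ N' j, (2 * (b * (D * b))^2) := Finset.sum_le_sum fun k hk => hall j k
              _ = (N' j).card * (2 * (b * (D * b))^2) := by simp
              _ ≤ _ := by gcongr; exact hN' j
      _ = _ := by simp [hc]; ring
  have hL1 : ∫ ω, |T ω - ∫ ω, T ω ∂P| ∂P ≤
      Real.sqrt (c * (c * e2 + D' * (2 * (b * (D * b))^2))) := by
    apply Real.le_sqrt_of_sq_le
    refine le_trans ?_ hVT
    set a := ∫ ω, T ω ∂P
    set m := ∫ ω, |T ω - a| ∂P
    have hTi : Integrable (fun ω => |T ω - a|) P := by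
      refine integrable_bdd (hTm.sub_const a).norm.aestronglyMeasurable (c * (b * (D * b)) + |a|) ?_
      intro ω
      simp only [norm_abs_eq_norm, Real.norm_eq_abs]
      exact (abs_sub _ _).trans (add_le_add_left (hTb ω) _)
    have hTi2 : Integrable (fun ω => (T ω - a)^2) P := by
      refine integrable_bdd ((hTm.sub_const a).pow_const 2).aestronglyMeasurable
        ((c * (b * (D * b)) + |a|)^2) ?_
      intro ω
      rw [norm_pow]
      gcongr
      exact (abs_sub _ _).trans (add_le_add_left (hTb ω) _)
    have hpos : 0 ≤ ∫ ω, (|T ω - a| - m)^2 ∂P := integral_nonneg fun ω => sq_nonneg _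
    have : (fun ω => (|T ω - a| - m)^2) = fun ω => (T ω - a)^2 - (2 * m) * |T ω - a| + m^2 := by
      ext ω; rw [← sq_abs (T ω - a)]; ring
    rw [this, integral_add (by exact hTi2.sub (hTi.const_mul _)) (integrable_const _),
      integral_sub hTi2 (hTi.const_mul _), integral_const_mul] at hpos
    simp at hpos
    nlinarith
  set ex : ℝ → Ω → ℂ := fun s ω => Complex.exp (Complex.I * ((s * W ω : ℝ) : ℂ)) with hex
  have hexn : ∀ s ω, ‖ex s ω‖ = 1 := fun s ω => Complex.norm_exp_I_mul_ofReal _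
  have hexm : ∀ s, Measurable (ex s) := by
    intro s; simp only [hex]; fun_prop
  refine ode_gauss (fun s => ∫ ω, ex s ω ∂P) (fun s => ∫ ω, Complex.I * W ω * ex s ω ∂P) ?_ ?_ t _ ?_
  · intro s
    refine (hasDerivAt_integral_of_dominated_loc_of_deriv_le (μ := P) (F := ex)
      (F' := fun s ω => Complex.I * W ω * ex s ω) (bound := fun _ => c * b) (s := Set.univ) Filter.univ_mem ?_ ?_ ?_ ?_ ?_ ?_).2
    · exact Filter.Eventually.of_forall fun s => (hexm s).aestronglyMeasurable
    · exact integrable_bdd (hexm s).aestronglyMeasurable 1 (fun ω => (hexn s ω).le)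
    · exact Measurable.aestronglyMeasurable (by fun_prop)
    · refine Filter.Eventually.of_forall fun ω s _ => ?_
      rw [norm_mul, hexn, norm_mul]; simpa using hWb ω
    · exact integrable_const _
    · refine Filter.Eventually.of_forall fun ω s _ => ?_
      have h1 : HasDerivAt (fun s : ℝ => Complex.I * ((s * W ω : ℝ) : ℂ)) (Complex.I * W ω) s := by
        have := ((Complex.ofRealCLM.hasDerivAt (x := s)).mul_const (W ω : ℂ)).const_mul Complex.I
        simpa using this
      have := h1.cexp
      rw [mul_comm] at this
      exact this
  · simp [hex]
  · intro s hs
    set r : ι → Ω → ℂ := fun j ω => X j ω * ex s ω * (1 - Complex.exp (-(Complex.I * ((s * S j ω : ℝ) : ℂ)))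
      - Complex.I * ((s * S j ω : ℝ) : ℂ)) with hr
    set q : ι → Ω → ℂ := fun j ω => X j ω * Complex.exp (Complex.I * ((s * W' j ω : ℝ) : ℂ)) with hq
    have hrn : ∀ j ω, ‖r j ω‖ ≤ b * (2 * (t * (D * b))^2) := by
      intro j ω
      simp only [hr]
      rw [norm_mul, norm_mul, hexn, mul_one]
      gcongr
      · simpa using hb j ω
      · refine (exp_I_second _).trans ?_
        gcongr 2 * ?_
        rw [← sq_abs, ← sq_abs (t * (D * b)), abs_mul, abs_mul t, abs_of_nonneg (mul_nonneg hD0 hb0)]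
        have := hSb j ω
        gcongr
    have hri : ∀ j, Integrable (r j) P := fun j =>
      integrable_bdd (Measurable.aestronglyMeasurable (by simp only [hr]; fun_prop)) _ (hrn j)
    have hqi : ∀ j, Integrable (q j) P := fun j =>
      integrable_bdd (Measurable.aestronglyMeasurable (by simp only [hq]; fun_prop)) b (by
        intro ω
        simp only [hq]
        rw [norm_mul, Complex.norm_exp_I_mul_ofReal, mul_one]
        simpa using hb j ω)
    set a := ∫ ω, T ω ∂P
    have hai : Integrable (fun ω => ((T ω - 1 : ℝ) : ℂ) * ex s ω) P := by
      refine integrable_bdd (Measurable.aestronglyMeasurable (by fun_prop))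
        (c * (b * (D * b)) + |1|) ?_
      intro ω
      rw [norm_mul, hexn, mul_one, Complex.norm_real]
      exact (abs_sub _ _).trans (add_le_add_left (hTb ω) _)
    have hpt : ∀ ω, Complex.I * W ω * ex s ω + s * ex s ω = Complex.I * ∑ j, q j ω
        - s * (((T ω - 1 : ℝ) : ℂ) * ex s ω) + Complex.I * ∑ j, r j ω := by
      intro ω
      have hqr : ∀ j, q j ω + r j ω = X j ω * ex s ω - Complex.I * s * ((X j ω * S j ω : ℝ):ℂ) * ex s ω := by
        intro j
        have : Complex.exp (Complex.I * ((s * W' j ω : ℝ) : ℂ)) =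
            ex s ω * Complex.exp (-(Complex.I * ((s * S j ω : ℝ) : ℂ))) := by
          simp only [hex]
          rw [← Complex.exp_add, hsplit j ω]
          congr 1; push_cast; ring
        simp only [hq, hr, this]
        push_cast; ring
      have hsum : ∑ j, q j ω + ∑ j, r j ω = W ω * ex s ω - Complex.I * s * T ω * ex s ω := by
        rw [← Finset.sum_add_distrib, Finset.sum_congr rfl (fun j _ => hqr j), Finset.sum_sub_distrib,
          ← Finset.sum_mul, ← Finset.sum_mul, ← Finset.mul_sum]
        simp only [hW, hT]; push_cast; ring
      have : Complex.I * ∑ j, q j ω + Complex.I * ∑ j, r j ω = Complex.I * W ω * ex s ω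
          + s * T ω * ex s ω := by
        rw [← mul_add, hsum]; linear_combination (-s * T ω * ex s ω) * Complex.I_mul_I
      push_cast
      linear_combination -this
    have hWi : Integrable (fun ω => Complex.I * W ω * ex s ω) P :=
      integrable_bdd (Measurable.aestronglyMeasurable (by fun_prop)) (c*b) (by
        intro ω
        rw [norm_mul, hexn, norm_mul]; simpa using hWb ω)
    have hexi : Integrable (fun ω => (s:ℂ) * ex s ω) P :=
      (integrable_bdd (hexm s).aestronglyMeasurable 1 (fun ω => (hexn s ω).le)).const_mul _
    have hint : ∫ ω, Complex.I * W ω * ex s ω ∂P + s * ∫ ω, ex s ω ∂P =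
        Complex.I * ∑ j, ∫ ω, q j ω ∂P - s * ∫ ω, ((T ω - 1 : ℝ) : ℂ) * ex s ω ∂P
          + Complex.I * ∑ j, ∫ ω, r j ω ∂P := by
      rw [← integral_const_mul, ← integral_add hWi hexi]
      simp_rw [hpt]
      rw [integral_add, integral_sub, integral_const_mul, integral_const_mul, integral_const_mul,
        integral_finsetSum _ (fun j _ => hqi j), integral_finsetSum _ (fun j _ => hri j)]
      · exact (integrable_finsetSum _ (fun j _ => hqi j)).const_mul _
      · exact hai.const_mul _
      · exact ((integrable_finsetSum _ (fun j _ => hqi j)).const_mul _).sub (hai.const_mul _)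
      · exact (integrable_finsetSum _ (fun j _ => hri j)).const_mul _
    rw [hint]
    have b1 : ‖Complex.I * ∑ j, ∫ ω, q j ω ∂P‖ ≤ c * e1 := by
      rw [norm_mul, Complex.norm_I, one_mul]
      calc _ ≤ ∑ j, ‖∫ ω, q j ω ∂P‖ := norm_sum_le _ _
        _ ≤ ∑ j : ι, e1 := Finset.sum_le_sum fun j _ => h1 j s
        _ = _ := by simp [hc]
    have b3 : ‖Complex.I * ∑ j, ∫ ω, r j ω ∂P‖ ≤ c * (b * (2 * (t * (D * b))^2)) := by
      rw [norm_mul, Complex.norm_I, one_mul]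
      calc _ ≤ ∑ j, ‖∫ ω, r j ω ∂P‖ := norm_sum_le _ _
        _ ≤ ∑ j : ι, (b * (2 * (t * (D * b))^2)) := Finset.sum_le_sum fun j _ => norm_int_le _ (hrn j)
        _ = _ := by simp [hc]
    have b2 : ‖∫ ω, ((T ω - 1 : ℝ) : ℂ) * ex s ω ∂P‖ ≤ c * e3 + e4 +
        Real.sqrt (c * (c * e2 + D' * (2 * (b * (D * b))^2))) := by
      have hTi : Integrable (fun ω => |T ω - a|) P := by
        refine integrable_bdd (hTm.sub_const a).norm.aestronglyMeasurable (c * (b * (D * b)) + |a|) ?_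
        intro ω
        simp only [norm_abs_eq_norm, Real.norm_eq_abs]
        exact (abs_sub _ _).trans (add_le_add_left (hTb ω) _)
      calc _ ≤ ∫ ω, ‖((T ω - 1 : ℝ) : ℂ) * ex s ω‖ ∂P := norm_integral_le_integral_norm _
        _ ≤ ∫ ω, (|T ω - a| + |a - 1|) ∂P := by
          refine integral_mono hai.norm (hTi.add (integrable_const _)) fun ω => ?_
          simp only
          rw [norm_mul, hexn, mul_one, Complex.norm_real]
          have : T ω - 1 = (T ω - a) + (a - 1) := by ring
          rw [this]; exact abs_add_le _ _
        _ = ∫ ω, |T ω - a| ∂P + |a - 1| := by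
          rw [integral_add hTi (integrable_const _)]; simp
        _ ≤ _ := by linarith
    calc _ ≤ ‖Complex.I * ∑ j, ∫ ω, q j ω ∂P‖ + ‖(s:ℂ) * ∫ ω, ((T ω - 1 : ℝ) : ℂ) * ex s ω ∂P‖
          + ‖Complex.I * ∑ j, ∫ ω, r j ω ∂P‖ :=
          (norm_add_le _ _).trans (add_le_add_left (norm_sub_le _ _) _)
      _ ≤ _ := by
        have hs2 : ‖(s:ℂ) * ∫ ω, ((T ω - 1 : ℝ) : ℂ) * ex s ω ∂P‖ ≤ |t| * (c * e3 + e4 +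
            Real.sqrt (c * (c * e2 + D' * (2 * (b * (D * b))^2)))) := by
          rw [norm_mul, Complex.norm_real]
          gcongr
          exact hs
        exact add_le_add (add_le_add b1 hs2) b3

open Filter Topology in
lemma polya (Fn : ℕ → ℝ → ℝ) (F : ℝ → ℝ) (hFn : ∀ n, Monotone (Fn n)) (hF : Monotone F)
    (hFn0 : ∀ n x, 0 ≤ Fn n x) (hFn1 : ∀ n x, Fn n x ≤ 1) (hF0 : ∀ x, 0 ≤ F x) (hF1 : ∀ x, F x ≤ 1)
    (hc : Continuous F) (hb : Tendsto F atBot (𝓝 0)) (ht : Tendsto F atTop (𝓝 1))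
    (h : ∀ x, Tendsto (fun n => Fn n x) atTop (𝓝 (F x))) :
    Tendsto (fun n => ⨆ z, |Fn n z - F z|) atTop (𝓝 0) := by
  have key : ∀ ε > 0, ∀ᶠ n in atTop, ∀ z, |Fn n z - F z| ≤ 2 * ε := by
    intro ε he
    obtain ⟨a, ha⟩ := (hb.eventually (gt_mem_nhds he)).exists
    obtain ⟨b, hb'⟩ := (ht.eventually (lt_mem_nhds (show 1 - ε < 1 by linarith))).exists
    have hcomp : ∀ᶠ n in atTop, ∀ z ∈ Set.Icc a b, |Fn n z - F z| ≤ 2 * ε := by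
      refine isCompact_Icc.induction_on (p := fun S => ∀ᶠ n in atTop, ∀ z ∈ S, |Fn n z - F z| ≤ 2 * ε)
        (by simp) ?_ ?_ ?_
      · intro s t hst ht
        filter_upwards [ht] with n hn z hz using hn z (hst hz)
      · intro s t hs ht
        filter_upwards [hs, ht] with n h1 h2 z hz
        exact hz.elim (h1 z) (h2 z)
      · intro x _
        have h1 : ∀ᶠ y in 𝓝 x, |F y - F x| < ε / 2 := by
          have := Metric.continuousAt_iff'.1 (hc.continuousAt (x := x)) (ε/2) (by linarith)
          simpa [Real.dist_eq] using this
        obtain ⟨δ, hδ, hd⟩ := Metric.eventually_nhds_iff.1 h1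
        have hl := hd (y := x - δ / 2) (by rw [Real.dist_eq, abs_lt]; constructor <;> linarith)
        have hu := hd (y := x + δ / 2) (by rw [Real.dist_eq, abs_lt]; constructor <;> linarith)
        refine ⟨Set.Ioo (x - δ/2) (x + δ/2), mem_nhdsWithin_of_mem_nhds (Ioo_mem_nhds (by linarith) (by linarith)), ?_⟩
        have e1 := (h (x - δ/2)).eventually (Metric.ball_mem_nhds _ he)
        have e2 := (h (x + δ/2)).eventually (Metric.ball_mem_nhds _ he)
        filter_upwards [e1, e2] with n h1 h2 z hz
        simp only [Real.dist_eq] at h1 h2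
        have m1 := hFn n hz.1.le
        have m2 := hFn n hz.2.le
        have m3 := hF hz.1.le
        have m4 := hF hz.2.le
        rw [abs_lt] at *
        rw [abs_le]
        constructor <;> linarith [hl.1, hl.2, hu.1, hu.2, h1.1, h1.2, h2.1, h2.2]
    filter_upwards [hcomp, (h a).eventually (Metric.ball_mem_nhds _ he),
      (h b).eventually (Metric.ball_mem_nhds _ he)] with n h1 h2 h3 z
    simp only [Real.dist_eq, abs_lt] at h2 h3
    by_cases hza : z ≤ a
    · have m1 := hFn n hza
      have m3 := hF hza
      rw [abs_le]
      constructor <;> linarith [hFn0 n z, hF0 z]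
    · by_cases hzb : b ≤ z
      · have m1 := hFn n hzb
        have m3 := hF hzb
        rw [abs_le]
        constructor <;> linarith [hFn1 n z, hF1 z]
      · exact h1 z ⟨by linarith, by linarith⟩
  rw [Metric.tendsto_atTop']
  intro ε he
  obtain ⟨N, hN⟩ := eventually_atTop.1 (key (ε / 4) (by linarith))
  refine ⟨N, fun n hn => ?_⟩
  have h0 : 0 ≤ ⨆ z, |Fn n z - F z| := Real.iSup_nonneg fun z => abs_nonneg _
  have h1 : ⨆ z, |Fn n z - F z| ≤ 2 * (ε / 4) := ciSup_le (hN n hn.le)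
  rw [Real.dist_eq, sub_zero, abs_of_nonneg h0]
  linarith

open Filter Topology ProbabilityTheory in
lemma kolm (ν : ℕ → Measure ℝ) [hp : ∀ n, IsProbabilityMeasure (ν n)]
    (h : ∀ t, Tendsto (fun n => charFun (ν n) t) atTop (𝓝 (charFun (gaussianReal 0 1) t))) :
    Tendsto (fun n => ⨆ z, |(ν n (Set.Iic z)).toReal - (gaussianReal 0 1 (Set.Iic z)).toReal|) atTop (𝓝 0) := by
  have hna : NullSingletonClass (gaussianReal 0 1) := nullSingletonClass_gaussianReal one_ne_zero
  have hw := ProbabilityMeasure.tendsto_of_tendsto_charFun (μ := fun n => ⟨ν n, hp n⟩)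
    (μ₀ := ⟨gaussianReal 0 1, inferInstance⟩) h
  have hcdf : ∀ z, (gaussianReal 0 1 (Set.Iic z)).toReal = cdf (gaussianReal 0 1) z :=
    fun z => (cdf_eq_real _ _).symm
  have hmono : Monotone fun z => (gaussianReal 0 1 (Set.Iic z)).toReal := fun a b hab =>
    ENNReal.toReal_mono (measure_ne_top _ _) (measure_mono (Set.Iic_subset_Iic.2 hab))
  refine polya _ _ (fun n a b hab => ENNReal.toReal_mono (measure_ne_top _ _) (measure_mono (Set.Iic_subset_Iic.2 hab)))
    hmono (fun _ _ => ENNReal.toReal_nonneg) (fun n x => ?_) (fun _ => ENNReal.toReal_nonneg) (fun x => ?_) ?_ ?_ ?_ ?_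
  · exact ENNReal.toReal_le_of_le_ofReal zero_le_one (by simpa using prob_le_one)
  · exact ENNReal.toReal_le_of_le_ofReal zero_le_one (by simpa using prob_le_one)
  · simp_rw [hcdf]
    rw [continuous_iff_continuousAt]
    intro x
    rw [(monotone_cdf _).continuousAt_iff_leftLim_eq_rightLim, (cdf _).rightLim_eq]
    have := (cdf (gaussianReal 0 1)).measure_singleton x
    rw [measure_cdf, measure_singleton] at this
    have h2 := (monotone_cdf (gaussianReal 0 1)).leftLim_le (le_refl x)
    have h3 := ENNReal.ofReal_eq_zero.1 this.symm
    linarith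
  · simp_rw [hcdf]; exact tendsto_cdf_atBot _
  · simp_rw [hcdf]; exact tendsto_cdf_atTop _
  · intro x
    refine (ENNReal.tendsto_toReal (measure_ne_top _ _)).comp
      (ProbabilityMeasure.tendsto_measure_of_null_frontier_of_tendsto' hw ?_)
    rw [frontier_Iic]; exact hna.measure_singleton x

lemma mp_piecewise {α : Type*} [MeasurableSpace α] {μ : Measure α} {σ : α → α}
    (hσ : MeasurePreserving σ μ μ) {U : Set α} [∀ x, Decidable (x ∈ U)] (hU : MeasurableSet U)
    (hinv : σ ⁻¹' U = U) :
    MeasurePreserving (U.piecewise σ id) μ μ := by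
  have hm : Measurable (U.piecewise σ id) := hσ.measurable.piecewise hU measurable_id
  refine ⟨hm, ?_⟩
  ext s hs
  rw [Measure.map_apply hm hs, Set.piecewise_preimage, Set.ite, Set.preimage_id,
    measure_union _ (hs.diff hU)]
  · have : σ ⁻¹' s ∩ U = σ ⁻¹' (s ∩ U) := by rw [Set.preimage_inter, hinv]
    rw [this, hσ.measure_preimage (hs.inter hU).nullMeasurableSet, measure_inter_add_sdiff s hU]
  · exact Set.disjoint_left.2 fun x h1 h2 => h2.2 h1.2

lemma mp_integral {α γ F : Type*} [MeasurableSpace α] [MeasurableSpace γ] [NormedAddCommGroup F]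
    [NormedSpace ℝ F] {μ : Measure α}
    {ν : Measure γ} {g : α → γ} (h : MeasurePreserving g μ ν) {f : γ → F}
    (hf : AEStronglyMeasurable f ν) : ∫ x, f (g x) ∂μ = ∫ y, f y ∂ν := by
  rw [← h.map_eq, integral_map h.measurable.aemeasurable (by rwa [h.map_eq])]

/-- depends only on the points in `D` -/
def DepOn {n : ℕ} {E F : Type*} (D : Set E) (φ : (Fin n → E) → F) : Prop :=
  ∀ ω ω', (∀ i, ω i = ω' i ∨ (ω i ∉ D ∧ ω' i ∉ D)) → φ ω = φ ω'

open Classical in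
lemma cov_bound {n : ℕ} {E 𝕜 : Type*} [RCLike 𝕜] [MeasurableSpace E] (μ : Measure E) [IsProbabilityMeasure μ]
    (D D' : Set E) (hD : MeasurableSet D) (hD' : MeasurableSet D') (hdis : Disjoint D D')
    (φ ψ : (Fin n → E) → 𝕜) (hφm : Measurable φ) (hψm : Measurable ψ)
    (hφ : DepOn D φ) (hψ : DepOn D' ψ) (a a' : ℝ) (ha : ∀ ω, ‖φ ω‖ ≤ a) (ha' : ∀ ω, ‖ψ ω‖ ≤ a')
    (ha0 : 0 ≤ a) (ha0' : 0 ≤ a') :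
    ‖∫ ω, φ ω * ψ ω ∂(Measure.pi fun _ : Fin n => μ) -
      (∫ ω, φ ω ∂(Measure.pi fun _ : Fin n => μ)) * (∫ ω, ψ ω ∂(Measure.pi fun _ : Fin n => μ))‖
      ≤ 4 * a * a' * (n * (μ.real D * μ.real D')) := by
  set P := (Measure.pi fun _ : Fin n => μ)
  set Q := (Measure.pi fun _ : Fin n => μ.prod μ)
  set U : Set (E × E) := Dᶜ ×ˢ Dᶜ
  have hU : MeasurableSet U := hD.compl.prod hD.compl
  set Z : E × E → E := fun p => (U.piecewise Prod.swap id p).1 with hZ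
  have hZm : MeasurePreserving Z (μ.prod μ) μ :=
    measurePreserving_fst.comp (mp_piecewise Measure.measurePreserving_swap hU (by
      ext p; simp [U]))
  have hX : MeasurePreserving (fun (a : Fin n → E × E) i => (a i).1) Q P :=
    measurePreserving_pi _ _ (fun _ => measurePreserving_fst)
  have hY : MeasurePreserving (fun (a : Fin n → E × E) i => (a i).2) Q P :=
    measurePreserving_pi _ _ (fun _ => measurePreserving_snd)
  have hZZ : MeasurePreserving (fun (a : Fin n → E × E) i => Z (a i)) Q P :=
    measurePreserving_pi _ _ (fun _ => hZm)
  have h1 : ∫ ω, φ ω * ψ ω ∂P = ∫ w, φ (fun i => (w i).1) * ψ (fun i => Z (w i)) ∂Q := by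
    rw [← mp_integral hZZ (f := fun ω => φ ω * ψ ω) (hφm.mul hψm).aestronglyMeasurable]
    congr 1; ext w
    congr 1
    apply hφ
    intro i
    by_cases h : w i ∈ U
    · right
      simp only [hZ, Set.piecewise_eq_of_mem _ _ _ h]
      exact ⟨h.2, h.1⟩
    · left
      simp only [hZ, Set.piecewise_eq_of_notMem _ _ _ h, id]
  have h2 : (∫ ω, φ ω ∂P) * (∫ ω, ψ ω ∂P) = ∫ w, φ (fun i => (w i).1) * ψ (fun i => (w i).2) ∂Q := by
    rw [← integral_prod_mul φ ψ]
    exact ((measurePreserving_arrowProdEquivProdArrow E E (Fin n) (fun _ => μ) (fun _ => μ)).integral_comp'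
      (fun z => φ z.1 * ψ z.2)).symm
  set S : Fin n → Set (Fin n → E × E) := fun i => (fun w => w i) ⁻¹' (D ×ˢ D' ∪ D' ×ˢ D)
  have hSm : ∀ i, MeasurableSet (S i) := fun i =>
    (measurable_pi_apply i) ((hD.prod hD').union (hD'.prod hD))
  have hSP : ∀ i, Q.real (S i) ≤ 2 * (μ.real D * μ.real D') := by
    intro i
    have : Q.real (S i) = (μ.prod μ).real (D ×ˢ D' ∪ D' ×ˢ D) := by
      have := (measurePreserving_eval (fun _ : Fin n => μ.prod μ) i).measure_preimage
        ((hD.prod hD').union (hD'.prod hD)).nullMeasurableSet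
      simp only [Measure.real]; rw [← this]
    rw [this]
    refine (measureReal_union_le _ _).trans ?_
    rw [measureReal_prod_prod, measureReal_prod_prod]
    linarith
  have hdiff : ∀ w, ‖φ (fun i => (w i).1) * ψ (fun i => Z (w i)) - φ (fun i => (w i).1) * ψ (fun i => (w i).2)‖
      ≤ ∑ i, (S i).indicator (fun _ => 2 * a * a') w := by
    intro w
    have hnn : ∀ i, 0 ≤ (S i).indicator (fun _ => 2 * a * a') w := fun i =>
      Set.indicator_nonneg (fun _ _ => by positivity) _
    by_cases hw : ∃ i, w i ∈ D ×ˢ D' ∪ D' ×ˢ D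
    · obtain ⟨i, hi⟩ := hw
      refine le_trans ?_ (Finset.single_le_sum (fun i _ => hnn i) (Finset.mem_univ i))
      rw [Set.indicator_of_mem (show w ∈ S i from hi), ← mul_sub, norm_mul]
      have := norm_sub_le (ψ (fun i => Z (w i))) (ψ (fun i => (w i).2))
      have := ha' (fun i => Z (w i))
      have := ha' (fun i => (w i).2)
      calc _ ≤ a * (a' + a') := by
            apply mul_le_mul (ha _) (by linarith) (norm_nonneg _) ha0
        _ = _ := by ring
    · push Not at hw
      have : ψ (fun i => Z (w i)) = ψ (fun i => (w i).2) := by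
        apply hψ
        intro i
        by_cases h : w i ∈ U
        · left
          simp only [hZ, Set.piecewise_eq_of_mem _ _ _ h]; rfl
        · right
          have h3 := hw i
          simp only [hZ, Set.piecewise_eq_of_notMem _ _ _ h, id]
          have d1 : ∀ x, x ∈ D → x ∉ D' := fun x hx => Set.disjoint_left.1 hdis hx
          simp only [U, Set.mem_prod, Set.mem_compl_iff, Set.mem_union] at h h3
          have := d1 (w i).1
          have := d1 (w i).2
          tauto
      rw [this, sub_self, norm_zero]
      exact Finset.sum_nonneg fun i _ => hnn i
  have hint : ∀ g : (Fin n → E × E) → (Fin n → E), Measurable g →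
      Integrable (fun w => φ (fun i => (w i).1) * ψ (g w)) Q := by
    intro g hg
    refine integrable_bdd ((hφm.comp hX.measurable).mul (hψm.comp hg)).aestronglyMeasurable (C := a * a') ?_
    intro w
    rw [norm_mul]
    exact mul_le_mul (ha _) (ha' _) (norm_nonneg _) ha0
  rw [h1, h2, ← integral_sub (hint _ hZZ.measurable) (hint _ hY.measurable)]
  refine (norm_integral_le_integral_norm _).trans ?_
  have hI : ∀ i, Integrable ((S i).indicator (fun _ => 2 * a * a')) Q := fun i =>
    (integrable_const _).indicator (hSm i)
  refine (integral_mono_of_nonneg (Filter.Eventually.of_forall fun _ => norm_nonneg _)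
    (integrable_finsetSum _ fun i _ => hI i) (Filter.Eventually.of_forall hdiff)).trans ?_
  rw [integral_finsetSum _ fun i _ => hI i]
  calc _ ≤ ∑ i : Fin n, (2 * a * a') * (2 * (μ.real D * μ.real D')) := by
        refine Finset.sum_le_sum fun i _ => ?_
        rw [integral_indicator_const _ (hSm i), smul_eq_mul, mul_comm]
        exact mul_le_mul_of_nonneg_left (hSP i) (by positivity)
    _ = _ := by rw [Finset.sum_const, Finset.card_univ, Fintype.card_fin, nsmul_eq_mul]; ring

abbrev E2 := EuclideanSpace ℝ (Fin 2)

lemma beta_radial_int (β a : ℝ) (hβ : 0 ≤ β) (ha : 0 ≤ a) (ha1 : a ≤ 1) :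
    ∫ y in a..1, 2 * y * (β + 1) * (1 - y ^ 2) ^ β = (1 - a ^ 2) ^ (β + 1) := by
  have hd : ∀ y ∈ Set.uIcc a 1, HasDerivAt (fun y : ℝ => -(1 - y ^ 2) ^ (β + 1)) (2 * y * (β + 1) * (1 - y ^ 2) ^ β) y := by
    intro y _
    have h1 : HasDerivAt (fun y : ℝ => 1 - y ^ 2) (-(2 * y)) y := by
      simpa using ((hasDerivAt_pow 2 y).const_sub 1)
    have h2 := (h1.rpow_const (p := β + 1) (Or.inr (by linarith))).neg
    rw [add_sub_cancel_right] at h2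
    have e : 2 * y * (β + 1) * (1 - y ^ 2) ^ β = -(-(2 * y) * (β + 1) * (1 - y ^ 2) ^ β) := by ring
    rw [e]; exact h2
  rw [intervalIntegral.integral_eq_sub_of_hasDerivAt hd]
  · have : (β + 1) ≠ 0 := by linarith
    simp [Real.zero_rpow this]
  · apply Continuous.intervalIntegrable
    have : Continuous fun y : ℝ => (1 - y ^ 2) ^ β :=
      Continuous.rpow_const (by fun_prop) (fun _ => Or.inr hβ)
    fun_prop

lemma beta_dens_meas (β : ℝ) : Measurable fun x : E2 =>
    (if ‖x‖ ≤ 1 then (β + 1) / Real.pi * (1 - ‖x‖ ^ 2) ^ β else 0) := by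
  refine Measurable.ite (measurableSet_le (by fun_prop) (by fun_prop)) ?_ measurable_const
  fun_prop

lemma beta_tail (β a : ℝ) (hβ : 0 ≤ β) (ha : 0 ≤ a) (ha1 : a ≤ 1) :
    betaMeasure β {x | a ≤ ‖x‖} = ENNReal.ofReal ((1 - a ^ 2) ^ (β + 1)) := by
  have hS : MeasurableSet {x : E2 | a ≤ ‖x‖} := measurableSet_le (by fun_prop) (by fun_prop)
  have hpi := Real.pi_pos
  set g : ℝ → ℝ := fun r => if a ≤ r ∧ r ≤ 1 then (β + 1) / Real.pi * (1 - r ^ 2) ^ β else 0 with hg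
  have hgm : Measurable g := by
    refine Measurable.ite ((measurableSet_le measurable_const measurable_id).inter
      (measurableSet_le measurable_id measurable_const)) ?_ measurable_const
    fun_prop
  have hg0 : ∀ r, 0 ≤ r → 0 ≤ g r := by
    intro r hr
    simp only [hg]
    split_ifs with h
    · have : 0 ≤ 1 - r ^ 2 := by nlinarith [h.2]
      positivity
    · exact le_rfl
  have hgle : ∀ r, 0 ≤ r → g r ≤ (β + 1) / Real.pi := by
    intro r hr
    simp only [hg]
    split_ifs with h
    · have : 0 ≤ 1 - r ^ 2 := by nlinarith [h.2]
      have := Real.rpow_le_one this (by nlinarith) hβ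
      exact mul_le_of_le_one_right (by positivity) this
    · positivity
  rw [betaMeasure, withDensity_apply _ hS, ← lintegral_indicator hS]
  have e1 : ∀ x : E2, ({x : E2 | a ≤ ‖x‖}.indicator (fun x => ENNReal.ofReal (if ‖x‖ ≤ 1 then (β + 1) / Real.pi * (1 - ‖x‖ ^ 2) ^ β else 0))) x = ENNReal.ofReal (g ‖x‖) := by
    intro x
    by_cases h : a ≤ ‖x‖
    · rw [Set.indicator_of_mem (show x ∈ {x : E2 | a ≤ ‖x‖} from h)]; simp [hg, h]
    · rw [Set.indicator_of_notMem (show x ∉ {x : E2 | a ≤ ‖x‖} from h)]; simp [hg, h]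
  rw [lintegral_congr e1, ← ofReal_integral_eq_lintegral_ofReal]
  · congr 1
    rw [integral_fun_norm_addHaar volume g]
    have hfr : Module.finrank ℝ E2 = 2 := by simp
    rw [hfr]
    have hv : (volume : Measure E2).real (Metric.ball 0 1) = Real.pi := by
      rw [Measure.real, EuclideanSpace.volume_ball_fin_two]; simp [hpi.le]
    rw [hv, ← beta_radial_int β a hβ ha ha1, intervalIntegral.integral_of_le ha1,
      ← integral_Icc_eq_integral_Ioc]
    have : ∫ y in Set.Ioi (0:ℝ), y ^ (2 - 1) • g y = ∫ y in Set.Icc a 1, y * ((β + 1) / Real.pi * (1 - y ^ 2) ^ β) := by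
      rw [← integral_Ici_eq_integral_Ioi, ← integral_indicator measurableSet_Ici, ← integral_indicator measurableSet_Icc]
      congr 1; ext y
      simp only [Set.indicator, Set.mem_Ici, Set.mem_Icc, hg]
      by_cases h : a ≤ y ∧ y ≤ 1
      · have : 0 ≤ y := ha.trans h.1
        simp [h, this]
      · simp [h]
    rw [this, smul_eq_mul, nsmul_eq_mul, ← integral_const_mul, ← integral_const_mul]
    congr 1; ext y; field_simp; push_cast; ring
  · have hi : Integrable ((Metric.closedBall (0:E2) 1).indicator fun x => g ‖x‖) volume := by
      rw [integrable_indicator_iff measurableSet_closedBall]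
      refine Measure.integrableOn_of_bounded (M := (β + 1) / Real.pi) ?_ (hgm.comp measurable_norm).aestronglyMeasurable ?_
      · exact measure_closedBall_lt_top.ne
      · exact Filter.Eventually.of_forall fun x => by
          rw [Real.norm_of_nonneg (hg0 _ (norm_nonneg _))]
          exact hgle _ (norm_nonneg _)
    have hfe : (fun x : E2 => g ‖x‖) = (Metric.closedBall (0:E2) 1).indicator fun x => g ‖x‖ := ?_
    · rw [hfe]; exact hi
    ext x
    by_cases h : ‖x‖ ≤ 1
    · rw [Set.indicator_of_mem (by simpa using h)]
    · rw [Set.indicator_of_notMem (by simpa using h)]; simp [hg, h]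
  · exact Filter.Eventually.of_forall fun x => hg0 _ (norm_nonneg _)

lemma beta_prob (β : ℝ) (hβ : 0 ≤ β) : IsProbabilityMeasure (betaMeasure β) := by
  constructor
  have := beta_tail β 0 hβ le_rfl zero_le_one
  simpa using this

lemma beta_ac (β : ℝ) : betaMeasure β ≪ volume := withDensity_absolutelyContinuous _ _

lemma beta_supp (β : ℝ) : ∀ᵐ x ∂betaMeasure β, ‖x‖ ≤ 1 := by
  rw [betaMeasure, ae_withDensity_iff (beta_dens_meas β).ennreal_ofReal]
  refine Filter.Eventually.of_forall fun x hx => ?_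
  by_contra h
  simp [h] at hx

lemma beta_ne_zero (β : ℝ) : betaMeasure β {0} = 0 := beta_ac β (by simp)

lemma beta_mp (β : ℝ) (e : E2 ≃ₗᵢ[ℝ] E2) : MeasurePreserving e (betaMeasure β) (betaMeasure β) := by
  refine ⟨e.continuous.measurable, ?_⟩
  ext s hs
  rw [Measure.map_apply e.continuous.measurable hs, betaMeasure, withDensity_apply _ (e.continuous.measurable hs),
    withDensity_apply _ hs, ← e.measurePreserving.setLIntegral_comp_preimage hs (beta_dens_meas β).ennreal_ofReal]
  simp

lemma beta_inj (β : ℝ) (hβ : 0 ≤ β) (n : ℕ) : ∀ᵐ ω ∂betaPi β n, Function.Injective ω := by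
  have := beta_prob β hβ
  have : ∀ i j : Fin n, i ≠ j → ∀ᵐ ω ∂betaPi β n, ω i ≠ ω j := by
    intro i j hij
    have h1 := ProbabilityTheory.iIndepFun_pi (μ := fun _ : Fin n => betaMeasure β) (X := fun _ x => x) (fun _ => aemeasurable_id')
    have h2 := (ProbabilityTheory.indepFun_iff_map_prod_eq_prod_map_map (measurable_pi_apply i).aemeasurable (measurable_pi_apply j).aemeasurable).1 (h1.indepFun hij)
    have e : ∀ k : Fin n, (Measure.pi fun _ : Fin n => betaMeasure β).map (fun ω => ω k) = betaMeasure β :=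
      fun k => (measurePreserving_eval (fun _ : Fin n => betaMeasure β) k).map_eq
    rw [e, e] at h2
    have hms : MeasurableSet {p : E2 × E2 | p.1 = p.2} := measurableSet_eq_fun measurable_fst measurable_snd
    have h3 : ((betaMeasure β).prod (betaMeasure β)) {p : E2 × E2 | p.1 = p.2} = 0 := by
      rw [Measure.measure_prod_null hms]
      refine Filter.Eventually.of_forall fun x => ?_
      refine beta_ac β ?_
      have : (Prod.mk x ⁻¹' {p : E2 × E2 | p.1 = p.2}) = {x} := by ext y; simp [eq_comm]
      rw [this]; simp
    rw [← h2, Measure.map_apply (by fun_prop) hms] at h3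
    rw [ae_iff]
    simp only [not_not]
    exact h3
  have h' : ∀ᵐ ω ∂betaPi β n, ∀ i j : Fin n, i ≠ j → ω i ≠ ω j := by
    rw [ae_all_iff]; intro i
    rw [ae_all_iff]; intro j
    by_cases h : i = j
    · simp [h]
    · filter_upwards [this i j h] with ω hω _ using hω
  filter_upwards [h'] with ω hω i j hij
  by_contra hne
  exact hω i j hne hij

lemma pi_ae {E : Type*} [MeasurableSpace E] (μ : Measure E) [IsProbabilityMeasure μ] (n : ℕ) (p : E → Prop)
    (h : ∀ᵐ x ∂μ, p x) :
    ∀ᵐ ω ∂(Measure.pi fun _ : Fin n => μ), ∀ i, p (ω i) := by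
  rw [ae_all_iff]; intro i
  exact (measurePreserving_eval (fun _ : Fin n => μ) i).quasiMeasurePreserving.ae h

noncomputable def pt (ρ θ : ℝ) : E2 := !₂[ρ * Real.cos θ, ρ * Real.sin θ]
noncomputable def ip (φ : ℝ) (y : E2) : ℝ := Real.cos φ * y 0 + Real.sin φ * y 1
noncomputable def ang (x : E2) : ℝ := Complex.arg ⟨x 0, x 1⟩

lemma norm_sq2 (x : E2) : ‖x‖ ^ 2 = x 0 ^ 2 + x 1 ^ 2 := by
  rw [EuclideanSpace.norm_sq_eq]; simp [Fin.sum_univ_two]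

lemma norm_eq2 (x : E2) : ‖x‖ = ‖(⟨x 0, x 1⟩ : ℂ)‖ := by
  rw [← sq_eq_sq₀ (norm_nonneg _) (norm_nonneg _), norm_sq2, ← Complex.normSq_eq_norm_sq]
  simp [Complex.normSq_apply]; ring

lemma pt_ang (x : E2) : pt ‖x‖ (ang x) = x := by
  rw [norm_eq2]
  ext i
  fin_cases i
  · simp [pt, ang, Complex.norm_mul_cos_arg]
  · simp [pt, ang, Complex.norm_mul_sin_arg]

lemma norm_pt (ρ θ : ℝ) (h : 0 ≤ ρ) : ‖pt ρ θ‖ = ρ := by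
  rw [← sq_eq_sq₀ (norm_nonneg _) h, norm_sq2]
  simp only [pt, PiLp.toLp_apply, Matrix.cons_val_zero, Matrix.cons_val_one]
  nlinarith [Real.sin_sq_add_cos_sq θ]

lemma ip_pt (φ ρ θ : ℝ) : ip φ (pt ρ θ) = ρ * Real.cos (φ - θ) := by
  rw [Real.cos_sub]
  simp only [ip, pt, PiLp.toLp_apply, Matrix.cons_val_zero, Matrix.cons_val_one]
  ring

lemma pt_add_int (ρ θ : ℝ) (k : ℤ) : pt ρ (θ + k * (2 * Real.pi)) = pt ρ θ := by
  simp [pt]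

lemma ip_add_int (φ : ℝ) (x : E2) (k : ℤ) : ip (φ + k * (2 * Real.pi)) x = ip φ x := by
  simp [ip]

lemma ip_le_norm (φ : ℝ) (x : E2) : ip φ x ≤ ‖x‖ := by
  rw [← pt_ang x, ip_pt, norm_pt _ _ (norm_nonneg _)]
  exact mul_le_of_le_one_right (norm_nonneg _) (Real.cos_le_one _)

lemma ip_cont (φ : ℝ) : Continuous (ip φ) := by unfold ip; fun_prop

/-- polar angle close to a given direction -/
lemma pt_near (x : E2) (φ : ℝ) : ∃ θ, x = pt ‖x‖ θ ∧ |φ - θ| ≤ Real.pi := by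
  have hpi := Real.pi_pos
  set k := round ((φ - ang x) / (2 * Real.pi))
  refine ⟨ang x + k * (2 * Real.pi), by rw [pt_add_int, pt_ang], ?_⟩
  have h := abs_sub_round ((φ - ang x) / (2 * Real.pi))
  have e : φ - (ang x + k * (2 * Real.pi)) = ((φ - ang x) / (2 * Real.pi) - k) * (2 * Real.pi) := by
    field_simp; ring
  rw [e, abs_mul, abs_of_pos (by positivity : 0 < 2 * Real.pi)]
  nlinarith

noncomputable def idx (m : ℕ) (x : E2) : ZMod m := ((⌊m * ang x / (2 * Real.pi)⌋ : ℤ) : ZMod m)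

lemma ang_meas : Measurable ang := by
  unfold ang
  refine Complex.measurable_arg.comp ?_
  have : (fun x : E2 => (⟨x 0, x 1⟩ : ℂ)) = fun x : E2 => ((x 0 : ℝ) : ℂ) + ((x 1 : ℝ) : ℂ) * Complex.I := by
    ext x; apply Complex.ext <;> simp
  rw [this]; fun_prop

lemma idx_meas (m : ℕ) (c : ZMod m) : MeasurableSet {x | idx m x = c} := by
  have : Measurable fun x : E2 => ⌊m * ang x / (2 * Real.pi)⌋ :=
    Int.measurable_floor.comp ((measurable_const.mul ang_meas).div_const _)
  exact this (DiscreteMeasurableSpace.forall_measurableSet {k : ℤ | (k : ZMod m) = c})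

lemma ang_pt (ρ θ : ℝ) (h : 0 < ρ) : ∃ k : ℤ, θ = ang (pt ρ θ) + k * (2 * Real.pi) := by
  have h1 : (⟨(pt ρ θ) 0, (pt ρ θ) 1⟩ : ℂ) = ρ * Complex.exp (θ * Complex.I) := by
    rw [Complex.exp_mul_I]
    apply Complex.ext <;> simp [pt, ← Complex.ofReal_cos, ← Complex.ofReal_sin]
  have h2 : ang (pt ρ θ) = toIocMod Real.two_pi_pos (-Real.pi) θ := by
    rw [ang, h1, Complex.exp_mul_I, Complex.arg_mul_cos_add_sin_mul_I_eq_toIocMod h]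
  refine ⟨toIocDiv Real.two_pi_pos (-Real.pi) θ, ?_⟩
  rw [h2]
  have := toIocMod_add_toIocDiv_zsmul Real.two_pi_pos (-Real.pi) θ
  rw [zsmul_eq_mul] at this
  exact this.symm

lemma idx_pt (m : ℕ) (ρ θ : ℝ) (h : 0 < ρ) : idx m (pt ρ θ) = ((⌊m * θ / (2 * Real.pi)⌋ : ℤ) : ZMod m) := by
  obtain ⟨k, hk⟩ := ang_pt ρ θ h
  have hpi := Real.pi_pos
  have : (m:ℝ) * θ / (2 * Real.pi) = m * ang (pt ρ θ) / (2 * Real.pi) + ((m * k : ℤ) : ℝ) := by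
    nth_rw 1 [hk]; push_cast; field_simp
  rw [this, Int.floor_add_intCast]
  simp [idx]

lemma idx_rep (m : ℕ) (hm : 0 < m) (x : E2) (k : ℤ) (h : idx m x = (k : ZMod m)) :
    ∃ θ, x = pt ‖x‖ θ ∧ k * (2 * Real.pi / m) ≤ θ ∧ θ < (k + 1) * (2 * Real.pi / m) := by
  have hpi := Real.pi_pos
  have hm' : (0:ℝ) < m := by exact_mod_cast hm
  rw [idx, ZMod.intCast_eq_intCast_iff_dvd_sub] at h
  obtain ⟨j, hj⟩ := h
  refine ⟨ang x + j * (2 * Real.pi), by rw [pt_add_int, pt_ang], ?_⟩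
  have h1 := Int.floor_le (m * ang x / (2 * Real.pi))
  have h2 := Int.lt_floor_add_one (m * ang x / (2 * Real.pi))
  have hk : (k : ℝ) = ⌊m * ang x / (2 * Real.pi)⌋ + m * j := by
    have : k = ⌊m * ang x / (2 * Real.pi)⌋ + m * j := by linarith
    exact_mod_cast this
  have e : ang x + j * (2 * Real.pi) = (m * ang x / (2 * Real.pi) + m * j) * (2 * Real.pi / m) := by
    field_simp
  rw [e]
  have hw : 0 < 2 * Real.pi / m := by positivity
  exact ⟨mul_le_mul_of_nonneg_right (by linarith) hw.le, mul_lt_mul_of_pos_right (by linarith) hw⟩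

lemma idx_of_mem (m : ℕ) (hm : 0 < m) (ρ θ : ℝ) (h : 0 < ρ) (k : ℤ)
    (h1 : k * (2 * Real.pi / m) ≤ θ) (h2 : θ < (k + 1) * (2 * Real.pi / m)) :
    idx m (pt ρ θ) = (k : ZMod m) := by
  have hpi := Real.pi_pos
  have hm' : (0:ℝ) < m := by exact_mod_cast hm
  rw [idx_pt m ρ θ h]
  congr 1
  rw [Int.floor_eq_iff]
  rw [le_div_iff₀ (by positivity), div_lt_iff₀ (by positivity)]
  rw [← mul_div_assoc, div_le_iff₀ hm'] at h1
  rw [← mul_div_assoc, lt_div_iff₀ hm'] at h2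
  constructor <;> linarith

/-- rotation -/
noncomputable def rotI (α : ℝ) : E2 →ₗᵢ[ℝ] E2 where
  toFun x := !₂[Real.cos α * x 0 - Real.sin α * x 1, Real.sin α * x 0 + Real.cos α * x 1]
  map_add' x y := by ext i; fin_cases i <;> simp <;> ring
  map_smul' c x := by ext i; fin_cases i <;> simp <;> ring
  norm_map' x := by
    rw [← sq_eq_sq₀ (norm_nonneg _) (norm_nonneg _), norm_sq2, norm_sq2]
    simp only [LinearMap.coe_mk, AddHom.coe_mk, PiLp.toLp_apply, Matrix.cons_val_zero, Matrix.cons_val_one]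
    linear_combination (x 0 ^ 2 + x 1 ^ 2) * Real.sin_sq_add_cos_sq α

noncomputable def rflI (α : ℝ) : E2 →ₗᵢ[ℝ] E2 where
  toFun x := !₂[Real.cos α * x 0 + Real.sin α * x 1, Real.sin α * x 0 - Real.cos α * x 1]
  map_add' x y := by ext i; fin_cases i <;> simp <;> ring
  map_smul' c x := by ext i; fin_cases i <;> simp <;> ring
  norm_map' x := by
    rw [← sq_eq_sq₀ (norm_nonneg _) (norm_nonneg _), norm_sq2, norm_sq2]
    simp only [LinearMap.coe_mk, AddHom.coe_mk, PiLp.toLp_apply, Matrix.cons_val_zero, Matrix.cons_val_one]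
    linear_combination (x 0 ^ 2 + x 1 ^ 2) * Real.sin_sq_add_cos_sq α

noncomputable def rot (α : ℝ) : E2 ≃ₗᵢ[ℝ] E2 := (rotI α).toLinearIsometryEquiv rfl
noncomputable def rfl2 (α : ℝ) : E2 ≃ₗᵢ[ℝ] E2 := (rflI α).toLinearIsometryEquiv rfl

lemma rot_pt (α ρ θ : ℝ) : rot α (pt ρ θ) = pt ρ (θ + α) := by
  change rotI α (pt ρ θ) = _
  ext i; fin_cases i <;> simp [rotI, pt, Real.cos_add, Real.sin_add] <;> ring

lemma rfl2_pt (α ρ θ : ℝ) : rfl2 α (pt ρ θ) = pt ρ (α - θ) := by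
  change rflI α (pt ρ θ) = _
  ext i; fin_cases i <;> simp [rflI, pt, Real.cos_sub, Real.sin_sub] <;> ring

lemma rfl2_rfl2 (α : ℝ) (x : E2) : rfl2 α (rfl2 α x) = x := by
  rw [← pt_ang x, rfl2_pt, rfl2_pt, sub_sub_cancel]

/-- cell ∩ annulus `r1 ≤ ‖x‖ < r2` -/
def cellA (m : ℕ) (c : ZMod m) (r : ℝ) : Set E2 := {x | idx m x = c ∧ r ≤ ‖x‖}

lemma cellA_meas (m : ℕ) (c : ZMod m) (r : ℝ) : MeasurableSet (cellA m c r) :=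
  (idx_meas m c).inter (measurableSet_le measurable_const measurable_norm)

lemma cellA_measure_eq (β : ℝ) (m : ℕ) (hm : 0 < m) (c : ZMod m) (r : ℝ) (hr : 0 < r) :
    betaMeasure β (cellA m c r) = betaMeasure β (cellA m 0 r) := by
  have hpi := Real.pi_pos
  have hm' : (0:ℝ) < m := by exact_mod_cast hm
  obtain ⟨k, rfl⟩ := ZMod.intCast_surjective c
  rw [← (beta_mp β (rot (k * (2 * Real.pi / m)))).measure_preimage (cellA_meas _ _ _).nullMeasurableSet]
  congr 1
  ext x
  simp only [cellA, Set.mem_preimage, Set.mem_ofPred_eq, LinearIsometryEquiv.norm_map]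
  refine and_congr_left fun hx => ?_
  have hx0 : 0 < ‖x‖ := hr.trans_le hx
  rw [← pt_ang x, rot_pt, idx_pt _ _ _ hx0, idx_pt _ _ _ hx0]
  have : (m:ℝ) * (ang x + k * (2 * Real.pi / m)) / (2 * Real.pi) = m * ang x / (2 * Real.pi) + (k : ℝ) := by
    field_simp
  rw [this, Int.floor_add_intCast]
  simp

lemma cellA_measure (β : ℝ) (hβ : 0 ≤ β) (m : ℕ) (hm : 0 < m) (c : ZMod m) (r : ℝ) (hr : 0 < r) (hr1 : r ≤ 1) :
    (betaMeasure β).real (cellA m c r) = (1 - r ^ 2) ^ (β + 1) / m := by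
  have := beta_prob β hβ
  have : NeZero m := ⟨hm.ne'⟩
  have hm' : (0:ℝ) < m := by exact_mod_cast hm
  have hu : {x : E2 | r ≤ ‖x‖} = ⋃ c ∈ (Finset.univ : Finset (ZMod m)), cellA m c r := by
    ext x; simp [cellA]
  have h1 : (betaMeasure β).real {x : E2 | r ≤ ‖x‖} = (1 - r ^ 2) ^ (β + 1) := by
    rw [Measure.real, beta_tail β r hβ hr.le hr1, ENNReal.toReal_ofReal]
    exact Real.rpow_nonneg (by nlinarith) _
  rw [hu, measureReal_biUnion_finset] at h1
  · have h2 : ∀ c' : ZMod m, (betaMeasure β).real (cellA m c' r) = (betaMeasure β).real (cellA m c r) := by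
      intro c'
      rw [Measure.real, Measure.real, cellA_measure_eq β m hm c' r hr, cellA_measure_eq β m hm c r hr]
    simp only [h2, Finset.sum_const, Finset.card_univ, ZMod.card, nsmul_eq_mul] at h1
    rw [← h1]; field_simp
  · intro a _ b _ hab
    refine Set.disjoint_left.2 fun x hx hx' => hab (hx.1.symm.trans hx'.1)
  · intro b _; exact cellA_meas m b r

lemma tail_pow (β : ℝ) (q : ℕ) (hq : 2 * β + 3 = q) (hβ : 0 ≤ β) (x : ℝ) (hx : 0 ≤ x) :
    (x ^ 2) ^ (β + 1) = x ^ (q - 1) := by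
  have h1 : 1 ≤ q := by
    have : (1:ℝ) ≤ q := by linarith
    exact_mod_cast this
  rw [← Real.rpow_natCast x 2, ← Real.rpow_mul hx, ← Real.rpow_natCast, Nat.cast_sub h1]
  congr 1; push_cast; linarith

def LSep {n : ℕ} (D : Set E2) (ω : Fin n → E2) (i : Fin n) : Prop :=
  ∃ φ, ∀ k, k ≠ i → ω k ∈ D → ip φ (ω k) < ip φ (ω i)

open Classical in
noncomputable def Vc {n : ℕ} (ω : Fin n → E2) : ℝ :=
  ((Finset.univ.filter fun i => LSep Set.univ ω i).card : ℝ)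

lemma ip_meas (φ : ℝ) : Measurable (ip φ) := (ip_cont φ).measurable

open Classical in
lemma LSep_meas {n : ℕ} (D : Set E2) (hD : MeasurableSet D) (i : Fin n) :
    MeasurableSet {ω : Fin n → E2 | LSep D ω i} := by
  have e : {ω : Fin n → E2 | LSep D ω i} = ⋃ T : Finset (Fin n), (⋂ k, {ω : Fin n → E2 | ω k ∈ D ↔ k ∈ T}) ∩
      {ω : Fin n → E2 | ∃ φ, ∀ k ∈ T, k ≠ i → ip φ (ω k) < ip φ (ω i)} := by
    ext ω
    simp only [Set.mem_ofPred_eq, Set.mem_iUnion, Set.mem_inter_iff, Set.mem_iInter]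
    constructor
    · rintro ⟨φ, h⟩
      refine ⟨Finset.univ.filter fun k => ω k ∈ D, by simp, φ, ?_⟩
      intro k hk hki
      exact h k hki (by simpa using hk)
    · rintro ⟨T, h1, φ, h2⟩
      exact ⟨φ, fun k hki hkD => h2 k ((h1 k).1 hkD) hki⟩
  rw [e]
  refine MeasurableSet.iUnion fun T => (MeasurableSet.iInter fun k => ?_).inter ?_
  · by_cases h : k ∈ T
    · simp only [h, iff_true]; exact (measurable_pi_apply k) hD
    · simp only [h, iff_false]; exact ((measurable_pi_apply (X := fun _ : Fin n => E2) k) hD).compl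
  · apply IsOpen.measurableSet
    have : {ω : Fin n → E2 | ∃ φ, ∀ k ∈ T, k ≠ i → ip φ (ω k) < ip φ (ω i)} =
        ⋃ φ : ℝ, ⋂ k ∈ T.filter (fun k => k ≠ i), {ω | ip φ (ω k) < ip φ (ω i)} := by
      ext ω; simp
    rw [this]
    refine isOpen_iUnion fun φ => isOpen_biInter_finset fun k _ => ?_
    exact isOpen_lt ((ip_cont φ).comp (continuous_apply k)) ((ip_cont φ).comp (continuous_apply i))

lemma card_filter_meas {n : ℕ} (p : Fin n → (Fin n → E2) → Prop) [∀ ω, DecidablePred fun i => p i ω]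
    (hp : ∀ i, MeasurableSet {ω | p i ω}) :
    Measurable fun ω => ((Finset.univ.filter fun i => p i ω).card : ℝ) := by
  classical
  have : (fun ω => ((Finset.univ.filter fun i => p i ω).card : ℝ)) = fun ω => ∑ i, {ω | p i ω}.indicator (fun _ => (1:ℝ)) ω := by
    ext ω
    rw [Finset.card_filter]
    push_cast
    refine Finset.sum_congr rfl fun i _ => ?_
    simp [Set.indicator]
  rw [this]
  exact Finset.measurable_fun_sum _ fun i _ => measurable_const.indicator (hp i)

lemma Vc_meas (n : ℕ) : Measurable (Vc : (Fin n → E2) → ℝ) := by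
  classical
  exact card_filter_meas _ (fun i => LSep_meas _ MeasurableSet.univ i)

lemma Vc_nonneg {n : ℕ} (ω : Fin n → E2) : 0 ≤ Vc ω := by unfold Vc; positivity

lemma Vc_le {n : ℕ} (ω : Fin n → E2) : Vc ω ≤ n := by
  classical
  unfold Vc
  have := Finset.card_filter_le (Finset.univ : Finset (Fin n)) (fun i => LSep Set.univ ω i)
  rw [Finset.card_univ, Fintype.card_fin] at this
  exact_mod_cast this

lemma exists_dir (f : StrongDual ℝ E2) : ∃ (φ R : ℝ), 0 ≤ R ∧ ∀ y, f y = R * ip φ y := by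
  set v : E2 := !₂[f (EuclideanSpace.single 0 1), f (EuclideanSpace.single 1 1)] with hv
  refine ⟨ang v, ‖v‖, norm_nonneg _, fun y => ?_⟩
  have e : ‖v‖ * ip (ang v) y = (pt ‖v‖ (ang v)) 0 * y 0 + (pt ‖v‖ (ang v)) 1 * y 1 := by
    simp [ip, pt]; ring
  rw [e, pt_ang]
  have : y = y 0 • EuclideanSpace.single 0 (1:ℝ) + y 1 • EuclideanSpace.single 1 (1:ℝ) := by
    ext i; fin_cases i <;> simp
  nth_rw 1 [this]
  rw [map_add, map_smul, map_smul]
  simp [hv]; ring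

lemma vert_iff {n : ℕ} (ω : Fin n → E2) (hω : Function.Injective ω) (i : Fin n) :
    ω i ∈ Set.extremePoints ℝ (convexHull ℝ (Set.range ω)) ↔ LSep Set.univ ω i := by
  rw [(convex_convexHull ℝ _).mem_extremePoints_iff_mem_sdiff_convexHull_sdiff]
  constructor
  · rintro ⟨_, h2⟩
    set t : Set E2 := ω '' {k | k ≠ i}
    have hx : ω i ∉ convexHull ℝ t := by
      refine fun h => h2 (convexHull_mono ?_ h)
      rintro _ ⟨k, hk, rfl⟩
      exact ⟨subset_convexHull ℝ _ ⟨k, rfl⟩, fun h => hk (hω h)⟩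
    have hcl : IsClosed (convexHull ℝ t) := (Set.toFinite t).isClosed_convexHull (𝕜 := ℝ)
    obtain ⟨f, u, h3, h4⟩ := geometric_hahn_banach_closed_point (convex_convexHull ℝ t) hcl hx
    obtain ⟨φ, R, hR, hf⟩ := exists_dir f
    refine ⟨φ, fun k hk _ => ?_⟩
    have := h3 (ω k) (subset_convexHull ℝ _ ⟨k, hk, rfl⟩)
    rw [hf] at this h4
    by_contra hcon
    push Not at hcon
    have := mul_le_mul_of_nonneg_left hcon hR
    linarith
  · rintro ⟨φ, h⟩
    refine ⟨subset_convexHull ℝ _ ⟨i, rfl⟩, fun hmem => ?_⟩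
    have hlin : ∀ (a b : ℝ) (y z : E2), ip φ (a • y + b • z) = a * ip φ y + b * ip φ z := by
      intro a b y z; simp [ip]; ring
    have hH : Convex ℝ ({y | ip φ y < ip φ (ω i)} ∪ {ω i}) := by
      intro y hy z hz a b ha hb hab
      by_cases ha0 : a = 0
      · have : b = 1 := by linarith
        subst this; simpa [ha0] using hz
      by_cases hb0 : b = 0
      · have : a = 1 := by linarith
        subst this; simpa [hb0] using hy
      have ha' := ha.lt_of_ne' ha0
      have hb' := hb.lt_of_ne' hb0
      have hb1 : b = 1 - a := by linarith
      rcases hy with hy | hy <;> rcases hz with hz | hz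
      · left
        simp only [Set.mem_ofPred_eq, hlin] at *
        subst hb1; nlinarith
      · left
        simp only [Set.mem_ofPred_eq, hlin, Set.mem_singleton_iff] at *
        subst hb1 hz; nlinarith
      · left
        simp only [Set.mem_ofPred_eq, hlin, Set.mem_singleton_iff] at *
        subst hb1 hy; nlinarith
      · right
        simp only [Set.mem_singleton_iff] at *
        rw [hy, hz, ← add_smul, hab, one_smul]
    have hsub : convexHull ℝ (Set.range ω) ⊆ {y | ip φ y < ip φ (ω i)} ∪ {ω i} := by
      refine convexHull_min ?_ hH
      rintro _ ⟨k, rfl⟩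
      by_cases hk : k = i
      · right; simp [hk]
      · left; exact h k hk trivial
    have hconv : Convex ℝ {y | ip φ y < ip φ (ω i)} := by
      intro y hy z hz a b ha hb hab
      simp only [Set.mem_ofPred_eq, hlin] at *
      by_cases ha0 : a = 0
      · have : b = 1 := by linarith
        subst this; simpa [ha0] using hz
      have ha' := ha.lt_of_ne' ha0
      have hb1 : b = 1 - a := by linarith
      subst hb1; nlinarith
    have := convexHull_min (s := convexHull ℝ (Set.range ω) \ {ω i}) ?_ hconv hmem
    · exact lt_irrefl (ip φ (ω i)) this
    · rintro y ⟨hy, hy'⟩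
      exact (hsub hy).resolve_right hy'

lemma vertCount_eq {n : ℕ} (ω : Fin n → E2) (hω : Function.Injective ω) : vertCount ω = Vc ω := by
  classical
  have : Set.extremePoints ℝ (convexHull ℝ (Set.range ω)) = ω '' {i | LSep Set.univ ω i} := by
    ext x
    constructor
    · intro hx
      obtain ⟨i, rfl⟩ := extremePoints_convexHull_subset hx
      exact ⟨i, (vert_iff ω hω i).1 hx, rfl⟩
    · rintro ⟨i, hi, rfl⟩
      exact (vert_iff ω hω i).2 hi
  rw [vertCount, Vc, this, Nat.card_image_of_injective hω, Nat.card_eq_fintype_card, Fintype.card_subtype]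
  rfl

lemma vertCount_ae (β : ℝ) (hβ : 0 ≤ β) (n : ℕ) : ∀ᵐ ω ∂betaPi β n, vertCount ω = Vc ω := by
  filter_upwards [beta_inj β hβ n] with ω h using vertCount_eq ω h

lemma core_geo (w a r : ℝ) (hw : 0 < w) (hw1 : w ≤ 1 / 1000) (ha : 0 ≤ a) (ha1 : a ≤ Real.pi)
    (hr : 1 - 400 * w ^ 2 ≤ r) (hr1 : r ≤ 1) (h : r * Real.cos a < 1 - 400 * w ^ 2) :
    (∀ u ρ, 8 * w ≤ u → u ≤ 10 * w → 1 - 50 * w ^ 2 ≤ ρ → ρ ≤ 1 → r * Real.cos a ≤ ρ * Real.cos (a - u)) ∨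
    (∀ u ρ, 48 * w ≤ u → u ≤ 50 * w → 1 - 50 * w ^ 2 ≤ ρ → ρ ≤ 1 → r * Real.cos a ≤ ρ * Real.cos (a - u)) := by
  have hpi := Real.pi_pos
  have hpi1 := Real.pi_lt_d2
  have hpi3 := Real.pi_gt_three
  have hw2 : w ^ 2 ≤ 1 / 1000000 := by
    have := pow_le_pow_left₀ hw.le hw1 2
    norm_num at this ⊢; exact this
  have hid : ∀ u ρ, ρ * Real.cos (a - u) - r * Real.cos a
      = Real.cos a * (ρ * Real.cos u - r) + ρ * (Real.sin a * Real.sin u) := by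
    intro u ρ; rw [Real.cos_sub]; ring
  have hsa : 0 ≤ Real.sin a := Real.sin_nonneg_of_nonneg_of_le_pi ha ha1
  by_cases hc : 0 < Real.cos a
  · left
    intro u ρ hu1 hu2 hρ hρ1
    have hu0 : 0 ≤ u := by linarith
    have hup : u ≤ 1 / 100 := by linarith
    by_cases ha24 : a ≤ 24 * w
    · have h1 := Real.one_sub_sq_div_two_le_cos (x := a - u)
      have h2 : (a - u) ^ 2 ≤ (24 * w) ^ 2 := by
        apply sq_le_sq'
        · linarith
        · linarith
      have h3 : (1 - 50 * w ^ 2) * (1 - 288 * w ^ 2) ≤ ρ * Real.cos (a - u) := by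
        apply mul_le_mul hρ (by linarith) (by linarith) (by linarith)
      nlinarith only [h3, h, sq_nonneg (w^2), sq_nonneg w]
    · push Not at ha24
      have ha2 : a ≤ Real.pi / 2 := by
        by_contra hcon
        push Not at hcon
        have := Real.cos_nonpos_of_pi_div_two_le_of_le hcon.le (by linarith)
        linarith
      have h1 : 15 * w ≤ Real.sin a := by
        have := Real.mul_le_sin ha ha2
        have h5 : 2 / Real.pi * a ≥ 2 / Real.pi * (24 * w) := by gcongr
        have h6 : 15 * w ≤ 2 / Real.pi * (24 * w) := by
          rw [div_mul_eq_mul_div, le_div_iff₀ hpi]; nlinarith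
        linarith
      have h2 : 7 * w ≤ Real.sin u := by
        have h3 := Real.sin_gt_sub_cube (x := u) (by linarith)
        have : u ^ 3 / 6 ≤ u / 8 := by nlinarith [mul_nonneg hu0 hu0]
        linarith
      have h3 : 105 * w ^ 2 ≤ Real.sin a * Real.sin u := by
        have := mul_le_mul h1 h2 (by linarith) hsa
        linarith
      have h4 : 104 * w ^ 2 ≤ ρ * (Real.sin a * Real.sin u) := by
        have : (1 - 50 * w ^ 2) * (105 * w ^ 2) ≤ ρ * (Real.sin a * Real.sin u) :=
          mul_le_mul hρ h3 (by positivity) (by linarith)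
        have h9 := mul_le_mul_of_nonneg_left hw2 (sq_nonneg w)
        nlinarith only [h9, this, sq_nonneg w]
      have h5 : - (100 * w ^ 2) ≤ ρ * Real.cos u - r := by
        have h6 := Real.one_sub_sq_div_two_le_cos (x := u)
        have h7 : u ^ 2 ≤ (10 * w) ^ 2 := by gcongr
        have : (1 - 50 * w ^ 2) * (1 - 50 * w ^ 2) ≤ ρ * Real.cos u :=
          mul_le_mul hρ (by linarith) (by linarith) (by linarith)
        nlinarith only [this, sq_nonneg (w^2), hr1]
      have h6 : - (100 * w ^ 2) ≤ Real.cos a * (ρ * Real.cos u - r) := by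
        have := mul_le_mul_of_nonneg_left h5 hc.le
        have h8 := mul_le_mul_of_nonneg_right (Real.cos_le_one a) (sq_nonneg w)
        linarith
      have := hid u ρ
      linarith [sq_nonneg w]
  · right
    push Not at hc
    intro u ρ hu1 hu2 hρ hρ1
    have hu0 : 0 ≤ u := by linarith
    have hup : u ≤ 1 / 10 := by linarith
    have hρ0 : 0 ≤ ρ := by linarith
    have h1 := Real.cos_le_one_sub_mul_cos_sq (x := u) (by rw [abs_of_nonneg hu0]; linarith)
    have h2 : ρ * Real.cos u ≤ r := by
      have h3 : (48 * w) ^ 2 ≤ u ^ 2 := by gcongr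
      have h4 : 2 / Real.pi ^ 2 * (48 * w) ^ 2 ≤ 2 / Real.pi ^ 2 * u ^ 2 := by gcongr
      have h5 : 400 * w ^ 2 ≤ 2 / Real.pi ^ 2 * (48 * w) ^ 2 := by
        rw [div_mul_eq_mul_div, le_div_iff₀ (by positivity)]
        have : Real.pi ^ 2 ≤ 10 := by nlinarith
        have := mul_le_mul_of_nonneg_left this (sq_nonneg w)
        linarith
      have : ρ * Real.cos u ≤ 1 * Real.cos u :=
        mul_le_mul_of_nonneg_right hρ1 (Real.cos_nonneg_of_neg_pi_div_two_le_of_le (by linarith) (by linarith))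
      linarith
    have h3 : 0 ≤ Real.cos a * (ρ * Real.cos u - r) := mul_nonneg_of_nonpos_of_nonpos hc (by linarith)
    have h4 : 0 ≤ Real.sin u := Real.sin_nonneg_of_nonneg_of_le_pi hu0 (by linarith)
    have := hid u ρ
    have : 0 ≤ ρ * (Real.sin a * Real.sin u) := by positivity
    linarith

/-- cyclic neighbourhood of cell `c` inside the annulus -/
def Dset (K : ℕ) (L : ℤ) (c : ZMod K) : Set E2 :=
  {x | (∃ j : ℤ, |j| ≤ L ∧ idx K x = c + j) ∧ 1 - 400 * (2 * Real.pi / K) ^ 2 ≤ ‖x‖}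

def Good {n : ℕ} (K : ℕ) (ω : Fin n → E2) : Prop :=
  (∀ i, ‖ω i‖ ≤ 1) ∧ ∀ c : ZMod K, ∃ k, ω k ∈ cellA K c (1 - 50 * (2 * Real.pi / K) ^ 2)

lemma good_ann {n : ℕ} (K : ℕ) (hK0 : 0 < K) (hK : 2 * Real.pi / K ≤ 1 / 1000) (ω : Fin n → E2) (hg : Good K ω) (i : Fin n)
    (h : LSep Set.univ ω i) : 1 - 400 * (2 * Real.pi / K) ^ 2 ≤ ‖ω i‖ := by
  have hpi := Real.pi_pos
  have hK' : (0:ℝ) < K := by exact_mod_cast hK0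
  set w := 2 * Real.pi / K with hw
  have hw0 : 0 < w := by positivity
  have hw2 : w ^ 2 ≤ 1 / 1000000 := by
    have := pow_le_pow_left₀ hw0.le hK 2
    norm_num at this ⊢; exact this
  obtain ⟨φ, hφ⟩ := h
  obtain ⟨k, hk1, hk2⟩ := hg.2 ((⌊φ / w⌋ : ℤ) : ZMod K)
  by_cases hki : k = i
  · subst hki; linarith [sq_nonneg w]
  · have h1 := hφ k hki trivial
    obtain ⟨θ, ht, ht1, ht2⟩ := idx_rep K hK0 (ω k) _ hk1
    rw [← hw] at ht1 ht2 hk2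
    have f1 := (le_div_iff₀ hw0).1 (Int.floor_le (φ / w))
    have f2 := (div_lt_iff₀ hw0).1 (Int.lt_floor_add_one (φ / w))
    have h2 : 1 - 51 * w ^ 2 ≤ ip φ (ω k) := by
      rw [ht, ip_pt]
      have h3 := Real.one_sub_sq_div_two_le_cos (x := φ - θ)
      have h4 : (φ - θ) ^ 2 ≤ w ^ 2 := by apply sq_le_sq' <;> linarith
      have : (1 - 50 * w ^ 2) * (1 - w ^ 2 / 2) ≤ ‖ω k‖ * Real.cos (φ - θ) :=
        mul_le_mul hk2 (by linarith) (by linarith) (norm_nonneg _)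
      nlinarith
    have h3 := ip_le_norm φ (ω i)
    linarith [sq_nonneg w]

lemma idx_ne {K : ℕ} (hK : 100 < K) (c : ZMod K) (j : ℤ) (hj0 : j ≠ 0) (hj : |j| ≤ 100) : c + (j : ZMod K) ≠ c := by
  intro h
  rw [add_eq_left, ZMod.intCast_zmod_eq_zero_iff_dvd] at h
  have := Int.le_of_dvd (abs_pos.2 hj0) ((dvd_abs _ _).2 h)
  omega

lemma good_loc {n : ℕ} (K : ℕ) (hK0 : 100 < K) (hK : 2 * Real.pi / K ≤ 1 / 1000) (ω : Fin n → E2) (hg : Good K ω) (i : Fin n)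
    (c : ZMod K) (hi : ω i ∈ cellA K c (1 - 400 * (2 * Real.pi / K) ^ 2))
    (h : LSep (Dset K 100 c) ω i) : LSep Set.univ ω i := by
  have hpi := Real.pi_pos
  have hpi1 := Real.pi_lt_d2
  have hpi3 := Real.pi_gt_three
  have hKp : 0 < K := by omega
  have hK' : (0:ℝ) < K := by exact_mod_cast hKp
  obtain ⟨cz, rfl⟩ := ZMod.intCast_surjective c
  obtain ⟨θ, ht, ht1, ht2⟩ := idx_rep K hKp (ω i) cz hi.1
  have hDset : ∀ y, (∃ j : ℤ, |j| ≤ 100 ∧ idx K y = (cz : ZMod K) + j) → 1 - 400 * (2 * Real.pi / K) ^ 2 ≤ ‖y‖ → y ∈ Dset K 100 (cz : ZMod K) :=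
    fun y h1 h2 => ⟨h1, h2⟩
  obtain ⟨hi1, hi2⟩ := hi
  have hrep := idx_rep K hKp
  have hmem := idx_of_mem K hKp
  have hg2 := hg.2
  simp only [cellA, Set.mem_ofPred_eq] at hg2
  set w := 2 * Real.pi / K with hw
  have hw0 : 0 < w := by positivity
  have hw2 : w ^ 2 ≤ 1 / 1000000 := by
    have := pow_le_pow_left₀ hw0.le hK 2
    norm_num at this ⊢; exact this
  obtain ⟨φ0, hφ0⟩ := h
  -- normalize φ
  obtain ⟨φ, hφ, hα⟩ : ∃ φ, (∀ k, k ≠ i → ω k ∈ Dset K 100 (cz : ZMod K) → ip φ (ω k) < ip φ (ω i)) ∧ |φ - θ| ≤ Real.pi := by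
    set k := round ((θ - φ0) / (2 * Real.pi))
    refine ⟨φ0 + k * (2 * Real.pi), ?_, ?_⟩
    · intro k h1 h2; rw [ip_add_int, ip_add_int]; exact hφ0 k h1 h2
    · have h := abs_sub_round ((θ - φ0) / (2 * Real.pi))
      have e : φ0 + k * (2 * Real.pi) - θ = -(((θ - φ0) / (2 * Real.pi) - k) * (2 * Real.pi)) := by
        field_simp; ring
      rw [e, abs_neg, abs_mul, abs_of_pos (by positivity : 0 < 2 * Real.pi)]
      nlinarith
  have hxip : ip φ (ω i) = ‖ω i‖ * Real.cos |φ - θ| := by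
    rw [Real.cos_abs, ← ip_pt, ← ht]
  -- angle bound
  have hang : ∀ t ρ : ℝ, |t| ≤ Real.pi → ρ ≤ 1 → 0 ≤ ρ → 1 - 400 * w ^ 2 ≤ ρ * Real.cos t → |t| ≤ 45 * w := by
    intro t ρ h1 h2 h20 h3
    have h4 := Real.cos_le_one_sub_mul_cos_sq h1
    have h5 : 0 ≤ Real.cos t := by
      by_contra hcon
      push Not at hcon
      nlinarith
    have h6 : 1 - 400 * w ^ 2 ≤ Real.cos t := by nlinarith
    have h7 : 2 / Real.pi ^ 2 * t ^ 2 ≤ 400 * w ^ 2 := by linarith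
    rw [div_mul_eq_mul_div, div_le_iff₀ (by positivity)] at h7
    apply abs_le_of_sq_le_sq _ (by positivity)
    have : Real.pi ^ 2 ≤ 3.15 ^ 2 := by gcongr
    nlinarith [sq_nonneg w]
  by_cases hA : 1 - 400 * w ^ 2 ≤ ip φ (ω i)
  · refine ⟨φ, fun k hk _ => ?_⟩
    by_contra hcon
    push Not at hcon
    have hk1 : 1 - 400 * w ^ 2 ≤ ip φ (ω k) := hA.trans hcon
    have hk2 := ip_le_norm φ (ω k)
    refine absurd (hφ k hk (hDset _ ?_ (hk1.trans hk2))) (not_lt.2 hcon)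
    obtain ⟨τ, hτ, hτ1⟩ := pt_near (ω k) φ
    rw [hτ, ip_pt] at hk1
    have h1 := hang _ _ hτ1 (hg.1 k) (norm_nonneg _) hk1
    rw [hxip] at hA
    have h2 := hang _ _ (by rwa [abs_abs]) (hg.1 i) (norm_nonneg _) hA
    rw [abs_abs] at h2
    have hpos : 0 < ‖ω k‖ := by linarith
    refine ⟨⌊τ / w⌋ - cz, ?_, ?_⟩
    · have f1 := (le_div_iff₀ hw0).1 (Int.floor_le (τ / w))
      have f2 := (div_lt_iff₀ hw0).1 (Int.lt_floor_add_one (τ / w))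
      rw [abs_le] at h1 h2
      have g1 : ((⌊τ / w⌋ : ℝ) - cz) * w < 92 * w := by linarith
      have g2 : (-92) * w < ((⌊τ / w⌋ : ℝ) - cz) * w := by linarith
      have g1' := lt_of_mul_lt_mul_right g1 hw0.le
      have g2' := lt_of_mul_lt_mul_right g2 hw0.le
      have g3 : ⌊τ / w⌋ - cz < 92 := by exact_mod_cast g1'
      have g4 : -92 < ⌊τ / w⌋ - cz := by exact_mod_cast g2'
      rw [abs_le]; omega
    · rw [hτ, hmem ‖ω k‖ τ hpos ⌊τ / w⌋ ((le_div_iff₀ hw0).1 (Int.floor_le (τ / w))) ((div_lt_iff₀ hw0).1 (Int.lt_floor_add_one (τ / w)))]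
      push_cast; ring
  · exfalso
    push Not at hA
    rw [hxip] at hA
    -- find the test cell
    have hfin : ∀ j0 : ℤ, 0 < j0 → j0 ≤ 99 → (∀ u ρ, (j0 - 1) * w ≤ u → u ≤ (j0 + 1) * w → 1 - 50 * w ^ 2 ≤ ρ → ρ ≤ 1 → ‖ω i‖ * Real.cos |φ - θ| ≤ ρ * Real.cos (|φ - θ| - u)) → False := by
      intro j0 hj0 hj1 hH
      obtain ⟨s, hs, hsa⟩ : ∃ s : ℤ, (s = 1 ∨ s = -1) ∧ (s : ℝ) * |φ - θ| = φ - θ := by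
        rcases le_total 0 (φ - θ) with h | h
        · exact ⟨1, Or.inl rfl, by rw [abs_of_nonneg h]; simp⟩
        · exact ⟨-1, Or.inr rfl, by rw [abs_of_nonpos h]; simp⟩
      obtain ⟨k, hk1, hk2⟩ := hg2 ((cz + s * j0 : ℤ) : ZMod K)
      obtain ⟨τ, hτ, hτ1, hτ2⟩ := hrep (ω k) _ hk1
      have hkD : ω k ∈ Dset K 100 (cz : ZMod K) := by
        refine hDset _ ⟨s * j0, ?_, ?_⟩ (by linarith [sq_nonneg w])
        · rcases hs with rfl | rfl <;> rw [abs_le] <;> omega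
        · rw [hk1]; push_cast; ring
      have hki : k ≠ i := by
        rintro rfl
        rw [hk1] at hi1
        refine idx_ne hK0 (cz : ZMod K) (s * j0) ?_ ?_ (by rw [← Int.cast_add]; exact hi1)
        · rcases hs with rfl | rfl <;> omega
        · rcases hs with rfl | rfl <;> rw [abs_le] <;> omega
      have h1 := hφ k hki hkD
      rw [hxip, hτ, ip_pt] at h1
      push_cast at hτ1 hτ2
      have h2 := hH (s * (τ - θ)) ‖ω k‖ ?_ ?_ hk2 (hg.1 k)
      · have e : Real.cos (|φ - θ| - s * (τ - θ)) = Real.cos (φ - τ) := by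
          rcases hs with rfl | rfl
          · congr 1; push_cast at hsa ⊢; linarith
          · rw [← Real.cos_neg]; congr 1; push_cast at hsa ⊢; linarith
        rw [e] at h2; linarith
      · rcases hs with rfl | rfl <;> push_cast at hτ1 hτ2 ⊢ <;> linarith
      · rcases hs with rfl | rfl <;> push_cast at hτ1 hτ2 ⊢ <;> linarith
    rcases core_geo w |φ - θ| ‖ω i‖ hw0 hK (abs_nonneg _) hα hi2 (hg.1 i) hA with h1 | h1
    · refine hfin 9 (by norm_num) (by norm_num) fun u ρ a1 a2 a3 a4 => h1 u ρ ?_ ?_ a3 a4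
      · push_cast at a1; linarith
      · push_cast at a2; linarith
    · refine hfin 49 (by norm_num) (by norm_num) fun u ρ a1 a2 a3 a4 => h1 u ρ ?_ ?_ a3 a4
      · push_cast at a1; linarith
      · push_cast at a2; linarith

open Classical in
noncomputable def Nc {n : ℕ} (D : Set E2) (ω : Fin n → E2) : ℕ := (Finset.univ.filter fun i => ω i ∈ D).card

open Classical in
noncomputable def fc {n : ℕ} (K : ℕ) (B : ℝ) (c : ZMod K) (ω : Fin n → E2) : ℝ :=
  if (Nc (Dset K 100 c) ω : ℝ) ≤ B then
    ((Finset.univ.filter fun i => ω i ∈ cellA K c (1 - 400 * (2 * Real.pi / K) ^ 2) ∧ LSep (Dset K 100 c) ω i).card : ℝ)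
  else 0

lemma cell_sub_D (K : ℕ) (L : ℤ) (hL : 0 ≤ L) (c : ZMod K) : cellA K c (1 - 400 * (2 * Real.pi / K) ^ 2) ⊆ Dset K L c :=
  fun _ hx => ⟨⟨0, by simpa using hL, by simpa using hx.1⟩, hx.2⟩

lemma Dset_meas (K : ℕ) (L : ℤ) (c : ZMod K) : MeasurableSet (Dset K L c) := by
  have : Dset K L c = (⋃ j : ℤ, ⋃ _ : |j| ≤ L, {x | idx K x = c + j}) ∩ {x | 1 - 400 * (2 * Real.pi / K) ^ 2 ≤ ‖x‖} := by
    ext x; simp [Dset]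
  rw [this]
  exact (MeasurableSet.iUnion fun j => MeasurableSet.iUnion fun _ => idx_meas K _).inter
    (measurableSet_le measurable_const measurable_norm)

lemma Nc_meas {n : ℕ} (D : Set E2) (hD : MeasurableSet D) : Measurable fun ω : Fin n → E2 => (Nc D ω : ℝ) := by
  classical
  exact card_filter_meas (fun i ω => ω i ∈ D) (fun i => (measurable_pi_apply i) hD)

lemma fc_meas {n : ℕ} (K : ℕ) (B : ℝ) (c : ZMod K) : Measurable (fc K B c : (Fin n → E2) → ℝ) := by
  classical
  refine Measurable.ite (measurableSet_le (Nc_meas _ (Dset_meas K 100 c)) measurable_const) ?_ measurable_const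
  refine card_filter_meas _ fun i => MeasurableSet.inter ?_ (LSep_meas _ (Dset_meas K 100 c) i)
  exact (measurable_pi_apply (X := fun _ : Fin n => E2) i) (cellA_meas K c _)

lemma fc_nonneg {n : ℕ} (K : ℕ) (B : ℝ) (c : ZMod K) (ω : Fin n → E2) : 0 ≤ fc K B c ω := by
  unfold fc; split_ifs <;> positivity

lemma fc_le {n : ℕ} (K : ℕ) (B : ℝ) (hB : 0 ≤ B) (c : ZMod K) (ω : Fin n → E2) : fc K B c ω ≤ B := by
  classical
  unfold fc
  split_ifs with h
  · refine le_trans ?_ h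
    unfold Nc
    norm_cast
    refine Finset.card_le_card fun i hi => ?_
    simp only [Finset.mem_filter, Finset.mem_univ, true_and] at hi ⊢
    exact cell_sub_D K 100 (by norm_num) c hi.1
  · exact hB

lemma dep_iff {n : ℕ} {D : Set E2} {ω ω' : Fin n → E2} (h : ∀ i, ω i = ω' i ∨ (ω i ∉ D ∧ ω' i ∉ D)) (S : Set E2) (hS : S ⊆ D) (i : Fin n) :
    ω i ∈ S ↔ ω' i ∈ S := by
  rcases h i with h | h
  · rw [h]
  · exact ⟨fun h' => absurd (hS h') h.1, fun h' => absurd (hS h') h.2⟩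

lemma dep_eq {n : ℕ} {D : Set E2} {ω ω' : Fin n → E2} (h : ∀ i, ω i = ω' i ∨ (ω i ∉ D ∧ ω' i ∉ D)) (i : Fin n)
    (hi : ω i ∈ D) : ω i = ω' i := (h i).resolve_right fun h' => h'.1 hi

lemma Nc_dep {n : ℕ} (D : Set E2) : DepOn D (Nc D : (Fin n → E2) → ℕ) := by
  classical
  intro ω ω' h
  unfold Nc
  congr 1
  exact Finset.filter_congr fun i _ => dep_iff h D subset_rfl i

lemma LSep_dep {n : ℕ} {D : Set E2} {ω ω' : Fin n → E2} (h : ∀ i, ω i = ω' i ∨ (ω i ∉ D ∧ ω' i ∉ D)) (i : Fin n) (hi : ω i ∈ D) :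
    LSep D ω i → LSep D ω' i := by
  rintro ⟨φ, hφ⟩
  refine ⟨φ, fun k hk hkD => ?_⟩
  have h1 := (dep_iff h D subset_rfl k).2 hkD
  rw [← dep_eq h k h1, ← dep_eq h i hi]
  exact hφ k hk h1

lemma fc_dep {n : ℕ} (K : ℕ) (B : ℝ) (c : ZMod K) : DepOn (Dset K 100 c) (fc K B c : (Fin n → E2) → ℝ) := by
  classical
  intro ω ω' h
  have h' : ∀ i, ω' i = ω i ∨ (ω' i ∉ Dset K 100 c ∧ ω i ∉ Dset K 100 c) := fun i => (h i).imp Eq.symm And.symm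
  unfold fc
  rw [Nc_dep _ ω ω' h]
  split_ifs
  · congr 2
    refine Finset.filter_congr fun i _ => ?_
    have hs := cell_sub_D K 100 (by norm_num) c
    have h1 := dep_iff h _ hs i
    constructor
    · rintro ⟨a, b⟩; exact ⟨h1.1 a, LSep_dep h i (hs a) b⟩
    · rintro ⟨a, b⟩; exact ⟨h1.2 a, LSep_dep h' i (hs a) b⟩
  · rfl

lemma Vc_eq_sum {n : ℕ} (K : ℕ) [NeZero K] (hK0 : 100 < K) (hK : 2 * Real.pi / K ≤ 1 / 1000) (B : ℝ) (ω : Fin n → E2)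
    (hg : Good K ω) (hB : ∀ c, (Nc (Dset K 100 c) ω : ℝ) ≤ B) : Vc ω = ∑ c : ZMod K, fc K B c ω := by
  classical
  have h1 : ∀ c, fc K B c ω = ((Finset.univ.filter fun i => LSep Set.univ ω i ∧ idx K (ω i) = c).card : ℝ) := by
    intro c
    unfold fc
    rw [if_pos (hB c)]
    congr 2
    refine Finset.filter_congr fun i _ => ?_
    constructor
    · rintro ⟨a, b⟩; exact ⟨good_loc K hK0 hK ω hg i c a b, a.1⟩
    · rintro ⟨a, b⟩
      refine ⟨⟨b, good_ann K (by omega) hK ω hg i a⟩, ?_⟩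
      obtain ⟨φ, hφ⟩ := a
      exact ⟨φ, fun k hk _ => hφ k hk trivial⟩
  simp only [h1]
  unfold Vc
  rw [← Nat.cast_sum]
  congr 1
  have := Finset.card_eq_sum_card_fiberwise (f := fun i => idx K (ω i)) (s := Finset.univ.filter fun i => LSep Set.univ ω i) (t := Finset.univ) (fun _ _ => by simp)
  rw [this]
  refine Finset.sum_congr rfl fun c _ => ?_
  rw [Finset.filter_filter]

lemma miss_prob {n : ℕ} (μ : Measure E2) [IsProbabilityMeasure μ] (S : Set E2) (hS : MeasurableSet S) :
    (Measure.pi fun _ : Fin n => μ).real {ω | ∀ i, ω i ∉ S} ≤ Real.exp (-(n * μ.real S)) := by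
  have : {ω : Fin n → E2 | ∀ i, ω i ∉ S} = Set.univ.pi fun _ => Sᶜ := by ext; simp
  rw [this, Measure.real, Measure.pi_pi]
  simp only [Finset.prod_const, Finset.card_univ, Fintype.card_fin, ENNReal.toReal_pow]
  change (μ.real Sᶜ) ^ n ≤ _
  rw [measureReal_compl hS, probReal_univ]
  have h1 := Real.add_one_le_exp (-(μ.real S))
  have h2 : μ.real S ≤ 1 := measureReal_le_one
  calc (1 - μ.real S) ^ n ≤ (Real.exp (-(μ.real S))) ^ n := pow_le_pow_left₀ (by linarith) (by linarith) n
    _ = _ := by rw [← Real.exp_nat_mul]; congr 1; ring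

lemma count_prob {n : ℕ} (μ : Measure E2) [IsProbabilityMeasure μ] (S : Set E2) (hS : MeasurableSet S) (B : ℝ) :
    (Measure.pi fun _ : Fin n => μ).real {ω | B < (Nc S ω : ℝ)} ≤ Real.exp (n * μ.real S) * (2:ℝ) ^ (-B) := by
  classical
  set g : E2 → ℝ := fun x => 1 + S.indicator (fun _ => (1:ℝ)) x with hg
  have hgm : Measurable g := measurable_const.add (measurable_const.indicator hS)
  have hgi : ∫ x, g x ∂μ = 1 + μ.real S := by
    rw [integral_add (integrable_const _) ((integrable_const _).indicator hS), integral_indicator_const _ hS]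
    simp
  have h1 : ∀ ω : Fin n → E2, ∏ i, g (ω i) = (2:ℝ) ^ (Nc S ω : ℝ) := by
    intro ω
    rw [Real.rpow_natCast, Nc, ← Finset.prod_const, Finset.prod_filter]
    refine Finset.prod_congr rfl fun i _ => ?_
    simp only [hg, Set.indicator]
    split_ifs <;> norm_num
  have h2 : ∫ ω, ∏ i, g (ω i) ∂(Measure.pi fun _ : Fin n => μ) = (1 + μ.real S) ^ n := by
    rw [integral_fintype_prod_eq_pow, hgi]; simp
  have hgb : ∀ x, |g x| ≤ 2 := by
    intro x; simp only [hg, Set.indicator]; split_ifs <;> norm_num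
  have hint : Integrable (fun ω : Fin n → E2 => ∏ i, g (ω i)) (Measure.pi fun _ : Fin n => μ) := by
    refine integrable_bdd (C := 2 ^ n) (Finset.measurable_fun_prod _ fun i _ => hgm.comp (measurable_pi_apply i)).aestronglyMeasurable ?_
    intro ω
    rw [Real.norm_eq_abs, Finset.abs_prod]
    refine (Finset.prod_le_prod (fun i _ => abs_nonneg _) (fun i _ => hgb (ω i))).trans ?_
    simp
  have h3 := mul_meas_ge_le_integral_of_nonneg (Filter.Eventually.of_forall fun ω => by rw [h1]; positivity) hint ((2:ℝ) ^ B)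
  rw [h2] at h3
  have h4 : (Measure.pi fun _ : Fin n => μ).real {ω | B < (Nc S ω : ℝ)} ≤ (Measure.pi fun _ : Fin n => μ).real {ω | (2:ℝ) ^ B ≤ ∏ i, g (ω i)} := by
    refine measureReal_mono fun ω hω => ?_
    simp only [Set.mem_ofPred_eq, h1] at hω ⊢
    exact Real.rpow_le_rpow_of_exponent_le (by norm_num) hω.le
  have h5 : (1 + μ.real S) ^ n ≤ Real.exp (n * μ.real S) := by
    rw [Real.exp_nat_mul]
    have := Real.add_one_le_exp (μ.real S)
    exact pow_le_pow_left₀ (by positivity) (by linarith) n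
  have hB : (0:ℝ) < 2 ^ B := by positivity
  rw [Real.rpow_neg (by norm_num), ← div_eq_mul_inv, le_div_iff₀ hB]
  nlinarith

/-- the good event (measurable part) -/
def GE {n : ℕ} (K : ℕ) (B : ℝ) : Set (Fin n → E2) :=
  {ω | (∀ c : ZMod K, ∃ k, ω k ∈ cellA K c (1 - 50 * (2 * Real.pi / K) ^ 2)) ∧ ∀ c, (Nc (Dset K 100 c) ω : ℝ) ≤ B}

lemma GE_compl {n : ℕ} (K : ℕ) (B : ℝ) : (GE K B : Set (Fin n → E2))ᶜ =
    (⋃ c : ZMod K, {ω | ∀ i, ω i ∉ cellA K c (1 - 50 * (2 * Real.pi / K) ^ 2)}) ∪ ⋃ c : ZMod K, {ω | B < (Nc (Dset K 100 c) ω : ℝ)} := by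
  ext ω
  simp only [GE, Set.mem_compl_iff, Set.mem_ofPred_eq, Set.mem_union, Set.mem_iUnion, not_and_or, not_forall, not_exists, not_le]

lemma GE_meas {n : ℕ} (K : ℕ) [NeZero K] (B : ℝ) : MeasurableSet (GE K B : Set (Fin n → E2)) := by
  rw [← MeasurableSet.compl_iff, GE_compl]
  refine (MeasurableSet.iUnion fun c => ?_).union (MeasurableSet.iUnion fun c => ?_)
  · have : {ω : Fin n → E2 | ∀ i, ω i ∉ cellA K c (1 - 50 * (2 * Real.pi / K) ^ 2)} = Set.univ.pi fun _ => (cellA K c (1 - 50 * (2 * Real.pi / K) ^ 2))ᶜ := by ext; simp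
    rw [this]
    exact MeasurableSet.univ_pi fun i => (cellA_meas K c _).compl
  · exact measurableSet_lt measurable_const (Nc_meas _ (Dset_meas K 100 c))

lemma GE_prob {n : ℕ} (K : ℕ) [NeZero K] (B : ℝ) (μ : Measure E2) [IsProbabilityMeasure μ] (p1 p2 : ℝ)
    (h1 : ∀ c : ZMod K, p1 ≤ μ.real (cellA K c (1 - 50 * (2 * Real.pi / K) ^ 2)))
    (h2 : ∀ c : ZMod K, μ.real (Dset K 100 c) ≤ p2) :
    (Measure.pi fun _ : Fin n => μ).real (GE K B)ᶜ ≤ K * Real.exp (-(n * p1)) + K * (Real.exp (n * p2) * (2:ℝ) ^ (-B)) := by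
  rw [GE_compl]
  refine (measureReal_union_le _ _).trans (add_le_add ?_ ?_)
  · refine (measureReal_iUnion_fintype_le _).trans ?_
    have : ∑ c : ZMod K, Real.exp (-(n * p1)) = K * Real.exp (-(n * p1)) := by
      rw [Finset.sum_const, Finset.card_univ, ZMod.card, nsmul_eq_mul]
    rw [← this]
    refine Finset.sum_le_sum fun c _ => (miss_prob μ _ (cellA_meas K c _)).trans ?_
    gcongr; exact h1 c
  · refine (measureReal_iUnion_fintype_le _).trans ?_
    have : ∑ c : ZMod K, Real.exp (n * p2) * (2:ℝ) ^ (-B) = K * (Real.exp (n * p2) * (2:ℝ) ^ (-B)) := by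
      rw [Finset.sum_const, Finset.card_univ, ZMod.card, nsmul_eq_mul]
    rw [← this]
    refine Finset.sum_le_sum fun c _ => (count_prob μ _ (Dset_meas K 100 c) B).trans ?_
    gcongr; exact h2 c

lemma cos_ub (u : ℝ) (h : |u| ≤ 1) : Real.cos u ≤ 1 - 44 / 100 * u ^ 2 := by
  have h1 := (abs_le.1 (Real.cos_bound h)).2
  have h2 : |u| ^ 2 ≤ 1 := by
    have := pow_le_pow_left₀ (abs_nonneg u) h 2
    simpa using this
  have h3 : |u| ^ 4 = u ^ 2 * |u| ^ 2 := by rw [← sq_abs u]; ring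
  have h4 := mul_le_mul_of_nonneg_left h2 (sq_nonneg u)
  rw [h3] at h1
  linarith [sq_nonneg u]

lemma sin_lb (u : ℝ) (h0 : 0 < u) (h : u ≤ 1 / 10) : 99 / 100 * u ≤ Real.sin u := by
  have h1 := Real.sin_gt_sub_cube h0
  have h2 : u ^ 2 ≤ 1 / 100 := by
    have := pow_le_pow_left₀ h0.le h 2
    norm_num at this ⊢; exact this
  have h3 := mul_le_mul_of_nonneg_left h2 h0.le
  have h4 : u ^ 3 = u * u ^ 2 := by ring
  rw [h4] at h1
  linarith

lemma cos_far (w u : ℝ) (N : ℝ) (hN : 0 ≤ N) (hw : 0 < w) (hNw : N * w ≤ 1) (h1 : N * w ≤ |u|) (h2 : |u| ≤ Real.pi) :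
    Real.cos u ≤ 1 - 44 / 100 * (N ^ 2 * w ^ 2) := by
  rw [← Real.cos_abs]
  have h0 : 0 ≤ N * w := by positivity
  have := Real.cos_le_cos_of_nonneg_of_le_pi h0 h2 h1
  have h3 := cos_ub (N * w) (by rw [abs_of_nonneg h0]; exact hNw)
  rw [mul_pow] at h3
  linarith

lemma own (w ρ0 ρ u : ℝ) (hw : 0 < w) (hw1 : w ≤ 1 / 100000) (h0 : 1 - 3100 * w ^ 2 ≤ ρ0) (hρ : 0 ≤ ρ) (hρ1 : ρ ≤ 1)
    (h1 : 98 * w ≤ |u|) (h2 : |u| ≤ Real.pi) : ρ * Real.cos u < ρ0 := by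
  have hw2 : 0 < w ^ 2 := by positivity
  have hw3 : w ^ 2 ≤ 1 / 1000000 := by
    have := pow_le_pow_left₀ hw.le hw1 2
    norm_num at this ⊢; linarith
  have h := cos_far w u 98 (by norm_num) hw (by linarith) h1 h2
  by_cases hc : 0 ≤ Real.cos u
  · have := mul_le_of_le_one_left hc hρ1
    linarith
  · push Not at hc
    have := mul_nonpos_of_nonneg_of_nonpos hρ hc.le
    linarith

lemma ip_diff (x ρ ρc u : ℝ) : ρ * Real.cos (x - u) - ρc * Real.cos x
    = (ρ * Real.cos u - ρc) * Real.cos x + ρ * Real.sin u * Real.sin x := by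
  rw [Real.cos_sub]; ring

/-- Claim 1 -/
lemma geo1 (w x ρa ρb ρe ρc ua ub ue : ℝ) (hw : 0 < w) (hw1 : w ≤ 1 / 100000)
    (ha : 1 - 100 * w ^ 2 ≤ ρa) (hb : 1 - 100 * w ^ 2 ≤ ρb) (he : 1 - 100 * w ^ 2 ≤ ρe)
    (ha1 : ρa ≤ 1) (hb1 : ρb ≤ 1) (he1 : ρe ≤ 1)
    (hc : 1 - 3100 * w ^ 2 ≤ ρc) (hc1 : ρc ≤ 1 - 2900 * w ^ 2)
    (hua : 249 * w ≤ ua) (hua1 : ua ≤ 251 * w) (hub : 49 * w ≤ ub) (hub1 : ub ≤ 51 * w)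
    (hue : 49 * w ≤ ue) (hue1 : ue ≤ 51 * w)
    (h1 : ρa * Real.cos (x - -ua) ≤ ρc * Real.cos x) (h2 : ρb * Real.cos (x - -ub) ≤ ρc * Real.cos x)
    (h3 : ρe * Real.cos (x - ue) ≤ ρc * Real.cos x) : False := by
  have hw2 : 0 < w ^ 2 := by positivity
  have hw3 : w ^ 2 ≤ 1 / 1000000 := by
    have := pow_le_pow_left₀ hw.le hw1 2
    norm_num at this ⊢; linarith
  have hw4 : w ^ 2 * w ^ 2 ≤ w ^ 2 * (1 / 1000000) := by gcongr
  have d1 := ip_diff x ρa ρc (-ua)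
  have d2 := ip_diff x ρb ρc (-ub)
  have d3 := ip_diff x ρe ρc ue
  rw [Real.cos_neg, Real.sin_neg] at d1 d2
  have kk : ∀ ρ u, 1 - 100 * w ^ 2 ≤ ρ → ρ ≤ 1 → 49 * w ≤ u → u ≤ 51 * w →
      1000 * w ^ 2 ≤ ρ * Real.cos u - ρc ∧ ρ * Real.cos u - ρc ≤ 3100 * w ^ 2 ∧ 48 * w ≤ ρ * Real.sin u := by
    intro ρ u g1 g2 g3 g4
    have e1 := Real.one_sub_sq_div_two_le_cos (x := u)
    have e2 : u ^ 2 ≤ (51 * w) ^ 2 := by gcongr; linarith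
    rw [mul_pow] at e2
    have e3 : (1 - 100 * w ^ 2) * (1 - 1300.5 * w ^ 2) ≤ ρ * Real.cos u :=
      mul_le_mul g1 (by linarith) (by linarith) (by linarith)
    have e4 : ρ * Real.cos u ≤ 1 := mul_le_one₀ g2 (by linarith) (Real.cos_le_one _)
    have e5 := sin_lb u (by linarith) (by linarith)
    have e6 : (1 - 100 * w ^ 2) * (99 / 100 * (49 * w)) ≤ ρ * Real.sin u :=
      mul_le_mul g1 (by linarith) (by linarith) (by linarith)
    have e7 := mul_le_mul_of_nonneg_left hw3 hw.le
    refine ⟨?_, by linarith, ?_⟩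
    · nlinarith only [e3, hc1, hw2, hw4]
    · nlinarith only [e6, e7, hw]
  obtain ⟨b1, -, b3⟩ := kk ρb ub hb hb1 hub hub1
  obtain ⟨e1, e2, e3⟩ := kk ρe ue he he1 hue hue1
  by_cases hx : 0 ≤ Real.cos x
  · have m1 := mul_nonneg (show 0 ≤ ρb * Real.cos ub - ρc by linarith) hx
    have m2 := mul_nonneg (show 0 ≤ ρe * Real.cos ue - ρc by linarith) hx
    have s1 : 0 ≤ Real.sin x := by
      by_contra hcon
      push Not at hcon
      have := mul_neg_of_pos_of_neg (show 0 < ρb * Real.sin ub by linarith) hcon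
      linarith
    have s2 : Real.sin x ≤ 0 := by
      by_contra hcon
      push Not at hcon
      have := mul_pos (show 0 < ρe * Real.sin ue by linarith) hcon
      linarith
    have s3 : Real.sin x = 0 := le_antisymm s2 s1
    have s4 : 0 < Real.cos x := by
      rcases hx.lt_or_eq with h | h
      · exact h
      · have := Real.sin_sq_add_cos_sq x
        rw [s3, ← h] at this; norm_num at this
    have := mul_pos (show 0 < ρe * Real.cos ue - ρc by linarith) s4
    rw [s3] at d3
    linarith
  · push Not at hx
    set y := -Real.cos x with hy
    have hy0 : 0 < y := by linarith
    have hcx : Real.cos x = -y := by rw [hy]; ring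
    rw [hcx] at d1 d2 d3 h1 h2 h3
    have f1 := cos_ub ua (by rw [abs_of_nonneg (by linarith)]; linarith)
    have f2 : (249 * w) ^ 2 ≤ ua ^ 2 := by gcongr
    rw [mul_pow] at f2
    have f3 : ρa * Real.cos ua ≤ 1 - 27000 * w ^ 2 := by
      have g : 0 ≤ Real.cos ua := by
        have e1 := Real.one_sub_sq_div_two_le_cos (x := ua)
        have e2 : ua ^ 2 ≤ (251 * w) ^ 2 := by gcongr; linarith
        rw [mul_pow] at e2
        linarith
      have := mul_le_of_le_one_left g ha1
      linarith
    have f4 : (ρa * Real.cos ua - ρc) * y ≤ (-23900 * w ^ 2) * y := by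
      gcongr; linarith
    have f5 : ρe * Real.cos ue * y - ρc * y ≤ 3100 * w ^ 2 * y := by
      rw [← sub_mul]; gcongr
    have f6 : ρa * Real.sin ua ≤ 251 * w := by
      have g1 := Real.sin_le (show 0 ≤ ua by linarith)
      have g2 := sin_lb ua (by linarith) (by linarith)
      have := mul_le_of_le_one_left (show 0 ≤ Real.sin ua by linarith) ha1
      linarith
    have s0 : 0 < Real.sin x := by
      by_contra hcon
      push Not at hcon
      have g2 := sin_lb ua (by linarith) (by linarith)
      have : ρa * Real.sin ua * Real.sin x ≤ 0 :=
        mul_nonpos_of_nonneg_of_nonpos (mul_nonneg (by linarith) (by linarith)) hcon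
      have : 0 < w ^ 2 * y := by positivity
      linarith
    have f7 : ρa * Real.sin ua * Real.sin x ≤ 251 * w * Real.sin x := by gcongr
    have f8 : 48 * w * Real.sin x ≤ ρe * Real.sin ue * Real.sin x := by gcongr
    have : 0 < w ^ 2 * y := by positivity
    linarith

/-- Claim 3 -/
lemma geo3 (w x ρa ρb ρc r ua ub v : ℝ) (hw : 0 < w) (hw1 : w ≤ 1 / 100000)
    (ha : 1 - 100 * w ^ 2 ≤ ρa) (hb : 1 - 100 * w ^ 2 ≤ ρb)
    (ha1 : ρa ≤ 1) (hb1 : ρb ≤ 1)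
    (hc : 1 - 3100 * w ^ 2 ≤ ρc) (hc1 : ρc ≤ 1 - 2900 * w ^ 2)
    (hua : 99 * w ≤ ua) (hua1 : ua ≤ 101 * w) (hub : 99 * w ≤ ub) (hub1 : ub ≤ 101 * w)
    (hx : |x| ≤ Real.pi) (hr : 0 ≤ r) (hr1 : r ≤ 1) (hv : |v| ≤ Real.pi)
    (h0 : r * Real.cos v ≤ ρc * Real.cos x)
    (h1 : ρa * Real.cos (x - -ua) < r * Real.cos v) (h2 : ρb * Real.cos (x - ub) < r * Real.cos v) :
    1 - 10000 * w ^ 2 ≤ r ∧ |x| ≤ 38 * w ∧ |v| ≤ 200 * w := by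
  have hpi3 := Real.pi_gt_three
  have hpi := Real.pi_lt_d2
  have hw2 : 0 < w ^ 2 := by positivity
  have hw3 : w ^ 2 ≤ 1 / 1000000 := by
    have := pow_le_pow_left₀ hw.le hw1 2
    norm_num at this ⊢; linarith
  have hw4 : w ^ 2 * w ^ 2 ≤ w ^ 2 * (1 / 1000000) := by gcongr
  have d1 := ip_diff x ρa ρc (-ua)
  have d2 := ip_diff x ρb ρc ub
  rw [Real.cos_neg, Real.sin_neg] at d1
  have kk : ∀ ρ u, 1 - 100 * w ^ 2 ≤ ρ → ρ ≤ 1 → 99 * w ≤ u → u ≤ 101 * w →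
      -(2301 * w ^ 2) ≤ ρ * Real.cos u - ρc ∧ ρ * Real.cos u - ρc ≤ 0 ∧ 98 * w ≤ ρ * Real.sin u := by
    intro ρ u g1 g2 g3 g4
    have e1 := Real.one_sub_sq_div_two_le_cos (x := u)
    have e2 : u ^ 2 ≤ (101 * w) ^ 2 := by gcongr; linarith
    have e2' : (99 * w) ^ 2 ≤ u ^ 2 := by gcongr
    rw [mul_pow] at e2 e2'
    have e3 : (1 - 100 * w ^ 2) * (1 - 5100.5 * w ^ 2) ≤ ρ * Real.cos u :=
      mul_le_mul g1 (by linarith) (by linarith) (by linarith)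
    have e9 := cos_ub u (by rw [abs_of_nonneg (by linarith)]; linarith)
    have e4 : ρ * Real.cos u ≤ Real.cos u := mul_le_of_le_one_left (by linarith) g2
    have e5 := sin_lb u (by linarith) (by linarith)
    have e6 : (1 - 100 * w ^ 2) * (99 / 100 * (99 * w)) ≤ ρ * Real.sin u :=
      mul_le_mul g1 (by linarith) (by linarith) (by linarith)
    have e7 := mul_le_mul_of_nonneg_left hw3 hw.le
    refine ⟨?_, by linarith, ?_⟩
    · nlinarith only [e3, hc1, hw2, hw4]
    · nlinarith only [e6, e7, hw]
  obtain ⟨a1, a2, a3⟩ := kk ρa ua ha ha1 hua hua1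
  obtain ⟨b1, b2, b3⟩ := kk ρb ub hb hb1 hub hub1
  have hcx : 0 < Real.cos x := by
    by_contra hcon
    push Not at hcon
    have m1 := mul_nonneg_of_nonpos_of_nonpos a2 hcon
    have m2 := mul_nonneg_of_nonpos_of_nonpos b2 hcon
    have s1 : 0 < Real.sin x := by
      by_contra hcon
      push Not at hcon
      have := mul_nonpos_of_nonneg_of_nonpos (show 0 ≤ ρa * Real.sin ua by linarith) hcon
      linarith
    have := mul_pos (show 0 < ρb * Real.sin ub by linarith) s1
    linarith
  have m1 : -(2301 * w ^ 2) * Real.cos x ≤ (ρa * Real.cos ua - ρc) * Real.cos x := by gcongr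
  have m2 : -(2301 * w ^ 2) * Real.cos x ≤ (ρb * Real.cos ub - ρc) * Real.cos x := by gcongr
  have hc1 : w ^ 2 * Real.cos x ≤ w ^ 2 := mul_le_of_le_one_right hw2.le (Real.cos_le_one x)
  have hs1 : Real.sin x ≤ 24 * w := by
    by_contra hcon
    push Not at hcon
    have := mul_le_mul b3 hcon.le (by positivity) (by linarith)
    nlinarith only [this, m2, d2, h0, h2, hc1, hw2]
  have hs2 : -(24 * w) ≤ Real.sin x := by
    by_contra hcon
    push Not at hcon
    have := mul_le_mul a3 (show 24 * w ≤ -Real.sin x by linarith) (by positivity) (by linarith)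
    nlinarith only [this, m1, d1, h0, h1, hc1, hw2]
  have hx2 : |x| ≤ Real.pi / 2 := by
    by_contra hcon
    push Not at hcon
    have := Real.cos_nonpos_of_pi_div_two_le_of_le hcon.le (by linarith)
    rw [Real.cos_abs] at this
    linarith
  have hxs : |x| ≤ 38 * w := by
    have g := Real.mul_le_sin (abs_nonneg x) hx2
    have g2 : Real.sin |x| ≤ 24 * w := by
      rcases abs_cases x with ⟨h, _⟩ | ⟨h, _⟩
      · rw [h]; exact hs1
      · rw [h, Real.sin_neg]; linarith
    have g3 : 2 / 3.15 ≤ 2 / Real.pi := by gcongr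
    have g4 := mul_le_mul_of_nonneg_right g3 (abs_nonneg x)
    norm_num at g4
    linarith
  have k1 : 1 - 9800 * w ^ 2 ≤ ρa * Real.cos (x - -ua) := by
    have e1 := Real.one_sub_sq_div_two_le_cos (x := x - -ua)
    have := abs_le.1 hxs
    have e2 : (x - -ua) ^ 2 ≤ (139 * w) ^ 2 := sq_le_sq' (by linarith) (by linarith)
    rw [mul_pow] at e2
    have e3 : (1 - 100 * w ^ 2) * (1 - 9660.5 * w ^ 2) ≤ ρa * Real.cos (x - -ua) :=
      mul_le_mul ha (by linarith) (by linarith) (by linarith)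
    nlinarith only [e3, hw2, hw4]
  have hcv : 0 ≤ Real.cos v := by
    by_contra hcon
    push Not at hcon
    have := mul_nonpos_of_nonneg_of_nonpos hr hcon.le
    linarith
  have k2 := mul_le_of_le_one_right hr (Real.cos_le_one v)
  have k3 := mul_le_of_le_one_left hcv hr1
  refine ⟨by linarith, hxs, ?_⟩
  by_contra hcon
  push Not at hcon
  have := cos_far w v 200 (by norm_num) hw (by linarith) hcon.le hv
  linarith

noncomputable def ww (m : ℕ) : ℝ := 2 * Real.pi / m
def RS (m : ℕ) (j : ℤ) : Set E2 :=
  cellA m ((j + 400 : ℤ) : ZMod m) (1 - 3100 * ww m ^ 2) \ cellA m ((j + 400 : ℤ) : ZMod m) (1 - 2900 * ww m ^ 2)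
def PS (m : ℕ) (j : ℤ) : Fin 4 → Set E2 :=
  ![cellA m ((j + 300 : ℤ) : ZMod m) (1 - 100 * ww m ^ 2), cellA m ((j + 500 : ℤ) : ZMod m) (1 - 100 * ww m ^ 2),
    cellA m ((j + 600 : ℤ) : ZMod m) (1 - 100 * ww m ^ 2), RS m j]
def CS (m : ℕ) (j : ℤ) : Set E2 :=
  {x | (∃ i : ℤ, 0 ≤ i ∧ i < 1000 ∧ idx m x = ((j + i : ℤ) : ZMod m)) ∧ 1 - 10000 * ww m ^ 2 ≤ ‖x‖}

lemma ww_pos (m : ℕ) (hm : 0 < m) : 0 < ww m := by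
  have : (0:ℝ) < m := by exact_mod_cast hm
  unfold ww; positivity

lemma CS_of_ang (m : ℕ) (hm : 0 < m) (j : ℤ) (x : E2) (θ : ℝ) (hx : x = pt ‖x‖ θ) (h0 : 0 < ‖x‖)
    (h1 : j * ww m ≤ θ) (h2 : θ < (j + 1000) * ww m) (h3 : 1 - 10000 * ww m ^ 2 ≤ ‖x‖) : x ∈ CS m j := by
  have hw := ww_pos m hm
  refine ⟨⟨⌊θ / ww m⌋ - j, ?_, ?_, ?_⟩, h3⟩
  · have : j ≤ ⌊θ / ww m⌋ := by rw [Int.le_floor, le_div_iff₀ hw]; exact h1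
    linarith
  · have : ⌊θ / ww m⌋ < j + 1000 := by rw [Int.floor_lt, div_lt_iff₀ hw]; push_cast; exact h2
    linarith
  · rw [add_sub_cancel, hx]
    apply idx_of_mem m hm _ _ h0
    · change _ * ww m ≤ _; rw [← le_div_iff₀ hw]; exact Int.floor_le _
    · change _ < _ * ww m; rw [← div_lt_iff₀ hw]; exact Int.lt_floor_add_one _

lemma swap_geo {n : ℕ} (m : ℕ) (hm : 0 < m) (hw1 : ww m ≤ 1 / 100000) (j : ℤ) (ω : Fin n → E2)
    (hn : ∀ i, ‖ω i‖ ≤ 1) (ia ib ie ic : Fin n) (hac : ia ≠ ic) (hbc : ib ≠ ic) (hec : ie ≠ ic)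
    (ha : ω ia ∈ PS m j 0) (hb : ω ib ∈ PS m j 1) (he : ω ie ∈ PS m j 2) (hc : ω ic ∈ PS m j 3)
    (hC : ∀ i, i ≠ ia → i ≠ ib → i ≠ ie → i ≠ ic → ω i ∉ CS m j) :
    Vc ω - Vc (Function.update ω ic (rfl2 ((2 * j + 951) * ww m) (ω ic))) = 1 := by
  classical
  have hw := ww_pos m hm
  have hpi3 := Real.pi_gt_three
  set w := ww m with hwdef
  have hw2 : 0 < w ^ 2 := by positivity
  have hw3 : w ^ 2 ≤ 1 / 1000000 := by
    have := pow_le_pow_left₀ hw.le hw1 2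
    norm_num at this ⊢; linarith
  obtain ⟨θa, ea, a1, a2⟩ := idx_rep m hm _ _ ha.1
  obtain ⟨θb, eb, b1, b2⟩ := idx_rep m hm _ _ hb.1
  obtain ⟨θe, ee, e1, e2⟩ := idx_rep m hm _ _ he.1
  obtain ⟨θc, ec, c1, c2⟩ := idx_rep m hm _ _ hc.1.1
  change _ * w ≤ _ at a1 b1 e1 c1
  change _ < _ * w at a2 b2 e2 c2
  push_cast at a1 b1 e1 c1 a2 b2 e2 c2
  have ra : 1 - 100 * w ^ 2 ≤ ‖ω ia‖ := ha.2
  have rb : 1 - 100 * w ^ 2 ≤ ‖ω ib‖ := hb.2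
  have re : 1 - 100 * w ^ 2 ≤ ‖ω ie‖ := he.2
  have rc : 1 - 3100 * w ^ 2 ≤ ‖ω ic‖ := hc.1.2
  have rc1 : ‖ω ic‖ ≤ 1 - 2900 * w ^ 2 := by
    by_contra hcon
    push Not at hcon
    exact hc.2 ⟨hc.1.1, hcon.le⟩
  set ρa := ‖ω ia‖ with hρa
  set ρb := ‖ω ib‖ with hρb
  set ρe := ‖ω ie‖ with hρe
  set ρc := ‖ω ic‖ with hρc
  have hna := hn ia
  have hnb := hn ib
  have hne := hn ie
  set c' := rfl2 ((2 * j + 951) * w) (ω ic) with hc'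
  have ec' : c' = pt ρc ((2 * j + 951) * w - θc) := by rw [hc', ec, rfl2_pt]
  set θ' := (2 * j + 951) * w - θc with hθ'
  have nc' : ‖c'‖ = ρc := by rw [hc']; simp [hρc]
  set ω' := Function.update ω ic c' with hω'
  have up : ∀ k, k ≠ ic → ω' k = ω k := fun k hk => by rw [hω', Function.update_of_ne hk]
  have upc : ω' ic = c' := by rw [hω', Function.update_self]
  -- distance lemma for outside points
  have far : ∀ (z : E2), ‖z‖ ≤ 1 → z ∉ CS m j → ∀ θ0 ρ0, (j + 300) * w ≤ θ0 → θ0 < (j + 601) * w → 1 - 3100 * w ^ 2 ≤ ρ0 →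
      ip θ0 z < ρ0 := by
    intro z hz hzC θ0 ρ0 g1 g2 g3
    by_cases hd : 1 - 10000 * w ^ 2 ≤ ‖z‖
    · obtain ⟨θ, hθ, hθ1⟩ := pt_near z θ0
      rw [hθ, ip_pt]
      refine own w ρ0 _ _ hw hw1 g3 (norm_nonneg _) hz ?_ hθ1
      by_contra hcon
      push Not at hcon
      have := abs_lt.1 hcon
      exact hzC (CS_of_ang m hm j z θ hθ (by linarith) (by linarith) (by linarith) hd)
    · have := ip_le_norm θ0 z
      linarith
  -- own directions between marked points
  have near : ∀ ρ θ ρ0 θ0, 0 ≤ ρ → ρ ≤ 1 → 1 - 3100 * w ^ 2 ≤ ρ0 → 98 * w ≤ |θ0 - θ| → |θ0 - θ| ≤ 1000 * w →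
      ip θ0 (pt ρ θ) < ρ0 := by
    intro ρ θ ρ0 θ0 g1 g2 g3 g4 g5
    rw [ip_pt]
    exact own w ρ0 ρ _ hw hw1 g3 g1 g2 g4 (by linarith)
  have self : ∀ ρ θ, ip θ (pt ρ θ) = ρ := by intro ρ θ; rw [ip_pt]; simp
  have hρa0 : 0 ≤ ρa := norm_nonneg _
  have hρb0 : 0 ≤ ρb := norm_nonneg _
  have hρe0 : 0 ≤ ρe := norm_nonneg _
  have hρc0 : 0 ≤ ρc := norm_nonneg _
  -- all four in ω
  have big : ∀ (i0 : Fin n) θ0, ω i0 = pt ‖ω i0‖ θ0 → (j + 300) * w ≤ θ0 → θ0 < (j + 601) * w → 1 - 3100 * w ^ 2 ≤ ‖ω i0‖ →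
      (ia = i0 ∨ 98 * w ≤ |θ0 - θa|) → (ib = i0 ∨ 98 * w ≤ |θ0 - θb|) → (ie = i0 ∨ 98 * w ≤ |θ0 - θe|) →
      (ic = i0 ∨ 98 * w ≤ |θ0 - θc|) → ∀ k, k ≠ i0 → ip θ0 (ω k) < ip θ0 (ω i0) := by
    intro i0 θ0 h0 g1 g2 g3 ga gb ge gc k hk
    have hs : ip θ0 (ω i0) = ‖ω i0‖ := by rw [h0, self, ← h0]
    rw [hs]
    by_cases ka : k = ia
    · subst ka; rw [ea]
      exact near _ _ _ _ hρa0 hna g3 (ga.resolve_left hk) (abs_le.2 ⟨by linarith, by linarith⟩)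
    by_cases kb : k = ib
    · subst kb; rw [eb]
      exact near _ _ _ _ hρb0 hnb g3 (gb.resolve_left hk) (abs_le.2 ⟨by linarith, by linarith⟩)
    by_cases ke : k = ie
    · subst ke; rw [ee]
      exact near _ _ _ _ hρe0 hne g3 (ge.resolve_left hk) (abs_le.2 ⟨by linarith, by linarith⟩)
    by_cases kc : k = ic
    · subst kc; rw [ec]
      exact near _ _ _ _ hρc0 (by linarith) g3 (gc.resolve_left hk) (abs_le.2 ⟨by linarith, by linarith⟩)
    exact far (ω k) (hn k) (hC k ka kb ke kc) θ0 _ g1 g2 g3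
  have Ba := big ia θa ea (by linarith) (by linarith) (by linarith) (Or.inl rfl)
    (Or.inr (le_abs.2 (Or.inr (by linarith)))) (Or.inr (le_abs.2 (Or.inr (by linarith)))) (Or.inr (le_abs.2 (Or.inr (by linarith))))
  have Bb := big ib θb eb (by linarith) (by linarith) (by linarith) (Or.inr (le_abs.2 (Or.inl (by linarith))))
    (Or.inl rfl) (Or.inr (le_abs.2 (Or.inr (by linarith)))) (Or.inr (le_abs.2 (Or.inl (by linarith))))
  have Be := big ie θe ee (by linarith) (by linarith) (by linarith) (Or.inr (le_abs.2 (Or.inl (by linarith))))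
    (Or.inr (le_abs.2 (Or.inl (by linarith)))) (Or.inl rfl) (Or.inr (le_abs.2 (Or.inl (by linarith))))
  have Bc := big ic θc ec (by linarith) (by linarith) (by linarith) (Or.inr (le_abs.2 (Or.inl (by linarith))))
    (Or.inr (le_abs.2 (Or.inr (by linarith)))) (Or.inr (le_abs.2 (Or.inr (by linarith)))) (Or.inl rfl)
  have B' : ∀ (i0 : Fin n) θ0, i0 ≠ ic → ω i0 = pt ‖ω i0‖ θ0 → 1 - 100 * w ^ 2 ≤ ‖ω i0‖ →
      (∀ k, k ≠ i0 → ip θ0 (ω k) < ip θ0 (ω i0)) → LSep Set.univ ω' i0 := by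
    intro i0 θ0 hi h0 h1 h2
    refine ⟨θ0, fun k hk _ => ?_⟩
    rw [up i0 hi]
    by_cases kc : k = ic
    · subst kc
      rw [upc]
      have g1 := ip_le_norm θ0 c'
      have hs : ip θ0 (ω i0) = ‖ω i0‖ := by rw [h0, self, ← h0]
      rw [hs]; linarith
    · rw [up k kc]; exact h2 k hk
  have K1 : ∀ φ, ¬ (ip φ (ω ia) ≤ ip φ c' ∧ ip φ (ω ib) ≤ ip φ c' ∧ ip φ (ω ie) ≤ ip φ c') := by
    rintro φ ⟨g1, g2, g3⟩
    rw [ec', ip_pt] at g1 g2 g3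
    rw [ea, ip_pt] at g1
    rw [eb, ip_pt] at g2
    rw [ee, ip_pt] at g3
    refine geo1 w (φ - θ') ρa ρb ρe ρc (θ' - θa) (θ' - θb) (θe - θ') hw hw1 ra rb re hna hnb hne rc rc1
      (by linarith) (by linarith) (by linarith) (by linarith) (by linarith) (by linarith) ?_ ?_ ?_
    · rw [show φ - θ' - -(θ' - θa) = φ - θa by ring]; exact g1
    · rw [show φ - θ' - -(θ' - θb) = φ - θb by ring]; exact g2
    · rw [show φ - θ' - (θe - θ') = φ - θe by ring]; exact g3
  have main : ∀ i, i ≠ ic → (LSep Set.univ ω i ↔ LSep Set.univ ω' i) := by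
    intro i hi
    by_cases ka : i = ia
    · subst ka
      exact iff_of_true ⟨θa, fun k hk _ => Ba k hk⟩ (B' i θa hi ea ra Ba)
    by_cases kb : i = ib
    · subst kb
      exact iff_of_true ⟨θb, fun k hk _ => Bb k hk⟩ (B' i θb hi eb rb Bb)
    by_cases ke : i = ie
    · subst ke
      exact iff_of_true ⟨θe, fun k hk _ => Be k hk⟩ (B' i θe hi ee re Be)
    constructor
    · rintro ⟨φ, h⟩
      refine ⟨φ, fun k hk _ => ?_⟩
      rw [up i hi]
      by_cases kc : k = ic
      · subst kc
        rw [upc]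
        by_contra hcon
        push Not at hcon
        exact K1 φ ⟨(h ia (Ne.symm ka) trivial).le.trans hcon, (h ib (Ne.symm kb) trivial).le.trans hcon,
          (h ie (Ne.symm ke) trivial).le.trans hcon⟩
      · rw [up k kc]; exact h k hk trivial
    · rintro ⟨φ', h'⟩
      -- shift φ
      obtain ⟨k0, hk0⟩ : ∃ k0 : ℤ, |φ' + k0 * (2 * Real.pi) - θc| ≤ Real.pi := by
        refine ⟨-round ((φ' - θc) / (2 * Real.pi)), ?_⟩
        have g := abs_sub_round ((φ' - θc) / (2 * Real.pi))
        have e : φ' + ((-round ((φ' - θc) / (2 * Real.pi)) : ℤ) : ℝ) * (2 * Real.pi) - θc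
            = ((φ' - θc) / (2 * Real.pi) - round ((φ' - θc) / (2 * Real.pi))) * (2 * Real.pi) := by
          push_cast
          rw [sub_mul, div_mul_cancel₀ _ (by positivity)]; ring
        rw [e, abs_mul, abs_of_pos Real.two_pi_pos]
        have := mul_le_mul_of_nonneg_right g Real.two_pi_pos.le
        linarith
      set φ := φ' + k0 * (2 * Real.pi) with hφ
      have h : ∀ k, k ≠ i → ip φ (ω' k) < ip φ (ω' i) := by
        intro k hk
        rw [hφ, ip_add_int, ip_add_int]; exact h' k hk trivial
      refine ⟨φ, fun k hk _ => ?_⟩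
      rw [up i hi] at h
      by_cases kc : k = ic
      · subst kc
        by_contra hcon
        push Not at hcon
        have ga := h ia (Ne.symm ka)
        have gb := h ib (Ne.symm kb)
        rw [up _ hac, ea, ip_pt] at ga
        rw [up _ hbc, eb, ip_pt] at gb
        obtain ⟨θz, hz, hz1⟩ := pt_near (ω i) φ
        rw [hz, ip_pt] at ga gb hcon
        rw [ec, ip_pt] at hcon
        obtain ⟨k1, k2, k3⟩ := geo3 w (φ - θc) ρa ρb ρc ‖ω i‖ (θc - θa) (θb - θc) (φ - θz) hw hw1 ra rb hna hnb rc rc1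
          (by linarith) (by linarith) (by linarith) (by linarith) hk0 (norm_nonneg _) (hn i) hz1 hcon
          (by rw [show φ - θc - -(θc - θa) = φ - θa by ring]; exact ga)
          (by rw [show φ - θc - (θb - θc) = φ - θb by ring]; exact gb)
        have k4 := abs_le.1 k2
        have k5 := abs_le.1 k3
        exact hC i ka kb ke hi (CS_of_ang m hm j (ω i) θz hz (by linarith) (by linarith) (by linarith) k1)
      · have := h k hk
        rwa [up k kc] at this
  have cin : LSep Set.univ ω ic := ⟨θc, fun k hk _ => Bc k hk⟩
  have cout : ¬ LSep Set.univ ω' ic := by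
    rintro ⟨φ, h⟩
    have ga := h ia hac trivial
    have gb := h ib hbc trivial
    have ge := h ie hec trivial
    rw [upc, up _ hac] at ga
    rw [upc, up _ hbc] at gb
    rw [upc, up _ hec] at ge
    exact K1 φ ⟨ga.le, gb.le, ge.le⟩
  have hins : (Finset.univ.filter fun i => LSep Set.univ ω i) = insert ic (Finset.univ.filter fun i => LSep Set.univ ω' i) := by
    ext i
    simp only [Finset.mem_filter, Finset.mem_univ, true_and, Finset.mem_insert]
    by_cases hi : i = ic
    · subst hi; simp [cin]
    · simp [hi, main i hi]
  unfold Vc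
  rw [hins, Finset.card_insert_of_notMem (by simpa using cout)]
  push_cast; ring

lemma var_lower {Ω ι : Type*} [MeasurableSpace Ω] [Fintype ι] (P : Measure Ω) [IsProbabilityMeasure P]
    (V : Ω → ℝ) (hV : Measurable V) (M : ℝ) (hM : ∀ ω, |V ω| ≤ M)
    (E : ι → Set Ω) (hE : ∀ j, MeasurableSet (E j)) (T : ι → Ω → Ω) (hT : ∀ j, MeasurePreserving (T j) P P)
    (hTT : ∀ j ω, T j (T j ω) = ω) (h1 : ∀ j, ∀ᵐ ω ∂P, ω ∈ E j → V ω - V (T j ω) = 1)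
    (h2 : ∀ j k, j ≠ k → ∀ ω, T j ω ∈ E k ↔ ω ∈ E k)
    (h3 : ∀ j k, j ≠ k → ∀ ω, T k (T j ω) ∈ E k ↔ T k ω ∈ E k) :
    1 / 2 * ∑ j, P.real (E j) ≤ ∫ ω, (V ω - ∫ ω, V ω ∂P) ^ 2 ∂P := by
  classical
  set f : ι → Ω → ℝ := fun j => (E j).indicator 1 with hf
  set l : ι → Ω → ℝ := fun j ω => f j ω - f j (T j ω) with hl
  have hfm : ∀ j, Measurable (f j) := fun j => measurable_one.indicator (hE j)
  have hlm : ∀ j, Measurable (l j) := fun j => (hfm j).sub ((hfm j).comp (hT j).measurable)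
  have hf0 : ∀ j ω, 0 ≤ f j ω := fun j ω => Set.indicator_nonneg (fun _ _ => zero_le_one) _
  have hf1 : ∀ j ω, f j ω ≤ 1 := fun j ω => Set.indicator_le_self' (fun _ _ => zero_le_one) _
  have hl1 : ∀ j ω, |l j ω| ≤ 1 := fun j ω => abs_le.2
    ⟨by have := hf0 j ω; have := hf1 j (T j ω); simp only [hl]; linarith,
     by have := hf0 j (T j ω); have := hf1 j ω; simp only [hl]; linarith⟩
  have hM0 : 0 ≤ M := by
    have : Nonempty Ω := by
      by_contra hcon
      rw [not_nonempty_iff] at hcon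
      have := measure_univ (μ := P)
      rw [Set.eq_empty_of_isEmpty (Set.univ : Set Ω)] at this
      simp at this
    exact (abs_nonneg _).trans (hM (Classical.arbitrary Ω))
  have hlT : ∀ j ω, l j (T j ω) = - l j ω := by
    intro j ω; simp only [hl, hTT]; ring
  have hlk : ∀ j k, j ≠ k → ∀ ω, l k (T j ω) = l k ω := by
    intro j k hjk ω
    simp only [hl, hf, Set.indicator_apply, h2 j k hjk, h3 j k hjk, Pi.one_apply]
  have iV : Integrable V P := integrable_bdd hV.aestronglyMeasurable (C := M) hM
  have il : ∀ j, Integrable (l j) P := fun j => integrable_bdd (hlm j).aestronglyMeasurable (C := 1) (hl1 j)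
  have if_ : ∀ j, Integrable (f j) P := fun j => integrable_bdd (hfm j).aestronglyMeasurable (C := 1)
    (fun ω => by rw [Real.norm_eq_abs, abs_of_nonneg (hf0 j ω)]; exact hf1 j ω)
  have ifint : ∀ j, ∫ ω, f j ω ∂P = P.real (E j) := fun j => integral_indicator_one (hE j)
  have ifT : ∀ j, ∫ ω, f j (T j ω) ∂P = P.real (E j) := fun j => by
    rw [mp_integral (f := f j) (hT j) (hfm j).aestronglyMeasurable, ifint]
  have ifTi : ∀ j, Integrable (fun ω => f j (T j ω)) P := fun j => integrable_bdd
    ((hfm j).comp (hT j).measurable).aestronglyMeasurable (C := 1)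
    (fun ω => by rw [Real.norm_eq_abs, abs_of_nonneg (hf0 j _)]; exact hf1 j _)
  have el : ∀ j, ∫ ω, l j ω ∂P = 0 := by
    intro j
    simp only [hl]
    rw [integral_sub (if_ j) (ifTi j), ifint, ifT, sub_self]
  have iVf : ∀ j, Integrable (fun ω => V ω * f j ω) P := fun j => integrable_bdd
    (hV.mul (hfm j)).aestronglyMeasurable (C := M * 1) (fun ω => by
      rw [Real.norm_eq_abs, abs_mul]; exact mul_le_mul (hM ω) (by rw [abs_of_nonneg (hf0 j _)]; exact hf1 j _) (abs_nonneg _) hM0)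
  have iVfT : ∀ j, Integrable (fun ω => V ω * f j (T j ω)) P := fun j => integrable_bdd
    (hV.mul ((hfm j).comp (hT j).measurable)).aestronglyMeasurable (C := M * 1) (fun ω => by
      rw [Real.norm_eq_abs, abs_mul]; exact mul_le_mul (hM ω) (by rw [abs_of_nonneg (hf0 j _)]; exact hf1 j _) (abs_nonneg _) hM0)
  have iVTf : ∀ j, Integrable (fun ω => V (T j ω) * f j ω) P := fun j => integrable_bdd
    ((hV.comp (hT j).measurable).mul (hfm j)).aestronglyMeasurable (C := M * 1) (fun ω => by
      rw [Real.norm_eq_abs, abs_mul]; exact mul_le_mul (hM _) (by rw [abs_of_nonneg (hf0 j _)]; exact hf1 j _) (abs_nonneg _) hM0)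
  have eVl : ∀ j, ∫ ω, V ω * l j ω ∂P = P.real (E j) := by
    intro j
    have e1 : ∫ ω, V ω * f j (T j ω) ∂P = ∫ ω, V (T j ω) * f j ω ∂P := by
      have := mp_integral (f := fun ω => V ω * f j (T j ω)) (hT j) (hV.mul ((hfm j).comp (hT j).measurable)).aestronglyMeasurable
      rw [← this]; simp only [hTT]
    simp only [hl, mul_sub]
    rw [integral_sub (iVf j) (iVfT j), e1, ← integral_sub (iVf j) (iVTf j), ← ifint]
    refine integral_congr_ae ?_
    filter_upwards [h1 j] with ω hω
    by_cases hm : ω ∈ E j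
    · have := hω hm
      simp only [hf, Set.indicator_of_mem hm, Pi.one_apply]; linarith
    · simp [hf, Set.indicator_of_notMem hm]
  have ill : ∀ j k, Integrable (fun ω => l j ω * l k ω) P := fun j k => integrable_bdd
    ((hlm j).mul (hlm k)).aestronglyMeasurable (C := 1 * 1) (fun ω => by
      rw [Real.norm_eq_abs, abs_mul]; exact mul_le_mul (hl1 j ω) (hl1 k ω) (abs_nonneg _) zero_le_one)
  have ell : ∀ j k, j ≠ k → ∫ ω, l j ω * l k ω ∂P = 0 := by
    intro j k hjk
    have := mp_integral (f := fun ω => l j ω * l k ω) (hT j) ((hlm j).mul (hlm k)).aestronglyMeasurable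
    simp only [hlT, hlk j k hjk, neg_mul, integral_neg] at this
    linarith
  have ell2 : ∀ j, ∫ ω, l j ω * l j ω ∂P ≤ 2 * P.real (E j) := by
    intro j
    have : ∫ ω, l j ω * l j ω ∂P ≤ ∫ ω, f j ω + f j (T j ω) ∂P := by
      refine integral_mono (ill j j) ((if_ j).add (ifTi j)) fun ω => ?_
      have a1 := hf0 j ω
      have a2 := hf1 j ω
      have b1 := hf0 j (T j ω)
      have b2 := hf1 j (T j ω)
      simp only [hl]
      nlinarith only [a1, a2, b1, b2, mul_nonneg a1 b1, mul_nonneg a1 (sub_nonneg.2 a2), mul_nonneg b1 (sub_nonneg.2 b2)]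
    rw [integral_add (if_ j) (ifTi j), ifint, ifT] at this
    linarith
  set mV := ∫ ω, V ω ∂P with hmV
  set S : Ω → ℝ := fun ω => ∑ j, l j ω with hS
  have hSm : Measurable S := Finset.measurable_fun_sum _ fun j _ => hlm j
  have eSV : ∫ ω, V ω * S ω ∂P = ∑ j, P.real (E j) := by
    simp only [hS, Finset.mul_sum]
    rw [integral_finsetSum]
    · simp only [eVl]
    · intro j _
      simp only [hl, mul_sub]
      exact (iVf j).sub (iVfT j)
  have iSV : Integrable (fun ω => V ω * S ω) P := by
    simp only [hS, Finset.mul_sum]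
    refine integrable_finsetSum _ fun j _ => ?_
    simp only [hl, mul_sub]
    exact (iVf j).sub (iVfT j)
  have iS : Integrable S P := integrable_finsetSum _ fun j _ => il j
  have eS : ∫ ω, S ω ∂P = 0 := by
    simp only [hS]
    rw [integral_finsetSum _ fun j _ => il j]
    simp [el]
  have iSS : Integrable (fun ω => S ω ^ 2) P := by
    simp only [hS, sq, Finset.sum_mul_sum]
    exact integrable_finsetSum _ fun j _ => integrable_finsetSum _ fun k _ => ill j k
  have eSS : ∫ ω, S ω ^ 2 ∂P ≤ 2 * ∑ j, P.real (E j) := by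
    simp only [hS, sq, Finset.sum_mul_sum]
    rw [integral_finsetSum _ fun j _ => integrable_finsetSum _ fun k _ => ill j k, Finset.mul_sum]
    refine Finset.sum_le_sum fun j _ => ?_
    rw [integral_finsetSum _ fun k _ => ill j k, Finset.sum_eq_single j]
    · exact ell2 j
    · intro k _ hk; exact ell j k (Ne.symm hk)
    · simp
  have iVV : Integrable (fun ω => (V ω - mV) ^ 2) P := by
    refine integrable_bdd ((hV.sub_const _).pow_const 2).aestronglyMeasurable (C := (M + |mV|) ^ 2) fun ω => ?_
    rw [Real.norm_eq_abs, abs_pow]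
    exact pow_le_pow_left₀ (abs_nonneg _) ((abs_sub _ _).trans (by linarith [hM ω])) 2
  have key : 0 ≤ ∫ ω, (V ω - mV - 1 / 2 * S ω) ^ 2 ∂P := integral_nonneg fun ω => sq_nonneg _
  have ex : (fun ω => (V ω - mV - 1 / 2 * S ω) ^ 2)
      = fun ω => (V ω - mV) ^ 2 - V ω * S ω + mV * S ω + 1 / 4 * S ω ^ 2 := by ext ω; ring
  have i1 : Integrable (fun ω => (V ω - mV) ^ 2 - V ω * S ω) P := iVV.sub iSV
  have i2 : Integrable (fun ω => mV * S ω) P := iS.const_mul _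
  have i3 : Integrable (fun ω => 1 / 4 * S ω ^ 2) P := iSS.const_mul _
  have i4 : Integrable (fun ω => (V ω - mV) ^ 2 - V ω * S ω + mV * S ω) P := i1.add i2
  rw [ex, integral_add i4 i3, integral_add i1 i2, integral_sub iVV iSV, integral_const_mul, integral_const_mul,
    eSV, eS] at key
  linarith

def EV {n : ℕ} (m : ℕ) (j : ℤ) : Set (Fin n → E2) :=
  {ω | ∃ g : Fin 4 ↪ Fin n, (∀ t, ω (g t) ∈ PS m j t) ∧ ∀ i, i ∉ Set.range g → ω i ∉ CS m j}

noncomputable def sg (m : ℕ) (j : ℤ) : E2 ≃ₗᵢ[ℝ] E2 := rfl2 ((2 * j + 951) * ww m)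
def US (m : ℕ) (j : ℤ) : Set E2 := RS m j ∪ sg m j ⁻¹' RS m j

open Classical in
noncomputable def ta (m : ℕ) (j : ℤ) : E2 → E2 := (US m j).piecewise (sg m j) id

lemma sg_sg (m j x) : sg m j (sg m j x) = x := rfl2_rfl2 _ _

lemma RS_meas (m j) : MeasurableSet (RS m j) := (cellA_meas _ _ _).diff (cellA_meas _ _ _)

lemma US_inv (m j) : sg m j ⁻¹' US m j = US m j := by
  ext x; simp only [US, Set.mem_preimage, Set.mem_union, sg_sg]; tauto

lemma US_meas (m j) : MeasurableSet (US m j) :=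
  (RS_meas m j).union ((sg m j).continuous.measurable (RS_meas m j))

lemma PS_meas (m j t) : MeasurableSet (PS m j t) := by
  fin_cases t <;> simp only [PS]
  · exact cellA_meas _ _ _
  · exact cellA_meas _ _ _
  · exact cellA_meas _ _ _
  · exact RS_meas _ _

lemma CS_eq (m : ℕ) (j : ℤ) : CS m j = ⋃ i ∈ Finset.Ico (0:ℤ) 1000, cellA m ((j + i : ℤ) : ZMod m) (1 - 10000 * ww m ^ 2) := by
  ext x
  simp only [CS, cellA, Set.mem_ofPred_eq, Set.mem_iUnion, Finset.mem_Ico]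
  constructor
  · rintro ⟨⟨i, h1, h2, h3⟩, h4⟩; exact ⟨i, ⟨h1, h2⟩, h3, h4⟩
  · rintro ⟨i, ⟨h1, h2⟩, h3, h4⟩; exact ⟨⟨i, h1, h2, h3⟩, h4⟩

lemma CS_meas (m j) : MeasurableSet (CS m j) := by
  rw [CS_eq]; exact Finset.measurableSet_biUnion _ fun i _ => cellA_meas _ _ _

lemma PS_CS (m : ℕ) (j : ℤ) (t) : PS m j t ⊆ CS m j := by
  have h := sq_nonneg (ww m)
  fin_cases t
  · exact fun x hx => ⟨⟨300, by norm_num, by norm_num, hx.1⟩, by have := hx.2; linarith⟩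
  · exact fun x hx => ⟨⟨500, by norm_num, by norm_num, hx.1⟩, by have := hx.2; linarith⟩
  · exact fun x hx => ⟨⟨600, by norm_num, by norm_num, hx.1⟩, by have := hx.2; linarith⟩
  · exact fun x hx => ⟨⟨400, by norm_num, by norm_num, hx.1.1⟩, by have := hx.1.2; linarith⟩

lemma ww_sq (m : ℕ) (hm : 0 < m) (hw1 : ww m ≤ 1 / 100000) : ww m ^ 2 ≤ 1 / 10000000000 := by
  have := pow_le_pow_left₀ (ww_pos m hm).le hw1 2
  norm_num at this ⊢; linarith

lemma US_CS (m : ℕ) (hm : 0 < m) (hw1 : ww m ≤ 1 / 100000) (j : ℤ) : US m j ⊆ CS m j := by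
  have hw := ww_pos m hm
  have hw2 := ww_sq m hm hw1
  have h := sq_nonneg (ww m)
  rintro x (hx | hx)
  · exact PS_CS m j 3 hx
  · obtain ⟨θ, e, a1, a2⟩ := idx_rep m hm _ _ hx.1.1
    have hr : 1 - 3100 * ww m ^ 2 ≤ ‖sg m j x‖ := hx.1.2
    rw [LinearIsometryEquiv.norm_map] at hr
    change _ * ww m ≤ _ at a1
    change _ < _ * ww m at a2
    push_cast at a1 a2
    refine CS_of_ang m hm j x ((2 * j + 951) * ww m - θ) ?_ (by linarith) (by linarith) (by linarith) (by linarith)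
    have : x = sg m j (sg m j x) := (sg_sg m j x).symm
    rw [this, e, LinearIsometryEquiv.norm_map, sg, rfl2_pt,
      norm_pt _ _ (norm_nonneg _)]

lemma US_norm (m : ℕ) (j : ℤ) (x) (hx : x ∈ US m j) : ‖x‖ < 1 - 2900 * ww m ^ 2 := by
  rcases hx with hx | hx
  · by_contra hcon
    push Not at hcon
    exact hx.2 ⟨hx.1.1, hcon⟩
  · by_contra hcon
    push Not at hcon
    refine hx.2 ⟨hx.1.1, ?_⟩
    rw [LinearIsometryEquiv.norm_map]; exact hcon

lemma ta_or (m : ℕ) (hm : 0 < m) (hw1 : ww m ≤ 1 / 100000) (j : ℤ) (x : E2) :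
    ta m j x = x ∨ (x ∈ CS m j ∧ ta m j x ∈ CS m j) := by
  classical
  by_cases hx : x ∈ US m j
  · right
    refine ⟨US_CS m hm hw1 j hx, US_CS m hm hw1 j ?_⟩
    rw [ta, Set.piecewise_eq_of_mem _ _ _ hx]
    rw [← US_inv] at hx; exact hx
  · left
    rw [ta, Set.piecewise_eq_of_notMem _ _ _ hx]; rfl

lemma ta_of (m : ℕ) (j : ℤ) (x : E2) (hx : x ∉ US m j) : ta m j x = x := by
  classical
  rw [ta, Set.piecewise_eq_of_notMem _ _ _ hx]; rfl

lemma ta_ta (m j x) : ta m j (ta m j x) = x := by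
  classical
  by_cases hx : x ∈ US m j
  · have h2 : sg m j x ∈ US m j := by rw [← US_inv] at hx; exact hx
    rw [ta, Set.piecewise_eq_of_mem _ _ _ hx, Set.piecewise_eq_of_mem _ _ _ h2, sg_sg]
  · rw [ta_of _ _ _ hx, ta_of _ _ _ hx]

lemma CS_dis (J : ℕ) (a b : Fin J) (hab : a ≠ b) (x) (h1 : x ∈ CS (1000 * J) (1000 * (a:ℕ) : ℤ)) :
    x ∉ CS (1000 * J) (1000 * (b:ℕ) : ℤ) := by
  intro h2
  obtain ⟨⟨i, i1, i2, i3⟩, -⟩ := h1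
  obtain ⟨⟨k, k1, k2, k3⟩, -⟩ := h2
  rw [i3, ZMod.intCast_eq_intCast_iff_dvd_sub] at k3
  have ha := a.2
  have hb := b.2
  have hne : (a:ℕ) ≠ b := fun h => hab (Fin.ext h)
  have := Int.eq_zero_of_abs_lt_dvd k3 (by rw [abs_lt]; push_cast; constructor <;> omega)
  omega

lemma swap_EV {n : ℕ} (m : ℕ) (hm : 0 < m) (hw1 : ww m ≤ 1 / 100000) (j : ℤ) (ω : Fin n → E2)
    (hn : ∀ i, ‖ω i‖ ≤ 1) (h : ω ∈ EV m j) : Vc ω - Vc (fun i => ta m j (ω i)) = 1 := by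
  classical
  obtain ⟨g, hg, hC⟩ := h
  have hw := ww_pos m hm
  have h0 : 0 < ww m ^ 2 := by positivity
  have ne : ∀ s t, s ≠ t → g s ≠ g t := fun s t hst h => hst (g.injective h)
  have key := swap_geo m hm hw1 j ω hn (g 0) (g 1) (g 2) (g 3) (ne _ _ (by decide)) (ne _ _ (by decide)) (ne _ _ (by decide))
    (hg 0) (hg 1) (hg 2) (hg 3) (fun i a b c d => hC i (by
      rintro ⟨t, rfl⟩
      fin_cases t
      · exact a rfl
      · exact b rfl
      · exact c rfl
      · exact d rfl))
  convert key using 3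
  funext i
  by_cases hi : i ∈ Set.range g
  · obtain ⟨t, rfl⟩ := hi
    have hU : ∀ x, 1 - 100 * ww m ^ 2 ≤ ‖x‖ → x ∉ US m j := by
      intro x hx hx'
      have := US_norm m j x hx'
      linarith
    fin_cases t
    · rw [Function.update_of_ne (ne _ _ (by decide))]; exact ta_of _ _ _ (hU _ (hg 0).2)
    · rw [Function.update_of_ne (ne _ _ (by decide))]; exact ta_of _ _ _ (hU _ (hg 1).2)
    · rw [Function.update_of_ne (ne _ _ (by decide))]; exact ta_of _ _ _ (hU _ (hg 2).2)
    · have h3 : ω (g 3) ∈ US m j := Or.inl (hg 3)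
      change ta m j (ω (g 3)) = Function.update ω (g 3) _ (g 3)
      rw [Function.update_self, ta, Set.piecewise_eq_of_mem _ _ _ h3]; rfl
  · rw [Function.update_of_ne (fun h => hi ⟨3, h.symm⟩)]
    exact ta_of _ _ _ fun h => hC i hi (US_CS m hm hw1 j h)

def bx {n : ℕ} (m : ℕ) (j : ℤ) (g : Fin 4 ↪ Fin n) (i : Fin n) : Set E2 :=
  {x | (∀ t, g t = i → x ∈ PS m j t) ∧ (i ∉ Set.range g → x ∉ CS m j)}

lemma bx_g {n : ℕ} (m : ℕ) (j : ℤ) (g : Fin 4 ↪ Fin n) (t) : bx m j g (g t) = PS m j t := by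
  ext x; simp [bx]

lemma bx_o {n : ℕ} (m : ℕ) (j : ℤ) (g : Fin 4 ↪ Fin n) (i) (hi : i ∉ Set.range g) : bx m j g i = (CS m j)ᶜ := by
  ext x
  simp only [bx, Set.mem_ofPred_eq, Set.mem_compl_iff, hi, not_false_eq_true, true_imp_iff, and_iff_right_iff_imp]
  intro _ t ht
  exact absurd ⟨t, ht⟩ hi

lemma bx_meas {n : ℕ} (m : ℕ) (j : ℤ) (g : Fin 4 ↪ Fin n) (i) : MeasurableSet (bx m j g i) := by
  by_cases hi : i ∈ Set.range g
  · obtain ⟨t, rfl⟩ := hi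
    rw [bx_g]; exact PS_meas _ _ _
  · rw [bx_o _ _ _ _ hi]; exact (CS_meas _ _).compl

lemma EV_eq {n : ℕ} (m : ℕ) (j : ℤ) : (EV m j : Set (Fin n → E2)) = ⋃ g : Fin 4 ↪ Fin n, Set.univ.pi (bx m j g) := by
  ext ω
  simp only [EV, Set.mem_ofPred_eq, Set.mem_iUnion, Set.mem_pi, Set.mem_univ, true_imp_iff, bx]
  refine exists_congr fun g => ⟨fun h i => ⟨fun t ht => ht ▸ h.1 t, h.2 i⟩, fun h => ⟨fun t => (h (g t)).1 t rfl, fun i => (h i).2⟩⟩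

lemma EV_meas {n : ℕ} (m : ℕ) (j : ℤ) : MeasurableSet (EV m j : Set (Fin n → E2)) := by
  rw [EV_eq]
  exact MeasurableSet.iUnion fun g => MeasurableSet.univ_pi fun i => bx_meas _ _ _ _

lemma PS_dis (J : ℕ) (hJ : 0 < J) (j : ℤ) (s t : Fin 4) (hst : s ≠ t) (x) (h1 : x ∈ PS (1000 * J) j s) : x ∉ PS (1000 * J) j t := by
  intro h2
  have key : ∀ a b : ℤ, a ≠ b → |b - a| < 1000 → idx (1000 * J) x = ((j + a : ℤ) : ZMod (1000 * J)) →
      idx (1000 * J) x = ((j + b : ℤ) : ZMod (1000 * J)) → False := by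
    intro a b hab hl e1 e2
    rw [e1, ZMod.intCast_eq_intCast_iff_dvd_sub] at e2
    rw [abs_lt] at hl
    have := Int.eq_zero_of_abs_lt_dvd e2 (by rw [abs_lt]; push_cast; constructor <;> omega)
    omega
  have e : ∀ t, x ∈ PS (1000 * J) j t → idx (1000 * J) x = ((j + (![300, 500, 600, 400] t) : ℤ) : ZMod (1000 * J)) := by
    intro t ht
    fin_cases t
    · exact ht.1
    · exact ht.1
    · exact ht.1
    · exact ht.1.1
  refine key _ _ ?_ ?_ (e s h1) (e t h2)
  · have e1 : ∀ s t : Fin 4, s ≠ t → (![300, 500, 600, 400] : Fin 4 → ℤ) s ≠ ![300, 500, 600, 400] t := by decide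
    exact e1 s t hst
  · have e1 : ∀ s t : Fin 4, |(![300, 500, 600, 400] : Fin 4 → ℤ) t - ![300, 500, 600, 400] s| < 1000 := by decide
    exact e1 s t

lemma EV_prob {n : ℕ} (J : ℕ) (hJ : 0 < J) (j : ℤ) (μ : Measure E2) [IsProbabilityMeasure μ] (p p' : ℝ)
    (hp : 0 ≤ p) (h1 : ∀ t, p ≤ μ.real (PS (1000 * J) j t)) (h2 : μ.real (CS (1000 * J) j) ≤ p') (hp' : p' ≤ 1) :
    (n.descFactorial 4 : ℝ) * (p ^ 4 * (1 - p') ^ n) ≤ (Measure.pi fun _ : Fin n => μ).real (EV (1000 * J) j) := by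
  classical
  rw [EV_eq, measureReal_iUnion_fintype]
  · have hc : (n.descFactorial 4 : ℝ) = ∑ g : Fin 4 ↪ Fin n, (1:ℝ) := by
      simp [Fintype.card_embedding_eq]
    rw [hc, Finset.sum_mul]
    refine Finset.sum_le_sum fun g _ => ?_
    rw [one_mul, Measure.real, Measure.pi_pi, ENNReal.toReal_prod]
    change _ ≤ ∏ i, μ.real (bx _ _ g i)
    rw [← Finset.prod_mul_prod_compl (Finset.univ.map g)]
    refine mul_le_mul ?_ ?_ (pow_nonneg (by linarith) _) (Finset.prod_nonneg fun _ _ => measureReal_nonneg)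
    · rw [Finset.prod_map]
      have : p ^ 4 = ∏ t : Fin 4, p := by simp
      rw [this]
      refine Finset.prod_le_prod (fun _ _ => hp) fun t _ => ?_
      rw [bx_g]; exact h1 t
    · have hcard : ((Finset.univ.map g)ᶜ : Finset (Fin n)).card ≤ n := by
        simpa using Finset.card_le_univ ((Finset.univ.map g)ᶜ : Finset (Fin n))
      refine (pow_le_pow_of_le_one (by linarith) (by linarith [measureReal_nonneg (μ := μ) (s := CS (1000 * J) j)]) hcard).trans ?_
      rw [← Finset.prod_const]
      refine Finset.prod_le_prod (fun _ _ => by linarith) fun i hi => ?_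
      rw [bx_o _ _ _ _ (by simpa using hi), probReal_compl_eq_one_sub (CS_meas _ _)]
      linarith
  · intro g g' hgg
    refine Set.disjoint_left.2 fun ω h1 h2 => ?_
    obtain ⟨t, ht⟩ : ∃ t, g t ≠ g' t := by
      by_contra hcon
      push Not at hcon
      exact hgg (Function.Embedding.ext hcon)
    have a1 := h1 (g t) trivial
    rw [bx_g] at a1
    have a2 := h2 (g t) trivial
    by_cases hr : g t ∈ Set.range g'
    · obtain ⟨s, hs⟩ := hr
      rw [← hs, bx_g, hs] at a2
      exact PS_dis J hJ j t s (fun h => ht (by rw [h] at hs; subst h; exact hs.symm)) _ a1 a2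
    · rw [bx_o _ _ _ _ hr] at a2
      exact a2 (PS_CS _ _ _ a1)
  · intro g; exact MeasurableSet.univ_pi fun i => bx_meas _ _ _ _

lemma var_main {n : ℕ} (β : ℝ) (hβ : 0 ≤ β) (J : ℕ) (hJ : 0 < J) (hw1 : ww (1000 * J) ≤ 1 / 100000) (p p' : ℝ)
    (hp : 0 ≤ p) (h1 : ∀ j t, p ≤ (betaMeasure β).real (PS (1000 * J) j t))
    (h2 : ∀ j, (betaMeasure β).real (CS (1000 * J) j) ≤ p') (hp' : p' ≤ 1) :
    1 / 2 * (J * ((n.descFactorial 4 : ℝ) * (p ^ 4 * (1 - p') ^ n))) ≤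
      ∫ ω, (Vc ω - ∫ ω, Vc ω ∂betaPi β n) ^ 2 ∂betaPi β n := by
  classical
  have := beta_prob β hβ
  have hm : 0 < 1000 * J := by omega
  have hP : IsProbabilityMeasure (betaPi β n) := by unfold betaPi; infer_instance
  have key := var_lower (ι := Fin J) (betaPi β n) (Vc : (Fin n → E2) → ℝ) (Vc_meas n) n
    (fun ω => by rw [abs_of_nonneg (Vc_nonneg ω)]; exact Vc_le ω)
    (fun j => EV (1000 * J) (1000 * (j:ℕ) : ℤ)) (fun j => EV_meas _ _)
    (fun j ω i => ta (1000 * J) (1000 * (j:ℕ) : ℤ) (ω i))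
    (fun j => measurePreserving_pi _ _ fun _ => mp_piecewise (beta_mp β (sg _ _)) (US_meas _ _) (US_inv _ _))
    (fun j ω => by funext i; exact ta_ta _ _ _) ?_ ?_ ?_
  · refine le_trans ?_ key
    have : ∑ j : Fin J, ((n.descFactorial 4 : ℝ) * (p ^ 4 * (1 - p') ^ n)) ≤
        ∑ j : Fin J, (betaPi β n).real (EV (1000 * J) (1000 * (j:ℕ) : ℤ)) :=
      Finset.sum_le_sum fun j _ => EV_prob J hJ _ (betaMeasure β) p p' hp (h1 _) (h2 _) hp'
    rw [Finset.sum_const, Finset.card_univ, Fintype.card_fin, nsmul_eq_mul] at this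
    linarith
  · intro j
    filter_upwards [pi_ae (betaMeasure β) n _ (beta_supp β)] with ω hω hE
    exact swap_EV _ hm hw1 _ ω hω hE
  · intro j k hjk ω
    have iff1 : ∀ (S : Set E2), S ⊆ CS (1000 * J) (1000 * (k:ℕ) : ℤ) → ∀ x, (ta (1000 * J) (1000 * (j:ℕ) : ℤ) x ∈ S ↔ x ∈ S) := by
      intro S hS x
      rcases ta_or _ hm hw1 (1000 * (j:ℕ) : ℤ) x with h | ⟨h, h'⟩
      · rw [h]
      · exact iff_of_false (fun h0 => CS_dis J j k hjk _ h' (hS h0)) (fun h0 => CS_dis J j k hjk _ h (hS h0))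
    simp only [EV, Set.mem_ofPred_eq]
    simp only [iff1 _ (PS_CS _ _ _), iff1 _ subset_rfl]
  · intro j k hjk ω
    have iff1 : ∀ (S : Set E2), S ⊆ CS (1000 * J) (1000 * (k:ℕ) : ℤ) → ∀ x,
        (ta (1000 * J) (1000 * (k:ℕ) : ℤ) (ta (1000 * J) (1000 * (j:ℕ) : ℤ) x) ∈ S ↔ ta (1000 * J) (1000 * (k:ℕ) : ℤ) x ∈ S) := by
      intro S hS x
      rcases ta_or _ hm hw1 (1000 * (j:ℕ) : ℤ) x with h | ⟨h, h'⟩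
      · rw [h]
      · have g1 := CS_dis J j k hjk _ h
        have g2 := CS_dis J j k hjk _ h'
        rw [ta_of _ _ _ (fun h => g1 (US_CS _ hm hw1 _ h)), ta_of _ _ _ (fun h => g2 (US_CS _ hm hw1 _ h))]
        exact iff_of_false (fun h0 => g2 (hS h0)) (fun h0 => g1 (hS h0))
    simp only [EV, Set.mem_ofPred_eq]
    simp only [iff1 _ (PS_CS _ _ _), iff1 _ subset_rfl]

lemma PS_lb (β : ℝ) (q : ℕ) (hq : 2 * β + 3 = q) (hβ : 0 ≤ β) (m : ℕ) (hm : 0 < m) (hw1 : ww m ≤ 1 / 100000) (j : ℤ) (t) :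
    1 / (m:ℝ) ^ q ≤ (betaMeasure β).real (PS m j t) := by
  have := beta_prob β hβ
  have hw := ww_pos m hm
  have hw2 := ww_sq m hm hw1
  have hw0 : 0 < ww m ^ 2 := by positivity
  have hm' : (0:ℝ) < m := by exact_mod_cast hm
  have hpi := Real.pi_gt_three
  have h1q : 1 ≤ q := by
    have : (1:ℝ) ≤ q := by linarith
    exact_mod_cast this
  have h0 : 1 / (m:ℝ) ^ q ≤ ((10 * ww m) ^ 2) ^ (β + 1) / m := by
    rw [tail_pow β q hq hβ _ (by positivity)]
    obtain ⟨k, rfl⟩ : ∃ k, q = k + 1 := ⟨q - 1, by omega⟩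
    rw [Nat.add_sub_cancel, div_le_div_iff₀ (by positivity) hm']
    have : 1 / (m:ℝ) ≤ 10 * ww m := by
      unfold ww; rw [← mul_div_assoc]; gcongr; linarith
    have := pow_le_pow_left₀ (by positivity) this k
    rw [div_pow, one_pow, div_le_iff₀ (by positivity)] at this
    rw [pow_succ]; nlinarith
  have hA : ∀ c, 1 / (m:ℝ) ^ q ≤ (betaMeasure β).real (cellA m c (1 - 100 * ww m ^ 2)) := by
    intro c
    rw [cellA_measure β hβ m hm c _ (by linarith) (by linarith)]
    refine h0.trans ?_
    gcongr
    nlinarith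
  fin_cases t
  · exact hA _
  · exact hA _
  · exact hA _
  · change _ ≤ (betaMeasure β).real (RS m j)
    have hsub : cellA m ((j + 400 : ℤ) : ZMod m) (1 - 2900 * ww m ^ 2) ⊆ cellA m ((j + 400 : ℤ) : ZMod m) (1 - 3100 * ww m ^ 2) :=
      fun x hx => ⟨hx.1, by have := hx.2; linarith⟩
    rw [RS, measureReal_sdiff hsub (cellA_meas _ _ _),
      cellA_measure β hβ m hm _ _ (by linarith) (by linarith), cellA_measure β hβ m hm _ _ (by linarith) (by linarith),
      ← sub_div]
    refine h0.trans ?_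
    gcongr
    set Y : ℝ := 1 - (1 - 2900 * ww m ^ 2) ^ 2 with hY
    have hY0 : 0 ≤ Y := by nlinarith
    have h3 : (10 * ww m) ^ 2 + Y ≤ 1 - (1 - 3100 * ww m ^ 2) ^ 2 := by nlinarith
    have h4 := NNReal.add_rpow_le_rpow_add (p := β + 1) ⟨(10 * ww m) ^ 2, by positivity⟩ ⟨Y, hY0⟩ (by linarith)
    have h5 : ((10 * ww m) ^ 2) ^ (β + 1) + Y ^ (β + 1) ≤ ((10 * ww m) ^ 2 + Y) ^ (β + 1) := by exact_mod_cast h4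
    have h6 : ((10 * ww m) ^ 2 + Y) ^ (β + 1) ≤ (1 - (1 - 3100 * ww m ^ 2) ^ 2) ^ (β + 1) :=
      Real.rpow_le_rpow (by positivity) h3 (by linarith)
    linarith

lemma CS_ub (β : ℝ) (q : ℕ) (hq : 2 * β + 3 = q) (hβ : 0 ≤ β) (J : ℕ) (hJ : 0 < J) (hw1 : ww (1000 * J) ≤ 1 / 100000) (j : ℤ) :
    (betaMeasure β).real (CS (1000 * J) j) ≤ 1 / (J:ℝ) ^ q := by
  have := beta_prob β hβ
  have hm : 0 < 1000 * J := by omega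
  have hw := ww_pos _ hm
  have hw2 := ww_sq _ hm hw1
  have hw0 : 0 < ww (1000 * J) ^ 2 := by positivity
  have hJ' : (0:ℝ) < J := by exact_mod_cast hJ
  have hpi := Real.pi_lt_d2
  have hpi0 := Real.pi_pos
  have h1q : 1 ≤ q := by
    have : (1:ℝ) ≤ q := by linarith
    exact_mod_cast this
  rw [CS_eq]
  refine (measureReal_biUnion_finset_le _ _).trans ?_
  have h : ∀ i ∈ Finset.Ico (0:ℤ) 1000, (betaMeasure β).real (cellA (1000 * J) ((j + i : ℤ) : ZMod (1000 * J)) (1 - 10000 * ww (1000 * J) ^ 2))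
      ≤ ((150 * ww (1000 * J)) ^ 2) ^ (β + 1) / (1000 * J : ℕ) := by
    intro i _
    rw [cellA_measure β hβ _ hm _ _ (by linarith) (by linarith)]
    gcongr
    · nlinarith
    · nlinarith
  refine (Finset.sum_le_sum h).trans ?_
  rw [Finset.sum_const, tail_pow β q hq hβ _ (by positivity)]
  simp only [Int.card_Ico, nsmul_eq_mul]
  obtain ⟨k, rfl⟩ : ∃ k, q = k + 1 := ⟨q - 1, by omega⟩
  rw [Nat.add_sub_cancel]
  have h2 : 150 * ww (1000 * J) ≤ 1 / J := by
    unfold ww; push_cast; rw [← mul_div_assoc, div_le_div_iff₀ (by positivity) hJ']; nlinarith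
  have h3 := pow_le_pow_left₀ (by positivity) h2 k
  push_cast
  calc (((1000 - 0 : ℤ).toNat : ℕ) : ℝ) * ((150 * ww (1000 * J)) ^ k / (1000 * J))
      = (150 * ww (1000 * J)) ^ k / J := by
        rw [show ((1000 - 0 : ℤ).toNat : ℕ) = 1000 from rfl]; push_cast; field_simp
    _ ≤ (1 / J) ^ k / J := by gcongr
    _ = 1 / (J:ℝ) ^ (k + 1) := by rw [div_pow, one_pow, pow_succ, div_div]

lemma var_lb (β : ℝ) (q : ℕ) (hq : 2 * β + 3 = q) (hβ : 0 ≤ β) (C : ℝ) :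
    ∃ c : ℝ, 0 < c ∧ ∀ n J : ℕ, 1000 ≤ J → (J:ℝ) ^ q ≤ n → (n:ℝ) ≤ C * (J:ℝ) ^ q →
      c * J ≤ ∫ ω, (Vc ω - ∫ ω, Vc ω ∂betaPi β n) ^ 2 ∂betaPi β n := by
  refine ⟨1 / 2 * ((1 / 2 * (1 / 1000 ^ q)) ^ 4 * Real.exp (-2 * C)), by positivity, ?_⟩
  intro n J hJ hn1 hn2
  have hJ0 : 0 < J := by omega
  have hJ' : (1000:ℝ) ≤ J := by exact_mod_cast hJ
  have hJ'' : (0:ℝ) < J := by linarith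
  have hpi := Real.pi_lt_d2
  have h1q : q ≠ 0 := by
    rintro rfl
    norm_num at hq; linarith
  have hw1 : ww (1000 * J) ≤ 1 / 100000 := by
    unfold ww; push_cast; rw [div_le_div_iff₀ (by positivity) (by norm_num)]; nlinarith
  have hJq : (J:ℝ) ≤ (J:ℝ) ^ q := le_self_pow₀ (by linarith) h1q
  set X := (J:ℝ) ^ q with hX
  have hX0 : 0 < X := by positivity
  have key := var_main (n := n) β hβ J hJ0 hw1 (1 / ((1000 * J : ℕ):ℝ) ^ q) (1 / X) (by positivity)
    (fun j t => PS_lb β q hq hβ _ (by omega) hw1 j t) (fun j => CS_ub β q hq hβ J hJ0 hw1 j)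
    (by rw [div_le_one hX0]; linarith)
  refine le_trans ?_ key
  have e1 : (1 - 1 / X) ^ n ≥ Real.exp (-2 * C) := by
    have hy : 1 / X ≤ 1 / 2 := by gcongr; linarith
    have hy0 : 0 < 1 / X := by positivity
    have a1 : Real.exp (-(2 * (1 / X))) ≤ 1 - 1 / X := by
      rw [Real.exp_neg, inv_le_comm₀ (Real.exp_pos _) (by linarith), inv_eq_one_div]
      refine le_trans ?_ (Real.add_one_le_exp _)
      rw [div_le_iff₀ (by linarith)]
      nlinarith
    calc (1 - 1 / X) ^ n ≥ Real.exp (-(2 * (1 / X))) ^ n := pow_le_pow_left₀ (Real.exp_pos _).le a1 n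
      _ = Real.exp (-(2 * (n / X))) := by rw [← Real.exp_nat_mul]; congr 1; ring
      _ ≥ Real.exp (-2 * C) := by
        apply Real.exp_le_exp.2
        have : n / X ≤ C := by rw [div_le_iff₀ hX0]; exact hn2
        linarith
  have e2 : (1 / 2 * (1 / 1000 ^ q)) ^ 4 ≤ (n.descFactorial 4 : ℝ) * (1 / ((1000 * J : ℕ):ℝ) ^ q) ^ 4 := by
    have d1 : ((n - 3 : ℕ) : ℝ) ^ 4 ≤ (n.descFactorial 4 : ℝ) := by
      have := Nat.pow_sub_le_descFactorial n 4
      exact_mod_cast this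
    have hn3 : (1000:ℝ) ≤ n := by linarith
    have hn4 : 1000 ≤ n := by exact_mod_cast hn3
    have d2 : X / 2 ≤ ((n - 3 : ℕ) : ℝ) := by
      rw [Nat.cast_sub (by omega)]; push_cast; linarith
    have d3 := (pow_le_pow_left₀ (by positivity) d2 4).trans d1
    calc (1 / 2 * (1 / 1000 ^ q)) ^ 4 = (X / 2) ^ 4 * (1 / ((1000 * J : ℕ):ℝ) ^ q) ^ 4 := by
          rw [← mul_pow]; congr 1; push_cast; rw [mul_pow, ← hX]; field_simp
      _ ≤ _ := by gcongr
  calc _ = 1 / 2 * (J * ((1 / 2 * (1 / 1000 ^ q)) ^ 4 * Real.exp (-2 * C))) := by ring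
    _ ≤ 1 / 2 * (J * (((n.descFactorial 4 : ℝ) * (1 / ((1000 * J : ℕ):ℝ) ^ q) ^ 4) * (1 - 1 / X) ^ n)) := by
        gcongr
    _ = _ := by ring

noncomputable def nb (K : ℕ) (L : ℤ) (c : ZMod K) : Finset (ZMod K) :=
  (Finset.Icc (-L) L).image (fun i : ℤ => c + (i : ZMod K))

lemma nb_card (K : ℕ) (L : ℕ) (c : ZMod K) : ((nb K L c).card : ℝ) ≤ 2 * L + 1 := by
  have h : (nb K L c).card ≤ 2 * L + 1 := by
    refine Finset.card_image_le.trans ?_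
    rw [Int.card_Icc]; omega
  exact_mod_cast h

lemma mem_nb (K : ℕ) (L : ℤ) (c k : ZMod K) : k ∈ nb K L c ↔ ∃ i : ℤ, |i| ≤ L ∧ c + (i : ZMod K) = k := by
  simp only [nb, Finset.mem_image, Finset.mem_Icc, abs_le]

lemma Dset_disj (K : ℕ) (L L' : ℤ) (j k : ZMod K) (h : k ∉ nb K (L + L') j) :
    Disjoint (Dset K L j) (Dset K L' k) := by
  rw [Set.disjoint_left]
  rintro x ⟨⟨a, ha, ha'⟩, -⟩ ⟨⟨b, hb, hb'⟩, -⟩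
  refine h ((mem_nb _ _ _ _).2 ⟨a - b, (abs_sub _ _).trans (add_le_add ha hb), ?_⟩)
  push_cast
  rw [ha'] at hb'
  rw [← add_sub_assoc, hb', add_sub_cancel_right]

lemma Dset_sub (K : ℕ) (L L' : ℤ) (j k : ZMod K) (h : k ∈ nb K L j) :
    Dset K L' k ⊆ Dset K (L + L') j := by
  obtain ⟨i, hi, rfl⟩ := (mem_nb _ _ _ _).1 h
  rintro x ⟨⟨a, ha, ha'⟩, hx⟩
  refine ⟨⟨i + a, (abs_add_le _ _).trans (add_le_add hi ha), ?_⟩, hx⟩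
  rw [ha']; push_cast; ring

lemma DepOn.mono' {n : ℕ} {E F : Type*} {D D' : Set E} {φ : (Fin n → E) → F} (h : DepOn D φ) (hs : D ⊆ D') :
    DepOn D' φ := fun ω ω' hh => h ω ω' fun i => (hh i).imp id fun ⟨a, b⟩ => ⟨fun c => a (hs c), fun c => b (hs c)⟩

lemma DepOn.sum' {n : ℕ} {E ι : Type*} {D : Set E} {φ : ι → (Fin n → E) → ℝ} (s : Finset ι)
    (h : ∀ k ∈ s, DepOn D (φ k)) : DepOn D (fun ω => ∑ k ∈ s, φ k ω) :=
  fun ω ω' hh => Finset.sum_congr rfl fun k hk => h k hk ω ω' hh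

def ann (K : ℕ) : Set E2 := {x | 1 - 400 * (2 * Real.pi / K) ^ 2 ≤ ‖x‖}

lemma ann_meas (K : ℕ) : MeasurableSet (ann K) := measurableSet_le measurable_const measurable_norm

theorem clt_fix {n : ℕ} (μ : Measure E2) [IsProbabilityMeasure μ] (K : ℕ) [NeZero K]
    (X : ZMod K → (Fin n → E2) → ℝ) (hm : ∀ j, Measurable (X j)) (hdep : ∀ j, DepOn (Dset K 100 j) (X j))
    (b p p3 pA e4 : ℝ) (hb : ∀ j ω, |X j ω| ≤ b) (hb0 : 0 ≤ b)
    (hX0 : ∀ j, ∫ ω, X j ω ∂(Measure.pi fun _ : Fin n => μ) = 0)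
    (hp : ∀ j, μ.real (Dset K 100 j) ≤ p) (hp3 : ∀ j, μ.real (Dset K 300 j) ≤ p3) (hpA : μ.real (ann K) ≤ pA)
    (h4 : |∫ ω, (∑ j, X j ω)^2 ∂(Measure.pi fun _ : Fin n => μ) - 1| ≤ e4) (t : ℝ) :
    ‖∫ ω, Complex.exp (Complex.I * ((t * ∑ k, X k ω : ℝ) : ℂ)) ∂(Measure.pi fun _ : Fin n => μ)
      - Complex.exp (-(t:ℂ)^2/2)‖ ≤
      (K * (4 * b * (n * (p * pA))) + |t| * (K * (4 * b * (K * b) * (n * (p * pA))) + e4 +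
        Real.sqrt (K * (K * (4 * (b * (401 * b)) * (b * (401 * b)) * (n * (p3 * p3))) + 1201 * (2 * (b * (401 * b))^2))))
        + K * (b * (2 * (t * (401 * b))^2))) * |t| := by
  classical
  have hp0 : 0 ≤ p := measureReal_nonneg.trans (hp 0)
  have hp30 : 0 ≤ p3 := measureReal_nonneg.trans (hp3 0)
  have hpA0 : 0 ≤ pA := measureReal_nonneg.trans hpA
  have hcard : Fintype.card (ZMod K) = K := ZMod.card K
  have hN : ∀ j, ((nb K 200 j).card : ℝ) ≤ 401 := fun j => (nb_card K 200 j).trans (by norm_num)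
  have hN' : ∀ j, ((nb K 600 j).card : ℝ) ≤ 1201 := fun j => (nb_card K 600 j).trans (by norm_num)
  have hcompl : ∀ j k, k ∈ (nb K 200 j)ᶜ → DepOn (ann K \ Dset K 100 j) (X k) := by
    intro j k hk
    rw [Finset.mem_compl] at hk
    refine (hdep k).mono' fun x hx => ⟨hx.2, ?_⟩
    exact Set.disjoint_right.1 (Dset_disj K 100 100 j k hk) hx
  have hD'm : ∀ j, MeasurableSet (ann K \ Dset K 100 j) := fun j => (ann_meas K).diff (Dset_meas K 100 j)
  have hD'p : ∀ j, μ.real (ann K \ Dset K 100 j) ≤ pA := fun j => (measureReal_mono Set.sdiff_subset).trans hpA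
  have hpp : ∀ j, μ.real (Dset K 100 j) * μ.real (ann K \ Dset K 100 j) ≤ p * pA := fun j =>
    mul_le_mul (hp j) (hD'p j) measureReal_nonneg hp0
  have habs : ∀ (s : Finset (ZMod K)) ω, |∑ k ∈ s, X k ω| ≤ s.card * b := by
    intro s ω
    refine (Finset.abs_sum_le_sum_abs _ _).trans ((Finset.sum_le_card_nsmul _ _ b fun k _ => hb k ω).trans ?_)
    rw [nsmul_eq_mul]
  have h1 : ∀ j (t : ℝ), ‖∫ ω, (X j ω : ℂ) *
      Complex.exp (Complex.I * ((t * ∑ k ∈ (nb K 200 j)ᶜ, X k ω : ℝ) : ℂ)) ∂(Measure.pi fun _ : Fin n => μ)‖ ≤ 4 * b * (n * (p * pA)) := by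
    intro j t
    have hsm : Measurable fun ω => ∑ k ∈ (nb K 200 j)ᶜ, X k ω := Finset.measurable_fun_sum _ fun k _ => hm k
    have := cov_bound μ (Dset K 100 j) (ann K \ Dset K 100 j) (Dset_meas K 100 j) (hD'm j) Set.disjoint_sdiff_right
      (fun ω => (X j ω : ℂ)) (fun ω => Complex.exp (Complex.I * ((t * ∑ k ∈ (nb K 200 j)ᶜ, X k ω : ℝ) : ℂ)))
      (Complex.measurable_ofReal.comp (hm j))
      (Complex.measurable_exp.comp (measurable_const.mul (Complex.measurable_ofReal.comp (measurable_const.mul hsm))))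
      (fun ω ω' h => congrArg Complex.ofReal (hdep j ω ω' h)) (fun ω ω' h => by
        have := DepOn.sum' _ (hcompl j) ω ω' h
        simp only at this ⊢
        rw [this]) b 1
      (fun ω => by rw [Complex.norm_real]; exact hb j ω) (fun ω => by
        rw [mul_comm, Complex.norm_exp_ofReal_mul_I]) hb0 zero_le_one
    rw [integral_complex_ofReal, hX0 j] at this
    simp only [Complex.ofReal_zero, zero_mul, sub_zero] at this
    refine this.trans ?_
    rw [mul_one]
    have := hpp j
    gcongr
  have h3 : ∀ j, |∫ ω, X j ω * ∑ k ∈ (nb K 200 j)ᶜ, X k ω ∂(Measure.pi fun _ : Fin n => μ)| ≤ 4 * b * (K * b) * (n * (p * pA)) := by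
    intro j
    have hsm : Measurable fun ω => ∑ k ∈ (nb K 200 j)ᶜ, X k ω := Finset.measurable_fun_sum _ fun k _ => hm k
    have := cov_bound μ (Dset K 100 j) (ann K \ Dset K 100 j) (Dset_meas K 100 j) (hD'm j) Set.disjoint_sdiff_right
      (X j) (fun ω => ∑ k ∈ (nb K 200 j)ᶜ, X k ω) (hm j) hsm (hdep j) (DepOn.sum' _ (hcompl j)) b (K * b)
      (fun ω => hb j ω) (fun ω => by
        refine (habs _ ω).trans ?_
        have : ((nb K 200 j)ᶜ.card : ℝ) ≤ K := by
          have := Finset.card_le_univ (nb K 200 j)ᶜ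
          rw [hcard] at this
          exact_mod_cast this
        gcongr) hb0 (by positivity)
    rw [hX0 j, zero_mul, sub_zero, Real.norm_eq_abs] at this
    refine this.trans ?_
    have := hpp j
    gcongr
  have hZdep : ∀ j, DepOn (Dset K 300 j) (fun ω => X j ω * ∑ l ∈ nb K 200 j, X l ω) := by
    intro j ω ω' h
    have ha : DepOn (Dset K 300 j) (fun ω => ∑ l ∈ nb K 200 j, X l ω) :=
      DepOn.sum' _ fun k hk => (hdep k).mono' (Dset_sub K 200 100 j k hk)
    have hb : DepOn (Dset K 300 j) (X j) := (hdep j).mono' (Dset_sub K 200 100 j j ((mem_nb _ _ _ _).2 ⟨0, by simp⟩))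
    have h1 := ha ω ω' h
    have h2 := hb ω ω' h
    simp only at h1 ⊢
    rw [h1, h2]
  have hZm : ∀ j, Measurable (fun ω => X j ω * ∑ l ∈ nb K 200 j, X l ω) := fun j =>
    (hm j).mul (Finset.measurable_fun_sum _ fun k _ => hm k)
  have hZb : ∀ j ω, ‖X j ω * ∑ l ∈ nb K 200 j, X l ω‖ ≤ b * (401 * b) := by
    intro j ω
    rw [Real.norm_eq_abs, abs_mul]
    refine mul_le_mul (hb j ω) ((habs _ ω).trans ?_) (abs_nonneg _) hb0
    have := hN j
    gcongr
  have h2 : ∀ j k, k ∉ nb K 600 j → |∫ ω, (X j ω * ∑ l ∈ nb K 200 j, X l ω) * (X k ω * ∑ l ∈ nb K 200 k, X l ω) ∂(Measure.pi fun _ : Fin n => μ)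
      - (∫ ω, X j ω * ∑ l ∈ nb K 200 j, X l ω ∂(Measure.pi fun _ : Fin n => μ)) * (∫ ω, X k ω * ∑ l ∈ nb K 200 k, X l ω ∂(Measure.pi fun _ : Fin n => μ))|
      ≤ 4 * (b * (401 * b)) * (b * (401 * b)) * (n * (p3 * p3)) := by
    intro j k hk
    have := cov_bound μ (Dset K 300 j) (Dset K 300 k) (Dset_meas K 300 j) (Dset_meas K 300 k) (Dset_disj K 300 300 j k hk)
      _ _ (hZm j) (hZm k) (hZdep j) (hZdep k) _ _ (hZb j) (hZb k) (by positivity) (by positivity)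
    rw [Real.norm_eq_abs] at this
    refine this.trans ?_
    have hh : μ.real (Dset K 300 j) * μ.real (Dset K 300 k) ≤ p3 * p3 := mul_le_mul (hp3 j) (hp3 k) measureReal_nonneg hp30
    gcongr
  have := tikh (Measure.pi fun _ : Fin n => μ) X hm b 401 1201 hb (nb K 200) (nb K 600) hN hN' _ _ _ e4
    (by positivity) h1 h2 h3 h4 t
  rw [hcard] at this
  exact this

lemma exp_lip (a b : ℝ) : ‖Complex.exp (Complex.I * (a:ℂ)) - Complex.exp (Complex.I * (b:ℂ))‖ ≤ |a - b| := by
  have h : Complex.exp (Complex.I * (a:ℂ)) - Complex.exp (Complex.I * (b:ℂ)) =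
      Complex.exp (Complex.I * (b:ℂ)) * (Complex.exp (Complex.I * ((a - b : ℝ):ℂ)) - 1) := by
    rw [mul_sub, ← Complex.exp_add, mul_one]; congr 2; push_cast; ring
  rw [h, norm_mul, mul_comm Complex.I, Complex.norm_exp_ofReal_mul_I, one_mul]
  have := Real.norm_exp_I_mul_ofReal_sub_one_le (x := a - b)
  simpa using this

/-- comparing two bounded variables agreeing off a small event -/
lemma approx_cmp {Ω : Type*} [MeasurableSpace Ω] (P : Measure Ω) [IsProbabilityMeasure P] (V W : Ω → ℝ)
    (hV : Measurable V) (hW : Measurable W) (M ε : ℝ) (hV0 : ∀ ω, 0 ≤ V ω) (hVM : ∀ ω, V ω ≤ M)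
    (hW0 : ∀ ω, 0 ≤ W ω) (hWM : ∀ ω, W ω ≤ M) (G : Set Ω) (hG : MeasurableSet G) (hε : P.real Gᶜ ≤ ε)
    (he : ∀ᵐ ω ∂P, ω ∈ G → V ω = W ω) :
    |∫ ω, (W ω - ∫ ω, W ω ∂P) ^ 2 ∂P - ∫ ω, (V ω - ∫ ω, V ω ∂P) ^ 2 ∂P| ≤ 4 * M ^ 2 * ε ∧
    ∀ s : ℝ, ‖∫ ω, Complex.exp (Complex.I * ((s * (W ω - ∫ ω, W ω ∂P) : ℝ):ℂ)) ∂P -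
      ∫ ω, Complex.exp (Complex.I * ((s * (V ω - ∫ ω, V ω ∂P) : ℝ):ℂ)) ∂P‖ ≤ |s| * (2 * M * ε) := by
  have : Nonempty Ω := by
    by_contra h
    rw [not_nonempty_iff] at h
    have := measure_univ (μ := P)
    simp [Set.univ_eq_empty_iff.2 h] at this
  obtain ⟨ω0⟩ := this
  have hM0 : 0 ≤ M := (hV0 ω0).trans (hVM ω0)
  have hVi : Integrable V P := integrable_bdd (C := M) hV.aestronglyMeasurable fun ω => by
    rw [Real.norm_eq_abs, abs_le]; constructor <;> linarith [hV0 ω, hVM ω]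
  have hWi : Integrable W P := integrable_bdd (C := M) hW.aestronglyMeasurable fun ω => by
    rw [Real.norm_eq_abs, abs_le]; constructor <;> linarith [hW0 ω, hWM ω]
  set EV := ∫ ω, V ω ∂P with hEV
  set EW := ∫ ω, W ω ∂P with hEW
  have hEV0 : 0 ≤ EV := integral_nonneg hV0
  have hEW0 : 0 ≤ EW := integral_nonneg hW0
  have hEVM : EV ≤ M := by
    have := integral_mono hVi (integrable_const M) hVM
    simpa using this
  have hEWM : EW ≤ M := by
    have := integral_mono hWi (integrable_const M) hWM
    simpa using this
  have hind : ∀ᵐ ω ∂P, |W ω - V ω| ≤ Gᶜ.indicator (fun _ => M) ω := by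
    filter_upwards [he] with ω h
    by_cases hω : ω ∈ G
    · rw [h hω]; simp [hω]
    · rw [Set.indicator_of_mem hω, abs_le]; constructor <;> linarith [hV0 ω, hVM ω, hW0 ω, hWM ω]
  have hindi : Integrable (Gᶜ.indicator (fun _ => M)) P := (integrable_const M).indicator hG.compl
  have hindv : ∫ ω, Gᶜ.indicator (fun _ => M) ω ∂P ≤ M * ε := by
    rw [integral_indicator_const _ hG.compl, smul_eq_mul, mul_comm]; gcongr
  have hdi : ∫ ω, |W ω - V ω| ∂P ≤ M * ε :=
    (integral_mono_ae (hWi.sub hVi).abs hindi hind).trans hindv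
  have hE : |EW - EV| ≤ M * ε := by
    rw [hEW, hEV, ← integral_sub hWi hVi]
    exact abs_integral_le_integral_abs.trans hdi
  have hUTi : Integrable (fun ω => |(W ω - EW) - (V ω - EV)|) P :=
    ((hWi.sub (integrable_const _)).sub (hVi.sub (integrable_const _))).abs
  have hUT : ∫ ω, |(W ω - EW) - (V ω - EV)| ∂P ≤ 2 * M * ε := by
    have h1 : ∫ ω, |(W ω - EW) - (V ω - EV)| ∂P ≤ ∫ ω, (|W ω - V ω| + |EW - EV|) ∂P := by
      refine integral_mono hUTi ((hWi.sub hVi).abs.add (integrable_const _)) fun ω => ?_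
      have : (W ω - EW) - (V ω - EV) = (W ω - V ω) - (EW - EV) := by ring
      simp only
      rw [this]; exact abs_sub _ _
    have hi : Integrable (fun ω => |W ω - V ω|) P := (hWi.sub hVi).abs
    rw [integral_add hi (integrable_const _)] at h1
    simp only [integral_const, probReal_univ, one_smul] at h1
    linarith
  constructor
  · have i1 : Integrable (fun ω => (W ω - EW) ^ 2) P := integrable_bdd (C := M ^ 2) ((hW.sub_const _).pow_const 2).aestronglyMeasurable fun ω => by
      rw [Real.norm_eq_abs, abs_pow]
      refine pow_le_pow_left₀ (abs_nonneg _) ?_ 2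
      rw [abs_le]; constructor <;> linarith [hW0 ω, hWM ω]
    have i2 : Integrable (fun ω => (V ω - EV) ^ 2) P := integrable_bdd (C := M ^ 2) ((hV.sub_const _).pow_const 2).aestronglyMeasurable fun ω => by
      rw [Real.norm_eq_abs, abs_pow]
      refine pow_le_pow_left₀ (abs_nonneg _) ?_ 2
      rw [abs_le]; constructor <;> linarith [hV0 ω, hVM ω]
    rw [← integral_sub i1 i2]
    refine abs_integral_le_integral_abs.trans ?_
    have : ∫ ω, |(W ω - EW) ^ 2 - (V ω - EV) ^ 2| ∂P ≤ ∫ ω, |(W ω - EW) - (V ω - EV)| * (2 * M) ∂P := by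
      refine integral_mono (i1.sub i2).abs (hUTi.mul_const _) fun ω => ?_
      have : (W ω - EW) ^ 2 - (V ω - EV) ^ 2 = ((W ω - EW) - (V ω - EV)) * ((W ω - EW) + (V ω - EV)) := by ring
      simp only
      rw [this, abs_mul]
      refine mul_le_mul_of_nonneg_left ?_ (abs_nonneg _)
      rw [abs_le]; constructor <;> linarith [hV0 ω, hVM ω, hW0 ω, hWM ω]
    rw [integral_mul_const] at this
    nlinarith only [this, hUT, hM0]
  · intro s
    have hc : ∀ (Y : Ω → ℝ), Measurable Y → Integrable (fun ω => Complex.exp (Complex.I * ((s * Y ω : ℝ):ℂ))) P := fun Y hY =>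
      integrable_bdd (C := 1) (Complex.measurable_exp.comp (measurable_const.mul (Complex.measurable_ofReal.comp (measurable_const.mul hY)))).aestronglyMeasurable fun ω => by
        rw [mul_comm, Complex.norm_exp_ofReal_mul_I]
    rw [← integral_sub (hc _ (hW.sub_const EW)) (hc _ (hV.sub_const EV))]
    refine (norm_integral_le_integral_norm _).trans ?_
    have : ∫ ω, ‖Complex.exp (Complex.I * ((s * (W ω - EW) : ℝ):ℂ)) - Complex.exp (Complex.I * ((s * (V ω - EV) : ℝ):ℂ))‖ ∂P
        ≤ ∫ ω, |s| * |(W ω - EW) - (V ω - EV)| ∂P := by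
      refine integral_mono ((hc _ (hW.sub_const EW)).sub (hc _ (hV.sub_const EV))).norm (hUTi.const_mul _) fun ω => ?_
      refine (exp_lip _ _).trans ?_
      rw [← mul_sub, abs_mul]
    rw [integral_const_mul] at this
    exact this.trans (mul_le_mul_of_nonneg_left hUT (abs_nonneg _))

theorem clt_n {n : ℕ} (μ : Measure E2) [IsProbabilityMeasure μ] (hμ : ∀ᵐ x ∂μ, ‖x‖ ≤ 1) (K : ℕ) [NeZero K]
    (hK0 : 100 < K) (hK : 2 * Real.pi / K ≤ 1 / 1000) (B p p3 pA M ε v : ℝ) (hB : 0 ≤ B)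
    (hp : ∀ j, μ.real (Dset K 100 j) ≤ p) (hp3 : ∀ j, μ.real (Dset K 300 j) ≤ p3) (hpA : μ.real (ann K) ≤ pA)
    (hε : (Measure.pi fun _ : Fin n => μ).real (GE K B)ᶜ ≤ ε) (hM1 : (n:ℝ) ≤ M) (hM2 : K * B ≤ M)
    (hv : v = ∫ ω, (Vc ω - ∫ ω, Vc ω ∂(Measure.pi fun _ : Fin n => μ)) ^ 2 ∂(Measure.pi fun _ : Fin n => μ)) (hv0 : 0 < v)
    (b : ℝ) (hb : b = B / Real.sqrt v) (t : ℝ) :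
    ‖∫ ω, Complex.exp (Complex.I * ((t * ((Vc ω - ∫ ω, Vc ω ∂(Measure.pi fun _ : Fin n => μ)) / Real.sqrt v) : ℝ) : ℂ)) ∂(Measure.pi fun _ : Fin n => μ)
      - Complex.exp (-(t:ℂ)^2/2)‖ ≤
      (K * (4 * b * (n * (p * pA))) + |t| * (K * (4 * b * (K * b) * (n * (p * pA))) + 4 * M ^ 2 * ε / v +
        Real.sqrt (K * (K * (4 * (b * (401 * b)) * (b * (401 * b)) * (n * (p3 * p3))) + 1201 * (2 * (b * (401 * b))^2))))
        + K * (b * (2 * (t * (401 * b))^2))) * |t| + |t / Real.sqrt v| * (2 * M * ε) := by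
  set P := Measure.pi fun _ : Fin n => μ with hP
  have hs : 0 < Real.sqrt v := Real.sqrt_pos.2 hv0
  set W : (Fin n → E2) → ℝ := fun ω => ∑ c, fc K B c ω with hW
  have hWm : Measurable W := Finset.measurable_fun_sum _ fun c _ => fc_meas K B c
  have hW0 : ∀ ω, 0 ≤ W ω := fun ω => Finset.sum_nonneg fun c _ => fc_nonneg K B c ω
  have hWM : ∀ ω, W ω ≤ M := by
    intro ω
    refine (Finset.sum_le_card_nsmul _ _ B fun c _ => fc_le K B hB c ω).trans ?_
    rw [nsmul_eq_mul, Finset.card_univ, ZMod.card]; exact hM2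
  have hfi : ∀ c, Integrable (fun ω : Fin n → E2 => fc K B c ω) P := fun c =>
    integrable_bdd (C := B) (fc_meas K B c).aestronglyMeasurable fun ω => by
      rw [Real.norm_eq_abs, abs_of_nonneg (fc_nonneg K B c ω)]; exact fc_le K B hB c ω
  have hEf0 : ∀ c, 0 ≤ ∫ ω, fc K B c ω ∂P := fun c => integral_nonneg fun ω => fc_nonneg K B c ω
  have hEfB : ∀ c, ∫ ω, fc K B c ω ∂P ≤ B := fun c => by
    have := integral_mono (hfi c) (integrable_const B) fun ω => fc_le K B hB c ω
    simpa using this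
  have hEW : ∫ ω, W ω ∂P = ∑ c, ∫ ω, fc K B c ω ∂P := integral_finsetSum _ fun c _ => hfi c
  have hpi : ∀ᵐ ω ∂P, ∀ i, ‖ω i‖ ≤ 1 := pi_ae μ n _ hμ
  have he : ∀ᵐ ω ∂P, ω ∈ GE K B → Vc ω = W ω := by
    filter_upwards [hpi] with ω h hG
    exact Vc_eq_sum K hK0 hK B ω ⟨h, hG.1⟩ hG.2
  obtain ⟨hA, hC⟩ := approx_cmp P Vc W (Vc_meas n) hWm M ε Vc_nonneg (fun ω => (Vc_le ω).trans hM1) hW0 hWM (GE K B) (GE_meas K B) hε he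
  set X : ZMod K → (Fin n → E2) → ℝ := fun c ω => (fc K B c ω - ∫ ω, fc K B c ω ∂P) / Real.sqrt v with hX
  have hXs : ∀ ω, ∑ c, X c ω = (W ω - ∫ ω, W ω ∂P) / Real.sqrt v := by
    intro ω; rw [hEW, hX, ← Finset.sum_div, Finset.sum_sub_distrib]
  have h4 : |∫ ω, (∑ j, X j ω)^2 ∂P - 1| ≤ 4 * M ^ 2 * ε / v := by
    have : ∫ ω, (∑ j, X j ω)^2 ∂P = (∫ ω, (W ω - ∫ ω, W ω ∂P) ^ 2 ∂P) / v := by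
      rw [← integral_div]
      refine integral_congr_ae (Filter.Eventually.of_forall fun ω => ?_)
      simp only
      rw [hXs, div_pow, Real.sq_sqrt hv0.le]
    rw [this, div_sub_one hv0.ne', abs_div, abs_of_pos hv0]
    rw [← hv] at hA
    exact div_le_div_of_nonneg_right hA hv0.le
  have hmain := clt_fix μ K X (fun j => ((fc_meas K B j).sub_const _).div_const _)
    (fun j ω ω' h => by simp only [hX]; rw [fc_dep K B j ω ω' h]) b p p3 pA _ (fun j ω => by
      rw [hX, hb, abs_div, abs_of_pos hs]
      refine div_le_div_of_nonneg_right ?_ hs.le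
      rw [abs_le]; constructor <;> linarith [fc_nonneg K B j ω, fc_le K B hB j ω, hEf0 j, hEfB j])
    (by rw [hb]; positivity) (fun j => by
      simp only [hX]
      rw [integral_div, integral_sub (hfi j) (integrable_const _)]; simp [hP]) hp hp3 hpA h4 t
  have hC' := hC (t / Real.sqrt v)
  have r1 : ∀ (a : ℝ), t / Real.sqrt v * a = t * (a / Real.sqrt v) := fun a => by ring
  simp only [r1] at hC'
  simp only [hXs] at hmain
  rw [norm_sub_rev] at hC'
  have := norm_add_le_of_le hC' hmain
  rw [sub_add_sub_cancel] at this
  linarith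

lemma w_bd (K : ℕ) (hK0 : 0 < K) : 0 < 2 * Real.pi / K ∧ 29 * (2 * Real.pi / K) ≤ 183 / K ∧ 1 / (K:ℝ) ≤ 2 * Real.pi / K := by
  have h : (0:ℝ) < K := by exact_mod_cast hK0
  have h1 := Real.pi_pos
  have h2 := Real.pi_lt_d2
  have h3 := Real.pi_gt_three
  refine ⟨by positivity, ?_, ?_⟩
  · rw [mul_div_assoc']; apply div_le_div_of_nonneg_right _ h.le; linarith
  · apply div_le_div_of_nonneg_right _ h.le; linarith

lemma thick_bd (β : ℝ) (q : ℕ) (hq : 2 * β + 3 = q) (hβ : 0 ≤ β) (K : ℕ) (hK0 : 0 < K) (hK : 2 * Real.pi / K ≤ 1 / 1000) : (1 - (1 - 400 * (2 * Real.pi / K) ^ 2) ^ 2) ^ (β + 1) ≤ (183 / (K:ℝ)) ^ (q - 1) := by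
  obtain ⟨h1, h2, -⟩ := w_bd K hK0
  set w := 2 * Real.pi / K
  have h3 : (1 - (1 - 400 * w ^ 2) ^ 2) ≤ (29 * w) ^ 2 := by nlinarith [sq_nonneg (w ^ 2), sq_nonneg w]
  have h4 : 0 ≤ (1 - (1 - 400 * w ^ 2) ^ 2) := by
    have : (400 * w ^ 2) ≤ 1 := by nlinarith
    nlinarith [sq_nonneg w]
  refine (Real.rpow_le_rpow h4 h3 (by linarith)).trans ?_
  rw [tail_pow β q hq hβ _ (by positivity)]
  exact pow_le_pow_left₀ (by positivity) h2 _

lemma thin_bd (β : ℝ) (q : ℕ) (hq : 2 * β + 3 = q) (hβ : 0 ≤ β) (K : ℕ) (hK0 : 0 < K) (hK : 2 * Real.pi / K ≤ 1 / 1000) : (1 / (K:ℝ)) ^ (q - 1) ≤ (1 - (1 - 50 * (2 * Real.pi / K) ^ 2) ^ 2) ^ (β + 1) := by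
  obtain ⟨h1, -, h2⟩ := w_bd K hK0
  set w := 2 * Real.pi / K
  have h3 : w ^ 2 ≤ (1 - (1 - 50 * w ^ 2) ^ 2) := by
    have : w ^ 2 ≤ 1 / 1000000 := by nlinarith
    nlinarith [sq_nonneg w]
  refine le_trans ?_ (Real.rpow_le_rpow (by positivity) h3 (by linarith))
  rw [tail_pow β q hq hβ _ (by positivity)]
  exact pow_le_pow_left₀ (by positivity) h2 _

lemma r_bd (K : ℕ) (hK0 : 0 < K) (hK : 2 * Real.pi / K ≤ 1 / 1000) : 0 < 1 - 400 * (2 * Real.pi / K) ^ 2 ∧ 1 - 400 * (2 * Real.pi / K) ^ 2 ≤ 1 ∧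
    0 < 1 - 50 * (2 * Real.pi / K) ^ 2 ∧ 1 - 50 * (2 * Real.pi / K) ^ 2 ≤ 1 := by
  obtain ⟨h1, -, -⟩ := w_bd K hK0
  set w := 2 * Real.pi / K
  have : w ^ 2 ≤ 1 / 1000000 := by nlinarith
  have := sq_nonneg w
  refine ⟨?_, ?_, ?_, ?_⟩ <;> linarith

lemma ann_bd (β : ℝ) (q : ℕ) (hq : 2 * β + 3 = q) (hβ : 0 ≤ β) (K : ℕ) (hK0 : 0 < K) (hK : 2 * Real.pi / K ≤ 1 / 1000) : (betaMeasure β).real (ann K) ≤ (183 / (K:ℝ)) ^ (q - 1) := by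
  obtain ⟨a, b, -, -⟩ := r_bd K hK0 hK
  rw [Measure.real, ann, beta_tail β _ hβ a.le b, ENNReal.toReal_ofReal]
  · exact thick_bd β q hq hβ K hK0 hK
  · exact Real.rpow_nonneg (by nlinarith) _

lemma Dset_bd (β : ℝ) (q : ℕ) (hq : 2 * β + 3 = q) (hβ : 0 ≤ β) (K : ℕ) (hK0 : 0 < K) (hK : 2 * Real.pi / K ≤ 1 / 1000) (L : ℕ) (c : ZMod K) : (betaMeasure β).real (Dset K L c) ≤ (2 * L + 1) * ((183 / (K:ℝ)) ^ (q - 1) / K) := by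
  obtain ⟨a, b, -, -⟩ := r_bd K hK0 hK
  have := beta_prob β hβ
  have hs : Dset K L c ⊆ ⋃ k ∈ nb K L c, cellA K k (1 - 400 * (2 * Real.pi / K) ^ 2) := by
    rintro x ⟨⟨j, hj, hj'⟩, hx⟩
    simp only [Set.mem_iUnion]
    exact ⟨idx K x, (mem_nb _ _ _ _).2 ⟨j, hj, hj'.symm⟩, rfl, hx⟩
  refine (measureReal_mono hs (measure_ne_top _ _)).trans ((measureReal_biUnion_finset_le _ _).trans ?_)
  refine (Finset.sum_le_card_nsmul _ _ ((183 / (K:ℝ)) ^ (q - 1) / K) fun k _ => ?_).trans ?_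
  · rw [cellA_measure β hβ K hK0 k _ a b]
    exact div_le_div_of_nonneg_right (thick_bd β q hq hβ K hK0 hK) (by positivity)
  · rw [nsmul_eq_mul]
    have := nb_card K L c
    gcongr

lemma cell_bd (β : ℝ) (q : ℕ) (hq : 2 * β + 3 = q) (hβ : 0 ≤ β) (K : ℕ) (hK0 : 0 < K) (hK : 2 * Real.pi / K ≤ 1 / 1000) (c : ZMod K) : (1 / (K:ℝ)) ^ (q - 1) / K ≤ (betaMeasure β).real (cellA K c (1 - 50 * (2 * Real.pi / K) ^ 2)) := by
  obtain ⟨-, -, a, b⟩ := r_bd K hK0 hK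
  rw [cellA_measure β hβ K hK0 c _ a b]
  exact div_le_div_of_nonneg_right (thin_bd β q hq hβ K hK0 hK) (by positivity)

noncomputable def GG (q : ℕ) (C4 C5 C6 C7 C8 t x : ℝ) : ℝ :=
  (x^10 * (4 * (C4 / x^4) * (C5 / x^18)) + |t| * (x^10 * (4 * (C4 / x^4) * (x^10 * (C4 / x^4)) * (C5 / x^18)) + C7 * (x ^ (20 * q) * Real.exp (-x)) +
        Real.sqrt (x^10 * (x^10 * (4 * ((C4 / x^4) * (401 * (C4 / x^4))) * ((C4 / x^4) * (401 * (C4 / x^4))) * (C6 / x^28)) + 1201 * (2 * ((C4 / x^4) * (401 * (C4 / x^4)))^2))))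
        + x^10 * ((C4 / x^4) * (2 * (|t| * (401 * (C4 / x^4)))^2))) * |t| + |t| * (C8 * (x ^ (10 * q + 10) * Real.exp (-x)))

lemma GG_lim (q : ℕ) (C4 C5 C6 C7 C8 t : ℝ) : Filter.Tendsto (GG q C4 C5 C6 C7 C8 t) Filter.atTop (nhds 0) := by
  have hp : ∀ (C : ℝ) (k : ℕ), k ≠ 0 → Filter.Tendsto (fun x : ℝ => C * (x⁻¹) ^ k) Filter.atTop (nhds 0) := by
    intro C k hk
    have := ((tendsto_inv_atTop_zero (𝕜 := ℝ)).pow k).const_mul C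
    rwa [zero_pow hk, mul_zero] at this
  have he : ∀ (C : ℝ) (k : ℕ), Filter.Tendsto (fun x : ℝ => C * (x ^ k * Real.exp (-x))) Filter.atTop (nhds 0) := by
    intro C k
    have := (Real.tendsto_pow_mul_exp_neg_atTop_nhds_zero k).const_mul C
    rwa [mul_zero] at this
  have h1 : Filter.Tendsto (fun x : ℝ => x^10 * (4 * (C4 / x^4) * (C5 / x^18))) Filter.atTop (nhds 0) := by
    refine (hp (4 * C4 * C5) 12 (by norm_num)).congr' ?_
    filter_upwards [Filter.eventually_gt_atTop 0] with x hx
    field_simp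
  have h2 : Filter.Tendsto (fun x : ℝ => x^10 * (4 * (C4 / x^4) * (x^10 * (C4 / x^4)) * (C5 / x^18))) Filter.atTop (nhds 0) := by
    refine (hp (4 * C4 * C4 * C5) 6 (by norm_num)).congr' ?_
    filter_upwards [Filter.eventually_gt_atTop 0] with x hx
    field_simp
  have h3 : Filter.Tendsto (fun x : ℝ => x^10 * (x^10 * (4 * ((C4 / x^4) * (401 * (C4 / x^4))) * ((C4 / x^4) * (401 * (C4 / x^4))) * (C6 / x^28)) + 1201 * (2 * ((C4 / x^4) * (401 * (C4 / x^4)))^2))) Filter.atTop (nhds 0) := by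
    have := (hp (4 * 401 ^ 2 * C4 ^ 4 * C6) 24 (by norm_num)).add (hp (1201 * 2 * 401 ^ 2 * C4 ^ 4) 6 (by norm_num))
    rw [add_zero] at this
    refine this.congr' ?_
    filter_upwards [Filter.eventually_gt_atTop 0] with x hx
    field_simp
  have h4 : Filter.Tendsto (fun x : ℝ => x^10 * ((C4 / x^4) * (2 * (|t| * (401 * (C4 / x^4)))^2))) Filter.atTop (nhds 0) := by
    refine (hp (2 * 401 ^ 2 * |t| ^ 2 * C4 ^ 3) 2 (by norm_num)).congr' ?_
    filter_upwards [Filter.eventually_gt_atTop 0] with x hx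
    field_simp
  have h3' := h3.sqrt
  rw [Real.sqrt_zero] at h3'
  have := (((h1.add (((h2.add (he C7 (20 * q))).add h3').const_mul |t|)).add h4).mul_const |t|).add ((he C8 (10 * q + 10)).const_mul |t|)
  simp only [add_zero, mul_zero, zero_mul] at this
  exact this

lemma GG_mono (q : ℕ) {C4 C5 C6 C7 C8 t x K b u1 u2 u3 u4 : ℝ} (hx : 0 ≤ x) (hK : 0 ≤ K) (hb : 0 ≤ b) (hb' : b ≤ C4 / x ^ 4)
    (hKx : K ≤ x ^ 10) (h1 : 0 ≤ u1) (h1' : u1 ≤ C5 / x ^ 18) (h2 : 0 ≤ u2) (h2' : u2 ≤ C6 / x ^ 28)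
    (h3 : u3 ≤ C7 * (x ^ (20 * q) * Real.exp (-x))) (h4 : u4 ≤ |t| * (C8 * (x ^ (10 * q + 10) * Real.exp (-x)))) :
    (K * (4 * b * u1) + |t| * (K * (4 * b * (K * b) * u1) + u3 +
        Real.sqrt (K * (K * (4 * (b * (401 * b)) * (b * (401 * b)) * u2) + 1201 * (2 * (b * (401 * b))^2))))
        + K * (b * (2 * (|t| * (401 * b))^2))) * |t| + u4 ≤ GG q C4 C5 C6 C7 C8 t x := by
  unfold GG
  have hC : 0 ≤ C4 / x ^ 4 := hb.trans hb'
  gcongr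

set_option maxHeartbeats 1000000 in
theorem asym (β : ℝ) (q : ℕ) (hq : 2 * β + 3 = q) (hβ : 0 ≤ β) :
    ∃ G : ℝ → ℝ → ℝ, (∀ t, Filter.Tendsto (G t) Filter.atTop (nhds 0)) ∧
      ∀ n s : ℕ, 10000 ≤ s → (s:ℝ) ^ (10 * q ^ 2) ≤ n → (n:ℝ) ≤ 2 ^ (10 * q ^ 2) * (s:ℝ) ^ (10 * q ^ 2) →
        0 < ∫ ω, (Vc ω - ∫ ω, Vc ω ∂betaPi β n) ^ 2 ∂betaPi β n ∧ ∀ t : ℝ,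
        ‖∫ ω, Complex.exp (Complex.I * ((t * ((Vc ω - ∫ ω, Vc ω ∂betaPi β n) / Real.sqrt (∫ ω, (Vc ω - ∫ ω, Vc ω ∂betaPi β n) ^ 2 ∂betaPi β n)) : ℝ) : ℂ)) ∂betaPi β n
          - Complex.exp (-(t:ℂ)^2/2)‖ ≤ G t ((s:ℝ) ^ q) := by
  have hq3 : 3 ≤ q := by
    have : (3:ℝ) ≤ q := by linarith
    exact_mod_cast this
  obtain ⟨q', rfl⟩ : ∃ q', q = q' + 1 := ⟨q - 1, by omega⟩
  set q := q' + 1 with hqdef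
  set A : ℝ := 2 ^ (10 * q ^ 2) with hA
  have hA1 : 1 ≤ A := one_le_pow₀ (by norm_num)
  obtain ⟨c, hc0, hc⟩ := var_lb β q hq hβ A
  set CA : ℝ := 183 ^ q' with hCA
  have hCA0 : 0 < CA := by positivity
  set C2 : ℝ := 201 * CA * A with hC2
  set C3 : ℝ := 2 * (C2 + 1) with hC3
  set C4 : ℝ := C3 / Real.sqrt c with hC4
  set C5 : ℝ := C2 * CA with hC5
  set C6 : ℝ := 601 * CA * A * (601 * CA) with hC6
  set C7 : ℝ := 4 * (A + C3) ^ 2 * 2 / c with hC7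
  set C8 : ℝ := 4 * (A + C3) / Real.sqrt c with hC8
  have hprob := beta_prob β hβ
  refine ⟨GG q C4 C5 C6 C7 C8, GG_lim q C4 C5 C6 C7 C8, ?_⟩
  intro n s hs hn1 hn2
  have hC2p : 0 < C2 := by positivity
  have hC3p : 0 < C3 := by positivity
  have hsr : (10000:ℝ) ≤ s := by exact_mod_cast hs
  have hs1 : (1:ℝ) ≤ s := by linarith
  set x : ℝ := (s:ℝ) ^ q with hx
  have hx1 : 1 ≤ x := one_le_pow₀ hs1
  have hx0 : 0 < x := by linarith
  set N0 : ℝ := (s:ℝ) ^ (10 * q ^ 2) with hN0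
  have hN0x : N0 = x ^ (10 * q) := by rw [hN0, hx, ← pow_mul]; congr 1; ring
  have hN30 : x ^ 30 ≤ N0 := by rw [hN0x]; exact pow_le_pow_right₀ hx1 (by omega)
  have hN0p : 0 < N0 := by positivity
  have hJ : (((s ^ (10 * q) : ℕ) : ℝ)) = x ^ 10 := by push_cast; rw [hx, ← pow_mul]; congr 1; ring
  have hJq : (((s ^ (10 * q) : ℕ) : ℝ)) ^ q = N0 := by push_cast; rw [hN0, ← pow_mul]; congr 1; ring
  set K : ℕ := s ^ (10 * q - 1) with hK
  have hKs : s ≤ K := by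
    rw [hK]; exact Nat.le_self_pow (by omega) s
  have hKne : NeZero K := ⟨by omega⟩
  have hKr : (10000:ℝ) ≤ K := by exact_mod_cast hs.trans hKs
  have hK0 : (0:ℝ) < K := by linarith
  have hKx : (K:ℝ) ≤ x ^ 10 := by
    rw [← hJ]; exact_mod_cast Nat.pow_le_pow_right (by omega) (by omega)
  have hKq : (K:ℝ) ^ q * x = N0 := by
    rw [hK, hx, hN0]; push_cast; rw [← pow_mul, ← pow_add]; congr 1
    have : 10 * q - 1 = 10 * q' + 9 := by omega
    rw [this, hqdef]; ring
  have hKw : 2 * Real.pi / K ≤ 1 / 1000 := by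
    rw [div_le_iff₀ hK0]; linarith [Real.pi_lt_d2]
  have hJ1000 : 1000 ≤ s ^ (10 * q) := (by omega : 1000 ≤ s).trans (Nat.le_self_pow (by omega) s)
  have hv := hc n (s ^ (10 * q)) hJ1000 (by rw [hJq]; exact hn1) (by rw [hJq]; exact hn2)
  rw [hJ] at hv
  set v := ∫ ω, (Vc ω - ∫ ω, Vc ω ∂betaPi β n) ^ 2 ∂betaPi β n with hvdef
  have hv0 : 0 < v := lt_of_lt_of_le (by positivity) hv
  refine ⟨hv0, fun t => ?_⟩
  -- powers of K
  have hpw : (183 / (K:ℝ)) ^ (q - 1) = CA * K * x / N0 := by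
    rw [← hKq, hqdef, Nat.add_sub_cancel, div_pow, hCA, pow_succ]; field_simp
  have hpw1 : (1 / (K:ℝ)) ^ (q - 1) / K = x / N0 := by
    rw [← hKq, hqdef, Nat.add_sub_cancel, div_pow, pow_succ, one_pow]; field_simp
  have hpw2 : (183 / (K:ℝ)) ^ (q - 1) / K = CA * x / N0 := by
    rw [hpw]; field_simp
  have hp : ∀ j : ZMod K, (betaMeasure β).real (Dset K 100 j) ≤ 201 * (CA * x / N0) := fun j => by
    have := Dset_bd β q hq hβ K (by omega) hKw 100 j
    rw [hpw2] at this
    refine this.trans (le_of_eq (by norm_num))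
  have hp3 : ∀ j : ZMod K, (betaMeasure β).real (Dset K 300 j) ≤ 601 * (CA * x / N0) := fun j => by
    have := Dset_bd β q hq hβ K (by omega) hKw 300 j
    rw [hpw2] at this
    refine this.trans (le_of_eq (by norm_num))
  have hpA : (betaMeasure β).real (ann K) ≤ CA * K * x / N0 := by
    rw [← hpw]; exact ann_bd β q hq hβ K (by omega) hKw
  have hp1 : ∀ j : ZMod K, x / N0 ≤ (betaMeasure β).real (cellA K j (1 - 50 * (2 * Real.pi / K) ^ 2)) := fun j => by
    rw [← hpw1]; exact cell_bd β q hq hβ K (by omega) hKw j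
  have hnp : n * (201 * (CA * x / N0)) ≤ C2 * x := by
    calc n * (201 * (CA * x / N0)) ≤ (A * N0) * (201 * (CA * x / N0)) := by gcongr
      _ = _ := by rw [hC2]; field_simp
  have hnp1 : x ≤ n * (x / N0) := by
    calc x = N0 * (x / N0) := by field_simp
      _ ≤ _ := by gcongr
  have hε : (Measure.pi fun _ : Fin n => betaMeasure β).real (GE K (C3 * x))ᶜ ≤ 2 * x ^ 10 * Real.exp (-x) := by
    refine (GE_prob K (C3 * x) (betaMeasure β) _ _ hp1 hp).trans ?_
    have e1 : Real.exp (-(n * (x / N0))) ≤ Real.exp (-x) := Real.exp_le_exp.2 (by linarith)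
    have e2 : Real.exp (n * (201 * (CA * x / N0))) * (2:ℝ) ^ (-(C3 * x)) ≤ Real.exp (-x) := by
      rw [Real.rpow_def_of_pos (by norm_num), ← Real.exp_add]
      refine Real.exp_le_exp.2 ?_
      have hl : 1 / 2 ≤ Real.log 2 := by linarith [Real.log_two_gt_d9]
      have : 1 / 2 * (C3 * x) ≤ Real.log 2 * (C3 * x) := by gcongr
      rw [hC3] at this ⊢
      linarith
    have : (K:ℝ) * Real.exp (-(n * (x / N0))) + K * (Real.exp (n * (201 * (CA * x / N0))) * (2:ℝ) ^ (-(C3 * x))) ≤ x ^ 10 * Real.exp (-x) + x ^ 10 * Real.exp (-x) := by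
      gcongr
    linarith
  have hM1 : (n:ℝ) ≤ (A + C3) * N0 := hn2.trans (by gcongr; linarith)
  have hM2 : K * (C3 * x) ≤ (A + C3) * N0 := by
    calc K * (C3 * x) ≤ x ^ 10 * (C3 * x) := by gcongr
      _ = C3 * x ^ 11 := by ring
      _ ≤ C3 * x ^ 30 := by gcongr; norm_num
      _ ≤ (A + C3) * N0 := by gcongr; linarith
  have hmain := clt_n (betaMeasure β) (beta_supp β) K (by omega) hKw (C3 * x) _ _ _ ((A + C3) * N0) _ v (by positivity)
    hp hp3 hpA hε hM1 hM2 hvdef hv0 _ rfl t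
  change ‖∫ ω, Complex.exp (Complex.I * ((t * ((Vc ω - ∫ ω, Vc ω ∂betaPi β n) / Real.sqrt v) : ℝ) : ℂ)) ∂betaPi β n
          - Complex.exp (-(t:ℂ)^2/2)‖ ≤ _ at hmain
  refine hmain.trans ?_
  have hsv : Real.sqrt c * x ^ 5 ≤ Real.sqrt v := by
    rw [← Real.sqrt_sq (by positivity : 0 ≤ x ^ 5), ← Real.sqrt_mul hc0.le]
    exact Real.sqrt_le_sqrt (by rw [← pow_mul]; exact hv)
  have hsc : 0 < Real.sqrt c := Real.sqrt_pos.2 hc0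
  have hsv0 : 0 < Real.sqrt v := Real.sqrt_pos.2 hv0
  have hb : C3 * x / Real.sqrt v ≤ C4 / x ^ 4 := by
    calc C3 * x / Real.sqrt v ≤ C3 * x / (Real.sqrt c * x ^ 5) := by gcongr
      _ = _ := by rw [hC4]; field_simp
  have hb0 : 0 ≤ C3 * x / Real.sqrt v := by positivity
  set b := C3 * x / Real.sqrt v with hbdef
  have hnpA : n * (201 * (CA * x / N0) * (CA * K * x / N0)) ≤ C5 / x ^ 18 := by
    calc n * (201 * (CA * x / N0) * (CA * K * x / N0)) = n * (201 * (CA * x / N0)) * (CA * K * x / N0) := by ring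
      _ ≤ (C2 * x) * (CA * x ^ 10 * x / x ^ 30) := by gcongr
      _ = _ := by rw [hC5]; field_simp
  have hnp3 : n * (601 * (CA * x / N0) * (601 * (CA * x / N0))) ≤ C6 / x ^ 28 := by
    calc n * (601 * (CA * x / N0) * (601 * (CA * x / N0))) ≤ (A * N0) * (601 * (CA * x / N0) * (601 * (CA * x / x ^ 30))) := by gcongr
      _ = _ := by rw [hC6]; field_simp
  have he4 : 4 * ((A + C3) * N0) ^ 2 * (2 * x ^ 10 * Real.exp (-x)) / v ≤ C7 * (x ^ (20 * q) * Real.exp (-x)) := by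
    calc 4 * ((A + C3) * N0) ^ 2 * (2 * x ^ 10 * Real.exp (-x)) / v ≤ 4 * ((A + C3) * N0) ^ 2 * (2 * x ^ 10 * Real.exp (-x)) / (c * x ^ 10) := by gcongr
      _ = C7 * (N0 ^ 2 * Real.exp (-x)) := by rw [hC7]; field_simp
      _ = _ := by rw [hN0x, ← pow_mul, (by ring : 10 * q * 2 = 20 * q)]
  have he5 : |t / Real.sqrt v| * (2 * ((A + C3) * N0) * (2 * x ^ 10 * Real.exp (-x))) ≤ |t| * (C8 * (x ^ (10 * q + 10) * Real.exp (-x))) := by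
    have h5 : Real.sqrt c ≤ Real.sqrt v := by
      refine le_trans ?_ hsv
      exact le_mul_of_one_le_right hsc.le (one_le_pow₀ hx1)
    rw [abs_div, abs_of_pos hsv0]
    calc |t| / Real.sqrt v * (2 * ((A + C3) * N0) * (2 * x ^ 10 * Real.exp (-x)))
      ≤ |t| / Real.sqrt c * (2 * ((A + C3) * N0) * (2 * x ^ 10 * Real.exp (-x))) := by gcongr
      _ = _ := by rw [hC8, hN0x, pow_add x (10 * q) 10]; field_simp; ring
  have ht2 : (t * (401 * b)) ^ 2 = (|t| * (401 * b)) ^ 2 := by rw [mul_pow t, mul_pow |t|, sq_abs]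
  rw [ht2]
  have hz1 : 0 ≤ (n:ℝ) * (201 * (CA * x / N0) * (CA * K * x / N0)) := by positivity
  have hz2 : 0 ≤ (n:ℝ) * (601 * (CA * x / N0) * (601 * (CA * x / N0))) := by positivity
  have hz3 : 0 ≤ 4 * ((A + C3) * N0) ^ 2 * (2 * x ^ 10 * Real.exp (-x)) / v := by positivity
  exact GG_mono q hx0.le hK0.le hb0 hb hKx hz1 hnpA hz2 hnp3 he4 he5

/-- central limit theorem for the vertex count of the `β`-polygon. For
`d ≥ 4` and `β = d/2 - 2`, the Kolmogorov distance between the normalized vertex count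
`(f₀(Qₙ) - Eₙ)/√Vₙ` and a standard Gaussian tends to `0` as `n → ∞`. -/
theorem vertex_count_clt (d : ℕ) (hd : 4 ≤ d)
    (β : ℝ) (hβ : β = (d : ℝ) / 2 - 2) :
    Filter.Tendsto
      (fun n : ℕ =>
        ⨆ z : ℝ,
          |(betaPi β n {ω |
              (vertCount ω - meanF0 β n) / Real.sqrt (varF0 β n) ≤ z}).toReal -
            ((ProbabilityTheory.gaussianReal 0 1) (Set.Iic z)).toReal|)
      Filter.atTop (nhds 0) := by
  have hd4 : (4:ℝ) ≤ d := by exact_mod_cast hd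
  have hβ0 : 0 ≤ β := by rw [hβ]; linarith
  have hq : 2 * β + 3 = ((d - 1 : ℕ) : ℝ) := by
    rw [Nat.cast_sub (by omega), hβ]; push_cast; ring
  obtain ⟨G, hG, hmain⟩ := asym β (d - 1) hq hβ0
  set q := d - 1 with hqd
  have hprob := beta_prob β hβ0
  have hP : ∀ n, IsProbabilityMeasure (betaPi β n) := fun n => by unfold betaPi; infer_instance
  set EV : ℕ → ℝ := fun n => ∫ ω, Vc ω ∂betaPi β n with hEV
  set v : ℕ → ℝ := fun n => ∫ ω, (Vc ω - ∫ ω, Vc ω ∂betaPi β n) ^ 2 ∂betaPi β n with hv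
  have hmean : ∀ n, meanF0 β n = EV n := fun n => integral_congr_ae (vertCount_ae β hβ0 n)
  have hVb : ∀ n (ω : Fin n → E2), |Vc ω| ≤ n := fun n ω => by
    rw [abs_of_nonneg (Vc_nonneg ω)]; exact Vc_le ω
  have hVi : ∀ n, Integrable (fun ω : Fin n → E2 => Vc ω) (betaPi β n) := fun n =>
    integrable_bdd (C := n) (Vc_meas n).aestronglyMeasurable (hVb n)
  have hVi2 : ∀ n, Integrable (fun ω : Fin n → E2 => Vc ω ^ 2) (betaPi β n) := fun n =>
    integrable_bdd (C := (n:ℝ) ^ 2) ((Vc_meas n).pow_const 2).aestronglyMeasurable fun ω => by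
      rw [Real.norm_eq_abs, abs_pow]; exact pow_le_pow_left₀ (abs_nonneg _) (hVb n ω) 2
  have hvar : ∀ n, varF0 β n = v n := by
    intro n
    have h1 : ∫ ω, vertCount ω ^ 2 ∂betaPi β n = ∫ ω, Vc ω ^ 2 ∂betaPi β n := by
      refine integral_congr_ae ?_
      filter_upwards [vertCount_ae β hβ0 n] with ω h
      rw [h]
    have h2 : v n = ∫ ω, (Vc ω ^ 2 - 2 * EV n * Vc ω + EV n ^ 2) ∂betaPi β n := by
      refine integral_congr_ae (Filter.Eventually.of_forall fun ω => ?_)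
      simp only [hEV]; ring
    have i3 : Integrable (fun ω : Fin n → E2 => 2 * EV n * Vc ω) (betaPi β n) := (hVi n).const_mul _
    have i4 : Integrable (fun ω : Fin n → E2 => Vc ω ^ 2 - 2 * EV n * Vc ω) (betaPi β n) := (hVi2 n).sub i3
    rw [h2, integral_add i4 (integrable_const _), integral_sub (hVi2 n) i3, integral_const_mul, varF0, hmean, h1]
    simp only [integral_const, probReal_univ, one_smul]
    change _ - _ = _ - 2 * EV n * EV n + _
    ring
  set Z : (n : ℕ) → (Fin n → E2) → ℝ := fun n ω => (Vc ω - EV n) / Real.sqrt (v n) with hZ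
  have hZm : ∀ n, Measurable (Z n) := fun n => ((Vc_meas n).sub_const _).div_const _
  set ν : ℕ → Measure ℝ := fun n => (betaPi β n).map (Z n) with hν
  have hνp : ∀ n, IsProbabilityMeasure (ν n) := fun n => Measure.isProbabilityMeasure_map (hZm n).aemeasurable
  have hk := kolm ν ?_
  · refine hk.congr fun n => ?_
    congr 1
    ext z
    rw [hν]
    simp only
    rw [Measure.map_apply (hZm n) measurableSet_Iic]
    have he : betaPi β n (Z n ⁻¹' Set.Iic z) = betaPi β n {ω | (vertCount ω - meanF0 β n) / Real.sqrt (varF0 β n) ≤ z} := by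
      refine measure_congr ?_
      filter_upwards [vertCount_ae β hβ0 n] with ω h
      refine propext ?_
      change Z n ω ≤ z ↔ (vertCount ω - meanF0 β n) / Real.sqrt (varF0 β n) ≤ z
      rw [hmean, hvar, h]
    rw [he]
  · intro t
    set m := 10 * q ^ 2 with hm
    have hm0 : m ≠ 0 := by
      have : q ≠ 0 := by omega
      positivity
    have hmr : (0:ℝ) < m := by exact_mod_cast Nat.pos_of_ne_zero hm0
    set s : ℕ → ℕ := fun n => ⌊(n:ℝ) ^ ((1:ℝ) / m)⌋₊ with hs
    have hst : Filter.Tendsto s Filter.atTop Filter.atTop :=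
      tendsto_nat_floor_atTop.comp ((tendsto_rpow_atTop (by positivity)).comp tendsto_natCast_atTop_atTop)
    have hxt : Filter.Tendsto (fun n => ((s n : ℕ) : ℝ) ^ q) Filter.atTop Filter.atTop :=
      (Filter.tendsto_pow_atTop (by omega)).comp (tendsto_natCast_atTop_atTop.comp hst)
    have hlim := (hG t).comp hxt
    rw [tendsto_iff_norm_sub_tendsto_zero]
    refine squeeze_zero' (Filter.Eventually.of_forall fun n => norm_nonneg _) ?_ hlim
    filter_upwards [hst.eventually_ge_atTop 10000] with n hn
    have hroot : ((n:ℝ) ^ ((1:ℝ) / m)) ^ m = n := by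
      rw [one_div, Real.rpow_inv_natCast_pow (Nat.cast_nonneg n) hm0]
    have hr0 : 0 ≤ (n:ℝ) ^ ((1:ℝ) / m) := by positivity
    have hn1 : ((s n : ℕ) : ℝ) ^ m ≤ n := by
      rw [← hroot]; exact pow_le_pow_left₀ (by positivity) (Nat.floor_le hr0) m
    have hn2 : (n:ℝ) ≤ 2 ^ m * ((s n : ℕ) : ℝ) ^ m := by
      rw [← hroot, ← mul_pow]
      refine pow_le_pow_left₀ hr0 ?_ m
      have h1 := (Nat.lt_floor_add_one ((n:ℝ) ^ ((1:ℝ) / m))).le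
      have h2 : (10000:ℝ) ≤ (s n : ℕ) := by exact_mod_cast hn
      refine h1.trans ?_
      change ((s n : ℕ) : ℝ) + 1 ≤ _
      linarith
    have hfin := (hmain n (s n) hn hn1 hn2).2 t
    refine le_trans (le_of_eq ?_) hfin
    congr 2
    · rw [charFun_apply_real, hν]
      simp only
      rw [integral_map (hZm n).aemeasurable (by fun_prop)]
      refine integral_congr_ae (Filter.Eventually.of_forall fun ω => ?_)
      simp only [hZ, hEV, hv]
      congr 1
      push_cast
      ring
    · rw [ProbabilityTheory.charFun_gaussianReal]
      congr 1
      push_cast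
      ring
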